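/- Trace solution as quantum R matrix (type A): let (ε₁,…,ε_n) = (1^κ,0^{n−κ}) with 0 ≤ κ ≤ n, n ≥ 2, and let l, m satisfy 0 ≤ l,m ≤ n if κ = n and l,m ∈ ℕ otherwise. Let v_ref⊗w_ref = |0^{n−l},1^l⟩⊗|0^{n−m},1^m⟩ if κ = n and v_ref⊗w_ref = |l·e_n⟩⊗|m·e_n⟩ if κ < n, and let φ(z) be the diagonal matrix element of S₀(z) at v_ref⊗w_ref (a power series in z with nonzero constant term). If T is an endomorphism of 𝒲_l⊗𝒲_m over the field of formal Laurent series in z over ℂ(q) satisfying Δ'(g) ∘ T = T ∘ Δ(g) for every g ∈ {e_i, f_i, k_i^{±1} : i ∈ ℤ/nℤ} (type-A actions at x = z, y = 1) and T(v_ref⊗w_ref) = v_ref⊗w_ref, then φ(z)·T equals the restriction of S₀(z) to 𝒲_l⊗𝒲_m. In particular such T exists and is unique. -/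

import Mathlib

/-!
The proof has two halves: the trace operator `S0tr` is itself an intertwiner, and an intertwiner is
determined by its value on the reference vector.

**Intertwining.** The entries of the three-dimensional `R` and `L` are extended by zero to integer
labels (`SZ`). The alternating sum defining `R` obeys a Pascal-type recursion in `i` (`RV_succ`)
and a closed form at `i = 0` (`RV_zero`); induction on `i` then yields the commutation relations of
`R` with the creation and annihilation operators (`RI_P1`, ..., `RI_Q4`). For `L` they are a finite
check, and both cases are packaged in `SZ_P1`, ..., `SZ_Q4`, which only see the type of a position
through the scalar `qs`. A trace coefficient is a sum over closed paths of products of local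
entries, and the generators `e_r`, `f_r` change only the two factors at the positions `r - 1`, `r`
adjacent to the node. The local relations combine to an identity for these two factors in which the
height between the positions is shifted by one (`PZ_e`, `PZ_f`). Summation over paths turns the
shift of heights into nothing for `r ≠ 0`, and into a factor `z` at the affine node, where the
shifted height is the one that carries the power of `z` (`TZ_lin`, `TK_lin`). This gives
`S0_e`, `S0_f`, `S0_k`. By the ice rule (`TZ_weight`) and `ref_unique`, the reference vector is an
eigenvector with eigenvalue `φ`, and the constant term of `φ` is a product of nonzero diagonal
entries (`TK_diag`). Hence `φ⁻¹ S0tr` has the required properties.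

**Uniqueness.** Let `D = φ T - S0tr`; it intertwines and kills the reference vector `u ⊗ w`. On a
basis with finitely many elements `D` has matrix elements in `z ^ k ℂ[[z]]` for some `k`. It is shown
in `gain` that `k` may then be replaced by `k + 1`, so that `D = 0`. For this, all cyclic moves of
one particle connect the configurations of a given weight (`reach`). Applying
`Δ(e_r) = 1 ⊗ e_r + e_r ⊗ k_r` to `u ⊗ j`, the second summand vanishes for `r ≠ 0` since `u` is a
highest weight vector (`ref_kill`), while for `r = 0` it carries a factor `z`. So the
order of `D` on `u ⊗ j` propagates from `j = w` to every `j` along moves. Next,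
`z Δ(f_0) = z f_0 ⊗ 1 + z k_0⁻¹ ⊗ f_0` (and `Δ(f_r)` for `r ≠ 0`) moves the first factor backwards,
and its second summand does not change the first factor, so it is already under control. This
propagates the order from `u ⊗ j` for all `j` to `i ⊗ j` for all `i` and `j`.
-/

open scoped BigOperators

set_option synthInstance.maxHeartbeats 1000000
set_option maxHeartbeats 1000000

noncomputable section

namespace TetraGQ

/-! ## Scalar ingredients -/

/-- `(a;qb)_m = ∏_{k=0}^{m-1} (1 - a qb^k)`. -/
def poch (qb a : ℂ) (m : ℕ) : ℂ := ∏ k ∈ Finset.range m, (1 - a * qb ^ k)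

/-- The `q`-binomial `binom(m,k)_qb`, zero unless `k ≤ m`. -/
def qbinom (qb : ℂ) (m k : ℕ) : ℂ :=
  if k ≤ m then poch qb qb m / (poch qb qb k * poch qb qb (m - k)) else 0

/-- `[m] = (q^m - q^{-m})/(q - q^{-1})`. -/
def qnum (q : ℂ) (m : ℕ) : ℂ := (q ^ m - q⁻¹ ^ m) / (q - q⁻¹)

/-- `[m]! = ∏_{k=1}^m [k]`. -/
def qfac (q : ℂ) (m : ℕ) : ℂ := ∏ k ∈ Finset.range m, qnum q (k + 1)

/-- The symmetric `q`-binomial `[m choose k]`, zero unless `k ≤ m`. -/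
def qbin (q : ℂ) (m k : ℕ) : ℂ :=
  if k ≤ m then qfac q m / (qfac q k * qfac q (m - k)) else 0

/-- The 3D `R` matrix entry `R^{a,b,c}_{i,j,k}`. -/
def R3 (q : ℂ) (a b c i j k : ℕ) : ℂ :=
  (if a + b = i + j ∧ b + c = j + k then (1 : ℂ) else 0) *
    ∑ lam ∈ Finset.range (b + 1),
      (-1 : ℂ) ^ lam *
        q ^ ((i : ℤ) * ((c : ℤ) - (j : ℤ)) + ((k : ℤ) + 1) * (lam : ℤ) +
            ((b : ℤ) - (lam : ℤ)) * ((b : ℤ) - (lam : ℤ) - (k : ℤ))) *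
        (poch (q ^ 2) (q ^ 2) (c + (b - lam)) / poch (q ^ 2) (q ^ 2) c) *
        qbinom (q ^ 2) i (b - lam) * qbinom (q ^ 2) j lam

/-- The 3D `L` matrix entry `L^{a,b,c}_{i,j,k}`. -/
def L3 (q : ℂ) (a b c i j k : ℕ) : ℂ :=
  if a = 0 ∧ b = 0 ∧ i = 0 ∧ j = 0 ∧ c = k then 1
  else if a = 1 ∧ b = 1 ∧ i = 1 ∧ j = 1 ∧ c = k then 1
  else if a = 0 ∧ b = 1 ∧ i = 0 ∧ j = 1 ∧ c = k then -q ^ (k + 1)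
  else if a = 1 ∧ b = 0 ∧ i = 1 ∧ j = 0 ∧ c = k then q ^ k
  else if a = 0 ∧ b = 1 ∧ i = 1 ∧ j = 0 ∧ c + 1 = k then 1 - q ^ (2 * k)
  else if a = 1 ∧ b = 0 ∧ i = 0 ∧ j = 1 ∧ c = k + 1 then 1
  else 0

/-- `S^(0) = R`, `S^(1) = L`. -/
def Sg (q : ℂ) (e : Bool) (a b c i j k : ℕ) : ℂ :=
  if e then L3 q a b c i j k else R3 q a b c i j k

/-- Coefficient of `z^{c0}` in the trace solution matrix element
`S₀(z)^{a,b}_{i,j}`. -/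
def trCoef (q : ℂ) {n : ℕ} [NeZero n] (ε : Fin n → Bool) (a b i j : Fin n → ℕ)
    (c0 : ℕ) : ℂ :=
  ∑ᶠ c : Fin n → ℕ,
    if c 0 = c0 then
      ∏ t : Fin n, Sg q (ε t) (a t) (b t) (c t) (i t) (j t) (c (t + 1))
    else 0

/-- Coefficient of `z^{c0}` in the boundary solution matrix element
`S₀^{1,1}(z)^{a,b}_{i,j}`. -/
def bdCoef (q : ℂ) {n : ℕ} (ε : Fin n → Bool) (a b i j : Fin n → ℕ) (c0 : ℕ) : ℂ :=
  ∑ᶠ c : Fin (n + 1) → ℕ,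
    if c 0 = c0 then
      poch (q ^ 2) (q ^ 2) c0 / (poch q q c0 * poch q q (c (Fin.last n))) *
        ∏ t : Fin n, Sg q (ε t) (a t) (b t) (c t.castSucc) (i t) (j t) (c t.succ)
    else 0

/-- Coefficient of `z^{c0}` in the boundary solution matrix element
`S₀^{s,t}(z)^{a,b}_{i,j}`. -/
def bdCoefST (q : ℂ) (s t : ℕ) {n : ℕ} (ε : Fin n → Bool) (a b i j : Fin n → ℕ)
    (c0 : ℕ) : ℂ :=
  ∑ᶠ c : Fin (n + 1) → ℕ,
    if c 0 = c0 then
      poch (q ^ 2) (q ^ 2) (s * c0) /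
          (poch (q ^ s ^ 2) (q ^ s ^ 2) c0 * poch (q ^ t ^ 2) (q ^ t ^ 2) (c (Fin.last n))) *
        ∏ u : Fin n,
          Sg q (ε u) (a u) (b u)
            (if u.castSucc = 0 then s * c0 else c u.castSucc) (i u) (j u)
            (if u.succ = Fin.last n then t * c (Fin.last n) else c u.succ)
    else 0

/-! ## The spaces `𝒲` and `𝒲⊗𝒲` -/

/-- `m` is an admissible occupation vector: at positions with `ε = 1` the entry is `≤ 1`. -/
def Ok {n : ℕ} (ε : Fin n → Bool) (m : Fin n → ℕ) : Prop := ∀ t, ε t = true → m t ≤ 1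

instance {n : ℕ} (ε : Fin n → Bool) : DecidablePred (Ok ε) := fun m =>
  decidable_of_iff (∀ t, ε t = true → m t ≤ 1) Iff.rfl

/-- Basis labels of `𝒲`. -/
def Idx {n : ℕ} (ε : Fin n → Bool) : Type := {m : Fin n → ℕ // Ok ε m}

/-- The space `𝒲` with basis `|m⟩`, over the field `L`. -/
abbrev W (L : Type) [Field L] {n : ℕ} (ε : Fin n → Bool) : Type := Idx ε →₀ L

/-- The space `𝒲 ⊗ 𝒲` with basis `|a⟩⊗|b⟩`, over the field `L`. -/
abbrev WW (L : Type) [Field L] {n : ℕ} (ε : Fin n → Bool) : Type := (Idx ε × Idx ε) →₀ L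

/-- The ket `|m⟩ ∈ 𝒲`; it is `0` if any coordinate is out of range. -/
def ket (L : Type) [Field L] {n : ℕ} (ε : Fin n → Bool) (m : Fin n → ℤ) : W L ε :=
  if h : (∀ t, 0 ≤ m t) ∧ Ok ε (fun t => (m t).toNat) then
    Finsupp.single ⟨fun t => (m t).toNat, h.2⟩ 1
  else 0

/-- The ket `|a⟩⊗|b⟩ ∈ 𝒲⊗𝒲`; it is `0` if any coordinate is out of range. -/
def kk (L : Type) [Field L] {n : ℕ} (ε : Fin n → Bool) (a b : Fin n → ℤ) : WW L ε :=
  if h : ((∀ t, 0 ≤ a t) ∧ Ok ε (fun t => (a t).toNat)) ∧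
      ((∀ t, 0 ≤ b t) ∧ Ok ε (fun t => (b t).toNat)) then
    Finsupp.single (⟨fun t => (a t).toNat, h.1.2⟩, ⟨fun t => (b t).toNat, h.2.2⟩) 1
  else 0

/-- The linear endomorphism of a free module determined by images of basis vectors. -/
def mkEnd (L : Type) [Field L] {α : Type} (v : α → (α →₀ L)) :
    (α →₀ L) →ₗ[L] (α →₀ L) :=
  Finsupp.lsum L fun m => LinearMap.toSpanSingleton L (α →₀ L) (v m)

/-- Product of vectors of `𝒲`, landing in `𝒲⊗𝒲`. -/
def tens (L : Type) [Field L] {n : ℕ} {ε : Fin n → Bool} (u v : W L ε) : WW L ε :=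
  u.sum fun a ca => v.sum fun b cb => Finsupp.single (a, b) (ca * cb)

/-- The operator `A ⊗ B` on `𝒲⊗𝒲`. -/
def opT (L : Type) [Field L] {n : ℕ} {ε : Fin n → Bool}
    (A B : W L ε →ₗ[L] W L ε) : WW L ε →ₗ[L] WW L ε :=
  mkEnd L fun mm => tens L (A (Finsupp.single mm.1 1)) (B (Finsupp.single mm.2 1))

/-- The subspace `𝒲_l ⊗ 𝒲_m` of `𝒲⊗𝒲`. -/
def WWlm (L : Type) [Field L] {n : ℕ} (ε : Fin n → Bool) (l m : ℕ) :
    Submodule L (WW L ε) :=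
  Submodule.span L {v | ∃ p : Idx ε × Idx ε,
    (∑ t, p.1.1 t) = l ∧ (∑ t, p.2.1 t) = m ∧ v = Finsupp.single p 1}

/-- The subspace `𝒲_l` of `𝒲`. -/
def Wl (L : Type) [Field L] {n : ℕ} (ε : Fin n → Bool) (l : ℕ) : Submodule L (W L ε) :=
  Submodule.span L {v | ∃ p : Idx ε, (∑ t, p.1 t) = l ∧ v = Finsupp.single p 1}

/-! ## The scalar field of formal Laurent series in `z` over `ℂ` -/

abbrev K : Type := LaurentSeries ℂ

/-- The power series `Σ_{c≥0} f(c) z^c` as an element of `K`. -/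
def mkS (f : ℕ → ℂ) : K := HahnSeries.ofPowerSeries ℤ ℂ (PowerSeries.mk f)

/-- Constants `ℂ → K`. -/
def cK : ℂ →+* K := HahnSeries.C

/-- The variable `z ∈ K`. -/
def zK : K := mkS fun c => if c = 1 then 1 else 0

/-! ## The solutions of the Yang-Baxter equation -/

/-- The unnormalized trace solution `S₀(z)` acting on `𝒲⊗𝒲`. -/
def S0tr (q : ℂ) {n : ℕ} [NeZero n] (ε : Fin n → Bool) : WW K ε →ₗ[K] WW K ε :=
  mkEnd K fun ij =>
    ∑ a ∈ Fintype.piFinset (fun t => Finset.range (ij.1.1 t + ij.2.1 t + 1)),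
      mkS (trCoef q ε a (fun t => ij.1.1 t + ij.2.1 t - a t) ij.1.1 ij.2.1) •
        kk K ε (fun t => (a t : ℤ)) (fun t => (ij.1.1 t : ℤ) + (ij.2.1 t : ℤ) - (a t : ℤ))

/-- The unnormalized boundary solution `S₀^{1,1}(z)` acting on `𝒲⊗𝒲`. -/
def S0bd (q : ℂ) {n : ℕ} (ε : Fin n → Bool) : WW K ε →ₗ[K] WW K ε :=
  mkEnd K fun ij =>
    ∑ a ∈ Fintype.piFinset (fun t => Finset.range (ij.1.1 t + ij.2.1 t + 1)),
      mkS (bdCoef q ε a (fun t => ij.1.1 t + ij.2.1 t - a t) ij.1.1 ij.2.1) •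
        kk K ε (fun t => (a t : ℤ)) (fun t => (ij.1.1 t : ℤ) + (ij.2.1 t : ℤ) - (a t : ℤ))

/-- The unnormalized boundary solution `S₀^{s,t}(z)` acting on `𝒲⊗𝒲`. -/
def S0bdST (q : ℂ) (s t : ℕ) {n : ℕ} (ε : Fin n → Bool) : WW K ε →ₗ[K] WW K ε :=
  mkEnd K fun ij =>
    ∑ a ∈ Fintype.piFinset (fun u => Finset.range (ij.1.1 u + ij.2.1 u + 1)),
      mkS (bdCoefST q s t ε a (fun u => ij.1.1 u + ij.2.1 u - a u) ij.1.1 ij.2.1) •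
        kk K ε (fun u => (a u : ℤ)) (fun u => (ij.1.1 u : ℤ) + (ij.2.1 u : ℤ) - (a u : ℤ))

/-- The diagonal gauge operator; `Kdiag pc ε s |m⟩ = pc^{s·(m₁+⋯+m_n)} |m⟩`
(`s = -1` gives `K`, `s = 1` gives `K⁻¹`). -/
def Kdiag (pc : ℂ) {n : ℕ} (ε : Fin n → Bool) (s : ℤ) : W K ε →ₗ[K] W K ε :=
  mkEnd K fun m => cK (pc ^ (s * ∑ t, (m.1 t : ℤ))) • Finsupp.single m 1

/-- The gauge transformed boundary solution `S̃₀^{1,1}(z) = (K⊗1) S₀^{1,1}(z) (1⊗K⁻¹)`. -/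
def S0bdT (q pc : ℂ) {n : ℕ} (ε : Fin n → Bool) : WW K ε →ₗ[K] WW K ε :=
  opT K (Kdiag pc ε (-1)) LinearMap.id ∘ₗ S0bd q ε ∘ₗ opT K LinearMap.id (Kdiag pc ε 1)

/-! ## The generalized quantum group actions -/

/-- Value of an occupation vector at a natural-number position. -/
def av {n : ℕ} (m : Fin n → ℕ) (p : ℕ) : ℕ := if h : p < n then m ⟨p, h⟩ else 0

/-- Unit coordinate vector at a natural-number position. -/
def dlt {n : ℕ} (p : ℕ) : Fin n → ℤ := fun t => if (t : ℕ) = p then 1 else 0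

/-- `q_i = q` if `ε_i = 0` and `-q⁻¹` if `ε_i = 1` (0-based positions). -/
def qc (q : ℂ) {n : ℕ} (ε : Fin n → Bool) (p : ℕ) : ℂ :=
  if h : p < n then (if ε ⟨p, h⟩ then -q⁻¹ else q) else q

/-- Type A generator `e_r` of the action `π_x`. -/
def eA (q : ℂ) {L : Type} [Field L] (ι : ℂ →+* L) {n : ℕ} (ε : Fin n → Bool) (x : L)
    (r : Fin n) : W L ε →ₗ[L] W L ε :=
  mkEnd L fun m =>
    (x ^ (if (r : ℕ) = 0 then 1 else 0) * ι (qnum q (av m.1 (((r : ℕ) + n - 1) % n)))) •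
      ket L ε fun t => (m.1 t : ℤ) - dlt (((r : ℕ) + n - 1) % n) t + dlt (r : ℕ) t

/-- Type A generator `f_r` of the action `π_x`. -/
def fA (q : ℂ) {L : Type} [Field L] (ι : ℂ →+* L) {n : ℕ} (ε : Fin n → Bool) (x : L)
    (r : Fin n) : W L ε →ₗ[L] W L ε :=
  mkEnd L fun m =>
    (x ^ (if (r : ℕ) = 0 then (-1 : ℤ) else 0) * ι (qnum q (av m.1 (r : ℕ)))) •
      ket L ε fun t => (m.1 t : ℤ) + dlt (((r : ℕ) + n - 1) % n) t - dlt (r : ℕ) t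

/-- Type A generator `k_r^{s}` (`s = ±1`) of the action `π_x`. -/
def kA (q : ℂ) {L : Type} [Field L] (ι : ℂ →+* L) {n : ℕ} (ε : Fin n → Bool) (s : ℤ)
    (r : Fin n) : W L ε →ₗ[L] W L ε :=
  mkEnd L fun m =>
    ι ((qc q ε (((r : ℕ) + n - 1) % n) ^ (-(av m.1 (((r : ℕ) + n - 1) % n) : ℤ)) *
        qc q ε (r : ℕ) ^ (av m.1 (r : ℕ) : ℤ)) ^ s) • Finsupp.single m 1

/-- Type B generator `e_r` of the action `π_x`. -/
def eB (q : ℂ) {L : Type} [Field L] (ι : ℂ →+* L) {n : ℕ} (ε : Fin n → Bool) (x : L)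
    (r : Fin (n + 1)) : W L ε →ₗ[L] W L ε :=
  mkEnd L fun m =>
    if (r : ℕ) = 0 then x • ket L ε (fun t => (m.1 t : ℤ) + dlt 0 t)
    else if (r : ℕ) = n then
      ι (qnum q (av m.1 (n - 1))) • ket L ε (fun t => (m.1 t : ℤ) - dlt (n - 1) t)
    else
      ι (qnum q (av m.1 ((r : ℕ) - 1))) •
        ket L ε (fun t => (m.1 t : ℤ) - dlt ((r : ℕ) - 1) t + dlt (r : ℕ) t)

/-- Type B generator `f_r` of the action `π_x`. -/
def fB (q : ℂ) {L : Type} [Field L] (ι : ℂ →+* L) {n : ℕ} (ε : Fin n → Bool) (x : L)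
    (r : Fin (n + 1)) : W L ε →ₗ[L] W L ε :=
  mkEnd L fun m =>
    if (r : ℕ) = 0 then
      (x⁻¹ * ι (qnum q (av m.1 0))) • ket L ε (fun t => (m.1 t : ℤ) - dlt 0 t)
    else if (r : ℕ) = n then ket L ε (fun t => (m.1 t : ℤ) + dlt (n - 1) t)
    else
      ι (qnum q (av m.1 (r : ℕ))) •
        ket L ε (fun t => (m.1 t : ℤ) + dlt ((r : ℕ) - 1) t - dlt (r : ℕ) t)

/-- Type B generator `k_r^{s}` (`s = ±1`) of the action `π_x`; `pc = i q^{-1/2}`. -/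
def kB (q pc : ℂ) {L : Type} [Field L] (ι : ℂ →+* L) {n : ℕ} (ε : Fin n → Bool) (s : ℤ)
    (r : Fin (n + 1)) : W L ε →ₗ[L] W L ε :=
  mkEnd L fun m =>
    ι ((if (r : ℕ) = 0 then pc⁻¹ * qc q ε 0 ^ (av m.1 0 : ℤ)
        else if (r : ℕ) = n then pc * qc q ε (n - 1) ^ (-(av m.1 (n - 1) : ℤ))
        else qc q ε ((r : ℕ) - 1) ^ (-(av m.1 ((r : ℕ) - 1) : ℤ)) *
          qc q ε (r : ℕ) ^ (av m.1 (r : ℕ) : ℤ)) ^ s) • Finsupp.single m 1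

/-! ## Coproduct actions on `𝒲⊗𝒲` (type A) -/

/-- `Δ(e_r) = 1⊗e_r + e_r⊗k_r`, with `π_x` on the first factor, `π_y` on the second. -/
def dE (q : ℂ) {L : Type} [Field L] (ι : ℂ →+* L) {n : ℕ} (ε : Fin n → Bool) (x y : L)
    (r : Fin n) : WW L ε →ₗ[L] WW L ε :=
  opT L LinearMap.id (eA q ι ε y r) + opT L (eA q ι ε x r) (kA q ι ε 1 r)

/-- `Δ'(e_r) = e_r⊗1 + k_r⊗e_r`. -/
def dE' (q : ℂ) {L : Type} [Field L] (ι : ℂ →+* L) {n : ℕ} (ε : Fin n → Bool) (x y : L)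
    (r : Fin n) : WW L ε →ₗ[L] WW L ε :=
  opT L (eA q ι ε x r) LinearMap.id + opT L (kA q ι ε 1 r) (eA q ι ε y r)

/-- `Δ(f_r) = f_r⊗1 + k_r⁻¹⊗f_r`. -/
def dF (q : ℂ) {L : Type} [Field L] (ι : ℂ →+* L) {n : ℕ} (ε : Fin n → Bool) (x y : L)
    (r : Fin n) : WW L ε →ₗ[L] WW L ε :=
  opT L (fA q ι ε x r) LinearMap.id + opT L (kA q ι ε (-1) r) (fA q ι ε y r)

/-- `Δ'(f_r) = 1⊗f_r + f_r⊗k_r⁻¹`. -/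
def dF' (q : ℂ) {L : Type} [Field L] (ι : ℂ →+* L) {n : ℕ} (ε : Fin n → Bool) (x y : L)
    (r : Fin n) : WW L ε →ₗ[L] WW L ε :=
  opT L LinearMap.id (fA q ι ε y r) + opT L (fA q ι ε x r) (kA q ι ε (-1) r)

/-- `Δ(k_r^s) = Δ'(k_r^s) = k_r^s ⊗ k_r^s`. -/
def dK (q : ℂ) {L : Type} [Field L] (ι : ℂ →+* L) {n : ℕ} (ε : Fin n → Bool) (s : ℤ)
    (r : Fin n) : WW L ε →ₗ[L] WW L ε :=
  opT L (kA q ι ε s r) (kA q ι ε s r)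

/-! ## Coproduct actions on `𝒲⊗𝒲` (type B) -/

def dEB (q pc : ℂ) {L : Type} [Field L] (ι : ℂ →+* L) {n : ℕ} (ε : Fin n → Bool) (x y : L)
    (r : Fin (n + 1)) : WW L ε →ₗ[L] WW L ε :=
  opT L LinearMap.id (eB q ι ε y r) + opT L (eB q ι ε x r) (kB q pc ι ε 1 r)

def dEB' (q pc : ℂ) {L : Type} [Field L] (ι : ℂ →+* L) {n : ℕ} (ε : Fin n → Bool) (x y : L)
    (r : Fin (n + 1)) : WW L ε →ₗ[L] WW L ε :=
  opT L (eB q ι ε x r) LinearMap.id + opT L (kB q pc ι ε 1 r) (eB q ι ε y r)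

def dFB (q pc : ℂ) {L : Type} [Field L] (ι : ℂ →+* L) {n : ℕ} (ε : Fin n → Bool) (x y : L)
    (r : Fin (n + 1)) : WW L ε →ₗ[L] WW L ε :=
  opT L (fB q ι ε x r) LinearMap.id + opT L (kB q pc ι ε (-1) r) (fB q ι ε y r)

def dFB' (q pc : ℂ) {L : Type} [Field L] (ι : ℂ →+* L) {n : ℕ} (ε : Fin n → Bool) (x y : L)
    (r : Fin (n + 1)) : WW L ε →ₗ[L] WW L ε :=
  opT L LinearMap.id (fB q ι ε y r) + opT L (fB q ι ε x r) (kB q pc ι ε (-1) r)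

def dKB (q pc : ℂ) {L : Type} [Field L] (ι : ℂ →+* L) {n : ℕ} (ε : Fin n → Bool) (s : ℤ)
    (r : Fin (n + 1)) : WW L ε →ₗ[L] WW L ε :=
  opT L (kB q pc ι ε s r) (kB q pc ι ε s r)

/-! ## Structure constants -/

/-- Type A structure constant `D_{i,j}` (as a product over 0-based positions). -/
def DA (q : ℂ) {n : ℕ} (ε : Fin n → Bool) (i j : Fin n) : ℂ :=
  ∏ p ∈ (({((i : ℕ) + n - 1) % n, (i : ℕ)} : Finset ℕ) ∩
      ({((j : ℕ) + n - 1) % n, (j : ℕ)} : Finset ℕ)),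
    qc q ε p ^ (if i = j then (1 : ℤ) else -1)

/-- The set `⟨i⟩ = {i, i+1} ∩ [1,n]` of type B, translated to 0-based positions. -/
def nodeB (n i : ℕ) : Finset ℕ :=
  if i = 0 then {0} else if i = n then {n - 1} else {i - 1, i}

/-- Type B structure constant `D_{i,j}`. -/
def DB (q : ℂ) {n : ℕ} (ε : Fin n → Bool) (i j : Fin (n + 1)) : ℂ :=
  ∏ p ∈ nodeB n (i : ℕ) ∩ nodeB n (j : ℕ), qc q ε p ^ (if i = j then (1 : ℤ) else -1)

/-! ## Distinguished vectors -/

/-- The vector `J_{n,j} = Σ_{i, Σi=j} q^{inv(i)} |i⟩⊗|1-i⟩`. -/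
def Jfull (q : ℂ) {L : Type} [Field L] (ι : ℂ →+* L) {n : ℕ} (ε : Fin n → Bool)
    (j : ℕ) : WW L ε :=
  ∑ i ∈ Fintype.piFinset (fun _ : Fin n => Finset.range 2),
    (if (∑ t, i t) = j then
        ι (q ^ (∑ s : Fin n, ∑ t : Fin n, if s < t then i s * (1 - i t) else 0))
      else 0) •
      kk L ε (fun t => (i t : ℤ)) (fun t => 1 - (i t : ℤ))

/-- Extension of a `Fin s`-tuple to `ℕ` by zero. -/
def ivf {s : ℕ} (i : Fin s → ℕ) : ℕ → ℕ := fun p => if h : p < s then i ⟨p, h⟩ else 0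

/-- `inv(i₁,…,i_s) = Σ_{p<r} i_p (1 - i_r)`. -/
def invv (s : ℕ) (iv : ℕ → ℕ) : ℕ :=
  ∑ p ∈ Finset.range s, ∑ r ∈ Finset.range s, if p < r then iv p * (1 - iv r) else 0

/-- Occupation vector `(0^{nn-s-t}, i₁,…,i_s, 1^t)`. -/
def winA (nn s t : ℕ) (iv : ℕ → ℕ) : Fin nn → ℤ := fun u =>
  if (u : ℕ) < nn - s - t then 0
  else if (u : ℕ) < nn - t then (iv ((u : ℕ) - (nn - s - t)) : ℤ)
  else 1

/-- The singular vector `ξ_t^{l,m}` for `κ = n`. -/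
def xiA (q : ℂ) {L : Type} [Field L] (ι : ℂ →+* L) {n : ℕ} (ε : Fin n → Bool)
    (l m t : ℕ) : WW L ε :=
  ∑ i ∈ Fintype.piFinset (fun _ : Fin (l + m - 2 * t) => Finset.range 2),
    (if (∑ u, i u) = l - t then ι (q ^ invv (l + m - 2 * t) (ivf i)) else 0) •
      kk L ε (winA n (l + m - 2 * t) t (ivf i))
        (winA n (l + m - 2 * t) t (fun p => 1 - ivf i p))

/-- Occupation vector `(0^{nn-s-1}, i₁,…,i_s, last)`. -/
def winA1 (nn s : ℕ) (iv : ℕ → ℕ) (last : ℤ) : Fin nn → ℤ := fun u =>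
  if (u : ℕ) < nn - s - 1 then 0
  else if (u : ℕ) < nn - 1 then (iv ((u : ℕ) - (nn - s - 1)) : ℤ)
  else last

/-- The singular vector `ξ_s^{l,m}` for `κ = n-1`. -/
def xiA1 (q : ℂ) {L : Type} [Field L] (ι : ℂ →+* L) {n : ℕ} (ε : Fin n → Bool)
    (l m s : ℕ) : WW L ε :=
  ∑ j ∈ Finset.range (s + 1),
    ∑ i ∈ Fintype.piFinset (fun _ : Fin s => Finset.range 2),
      (if (∑ u, i u) = s - j then
          ι ((-1 : ℂ) ^ j * q ^ (j * (m - s + 1)) * q ^ invv s (ivf i))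
        else 0) •
        kk L ε (winA1 n s (ivf i) ((l : ℤ) + (j : ℤ) - (s : ℤ)))
          (winA1 n s (fun p => 1 - ivf i p) ((m : ℤ) - (j : ℤ)))

/-- The singular vector `ξ_s^{l,m}` for `0 ≤ κ ≤ n-2`. -/
def xiA2 (q : ℂ) {L : Type} [Field L] (ι : ℂ →+* L) {n : ℕ} (ε : Fin n → Bool)
    (l m s : ℕ) : WW L ε :=
  ∑ j ∈ Finset.range (s + 1),
    ι ((-1 : ℂ) ^ j * q ^ ((j : ℤ) * (2 * (s : ℤ) - (m : ℤ) - (j : ℤ) - 1) + (m : ℤ) * (s : ℤ)) *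
        qbin q s j) •
      kk L ε
        (fun u => if (u : ℕ) < n - 2 then 0
          else if (u : ℕ) = n - 2 then (j : ℤ) else (l : ℤ) - (j : ℤ))
        (fun u => if (u : ℕ) < n - 2 then 0
          else if (u : ℕ) = n - 2 then (s : ℤ) - (j : ℤ) else (m : ℤ) - (s : ℤ) + (j : ℤ))

/-- The type B singular vector `ξ_l`. -/
def xiB (q pc : ℂ) {L : Type} [Field L] (ι : ℂ →+* L) {n : ℕ} (ε : Fin n → Bool)
    (l : ℕ) : WW L ε :=
  ∑ m ∈ Finset.range (l + 1),
    ι ((-pc) ^ (-(m : ℤ)) * q ^ ((m : ℤ) * (l : ℤ) - ((m * (m + 1) / 2 : ℕ) : ℤ)) *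
        qbin q l m) •
      kk L ε (fun u => if (u : ℕ) = n - 1 then (m : ℤ) else 0)
        (fun u => if (u : ℕ) = n - 1 then (l : ℤ) - (m : ℤ) else 0)

/-! ## Miscellany -/

/-- Apply a list of operators, the rightmost element of the list acting first. -/
def appList {L : Type} [Field L] {n : ℕ} {ε : Fin n → Bool}
    (ops : List (WW L ε →ₗ[L] WW L ε)) (v : WW L ε) : WW L ε :=
  ops.foldr (fun A w => A w) v

/-- A natural number as an element of `Fin n`. -/
def mfin {n : ℕ} [NeZero n] (p : ℕ) : Fin n :=
  ⟨p % n, Nat.mod_lt p (Nat.pos_of_ne_zero (NeZero.ne n))⟩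

/-- Reference weight-`l` occupation vector: `(0^{n-l},1^l)` if `κ = n`, `l·e_n` otherwise. -/
def refAN (n κ l : ℕ) : Fin n → ℕ := fun t =>
  if κ = n then (if n - l ≤ (t : ℕ) then 1 else 0) else (if (t : ℕ) = n - 1 then l else 0)

/-- The flip `P(u⊗v) = v⊗u` on `𝒲⊗𝒲`. -/
def Pop (L : Type) [Field L] {n : ℕ} (ε : Fin n → Bool) : WW L ε →ₗ[L] WW L ε :=
  mkEnd L fun p => Finsupp.single (p.2, p.1) 1

/-- The conditions on `T`: an endomorphism of `𝒲_l⊗𝒲_m` commuting with the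
type-A action (at `x = z`, `y = 1`) and fixing the reference vector. -/
def CondA (q : ℂ) {n : ℕ} [NeZero n] (ε : Fin n → Bool) (κ l m : ℕ)
    (T : WW K ε →ₗ[K] WW K ε) : Prop :=
  (∀ v ∈ WWlm K ε l m, T v ∈ WWlm K ε l m) ∧
  (∀ r : Fin n, ∀ v ∈ WWlm K ε l m,
    dE' q cK ε zK 1 r (T v) = T (dE q cK ε zK 1 r v) ∧
    dF' q cK ε zK 1 r (T v) = T (dF q cK ε zK 1 r v) ∧
    ∀ s : ℤ, s = 1 ∨ s = -1 → dK q cK ε s r (T v) = T (dK q cK ε s r v)) ∧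
  T (kk K ε (fun t => (refAN n κ l t : ℤ)) (fun t => (refAN n κ m t : ℤ)))
    = kk K ε (fun t => (refAN n κ l t : ℤ)) (fun t => (refAN n κ m t : ℤ))

/-! ### Gaussian binomials -/

/-- `q` is nonzero and not a root of unity. -/
def Gen (q : ℂ) : Prop := q ≠ 0 ∧ ∀ k : ℕ, k ≠ 0 → q ^ k ≠ 1

lemma Gen.sq_pow {q : ℂ} (h : Gen q) (k : ℕ) : 1 - (q ^ 2) ^ (k + 1) ≠ 0 := by
  rw [← pow_mul, sub_ne_zero]
  exact fun e => h.2 _ (by positivity) e.symm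

lemma Gen.sub_inv {q : ℂ} (h : Gen q) : q ^ 2 - 1 ≠ 0 := by
  rw [sub_ne_zero]
  exact h.2 2 (by norm_num)

lemma Gen.sub_inv' {q : ℂ} (h : Gen q) : q - q⁻¹ ≠ 0 := by
  have h1 := h.sub_inv
  have h0 := h.1
  intro e
  apply h1
  field_simp at e
  simpa using e

lemma poch_succ (Q : ℂ) (m : ℕ) : poch Q Q (m + 1) = poch Q Q m * (1 - Q ^ (m + 1)) := by
  simp [poch, Finset.prod_range_succ, pow_succ']

lemma poch_ne {q : ℂ} (h : Gen q) (m : ℕ) : poch (q ^ 2) (q ^ 2) m ≠ 0 := by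
  induction m with
  | zero => simp [poch]
  | succ m ih => rw [poch_succ]; exact mul_ne_zero ih (h.sq_pow m)

lemma qbinom_zero {q : ℂ} (h : Gen q) (m : ℕ) : qbinom (q ^ 2) m 0 = 1 := by
  have h1 : poch (q ^ 2) (q ^ 2) 0 = 1 := by simp [poch]
  rw [qbinom, if_pos (Nat.zero_le _), h1, one_mul, Nat.sub_zero, div_self (poch_ne h m)]

lemma qbinom_self {q : ℂ} (h : Gen q) (m : ℕ) : qbinom (q ^ 2) m m = 1 := by
  have h1 : poch (q ^ 2) (q ^ 2) 0 = 1 := by simp [poch]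
  rw [qbinom, if_pos le_rfl, Nat.sub_self, h1, mul_one, div_self (poch_ne h m)]

lemma qbinom_gt (Q : ℂ) {m k : ℕ} (hk : m < k) : qbinom Q m k = 0 := by
  simp [qbinom, Nat.not_le.mpr hk]

/-- `binom(k+d, k)`, without truncated subtraction. -/
lemma qbinom_add (Q : ℂ) (k d : ℕ) :
    qbinom Q (k + d) k = poch Q Q (k + d) / (poch Q Q k * poch Q Q d) := by
  simp [qbinom]

lemma qbinom_pascal {q : ℂ} (h : Gen q) (m k : ℕ) :
    qbinom (q ^ 2) (m + 1) (k + 1) =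
      qbinom (q ^ 2) m (k + 1) + q ^ (2 * ((m : ℤ) - k)) * qbinom (q ^ 2) m k := by
  rcases lt_trichotomy m k with hk | rfl | hk
  · rw [qbinom_gt _ (by omega), qbinom_gt _ (by omega), qbinom_gt _ hk]; simp
  · rw [qbinom_self h, qbinom_self h, qbinom_gt _ (by omega)]; simp
  · obtain ⟨d, rfl⟩ : ∃ d, m = k + 1 + d := ⟨m - k - 1, by omega⟩
    have e1 : k + 1 + d + 1 = k + 1 + (d + 1) := by omega
    have e2 : k + 1 + d = k + (d + 1) := by omega
    have e3 : (2 * (((k + 1 + d : ℕ) : ℤ) - k)) = ((2 * (d + 1) : ℕ) : ℤ) := by push_cast; ring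
    rw [e1, qbinom_add, qbinom_add, e3, zpow_natCast, e2, qbinom_add, ← add_assoc, ← e2,
      poch_succ _ (k + 1 + d), poch_succ _ d, poch_succ _ k]
    have h1 := poch_ne h k
    have h2 := poch_ne h d
    have h3 := h.sq_pow k
    have h4 := h.sq_pow d
    field_simp
    ring

/-- The Gaussian binomial at `q²` with an integer lower entry. -/
def gZ (q : ℂ) (m : ℕ) (b : ℤ) : ℂ := if 0 ≤ b then qbinom (q ^ 2) m b.toNat else 0

lemma gZ_neg (q : ℂ) (m : ℕ) {b : ℤ} (hb : b < 0) : gZ q m b = 0 := by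
  simp [gZ, Int.not_le.mpr hb]

lemma gZ_nat (q : ℂ) (m b : ℕ) : gZ q m b = qbinom (q ^ 2) m b := by simp [gZ]

lemma gZ_gt (q : ℂ) (m : ℕ) {b : ℤ} (hb : (m : ℤ) < b) : gZ q m b = 0 := by
  obtain ⟨b, rfl⟩ := Int.eq_ofNat_of_zero_le (by omega : 0 ≤ b)
  rw [gZ_nat, qbinom_gt _ (by exact_mod_cast hb)]

lemma gZ_pascal {q : ℂ} (h : Gen q) (m : ℕ) (b : ℤ) :
    gZ q (m + 1) b = gZ q m b + (q ^ (m + 1 - b)) ^ 2 * gZ q m (b - 1) := by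
  rcases lt_trichotomy b 0 with hb | rfl | hb
  · rw [gZ_neg _ _ hb, gZ_neg _ _ hb, gZ_neg _ _ (by omega)]; simp
  · rw [gZ_neg q m (show (0 : ℤ) - 1 < 0 by omega)]
    simp [gZ, qbinom_zero h]
  · obtain ⟨k, rfl⟩ : ∃ k : ℕ, b = ((k + 1 : ℕ) : ℤ) := ⟨(b - 1).toNat, by omega⟩
    have e : ((k + 1 : ℕ) : ℤ) - 1 = (k : ℕ) := by push_cast; ring
    have e2 : (q ^ ((m : ℤ) + 1 - (k + 1 : ℕ))) ^ 2 = q ^ (2 * ((m : ℤ) - k)) := by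
      rw [sq, ← zpow_add₀ h.1]
      congr 1
      push_cast; ring
    rw [e, gZ_nat, gZ_nat, gZ_nat, qbinom_pascal h, e2]

lemma gZ_absorb {q : ℂ} (h : Gen q) (m : ℕ) (b : ℤ) :
    (1 - (q ^ b) ^ 2) * gZ q (m + 1) b = (1 - (q ^ (m + 1)) ^ 2) * gZ q m (b - 1) := by
  rcases lt_trichotomy b 0 with hb | rfl | hb
  · rw [gZ_neg _ _ hb, gZ_neg _ _ (by omega)]; simp
  · rw [gZ_neg q m (show (0 : ℤ) - 1 < 0 by omega)]; simp
  · obtain ⟨k, rfl⟩ : ∃ k : ℕ, b = ((k + 1 : ℕ) : ℤ) := ⟨(b - 1).toNat, by omega⟩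
    have e : ((k + 1 : ℕ) : ℤ) - 1 = (k : ℕ) := by push_cast; ring
    rw [e, gZ_nat, gZ_nat, zpow_natCast]
    rcases lt_or_ge m k with hk | hk
    · rw [qbinom_gt _ (by omega), qbinom_gt _ hk]; simp
    · obtain ⟨d, rfl⟩ := Nat.exists_eq_add_of_le hk
      rw [show k + d + 1 = k + 1 + d by omega, qbinom_add, qbinom_add,
        show k + 1 + d = k + d + 1 by omega, poch_succ _ (k + d), poch_succ _ k]
      have h1 := poch_ne h k
      have h2 := poch_ne h d
      have h3 := h.sq_pow k
      field_simp
      ring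

lemma gZ_absorb' {q : ℂ} (h : Gen q) (m : ℕ) (b : ℤ) :
    (1 - (q ^ (m + 1 - b)) ^ 2) * gZ q (m + 1) b = (1 - (q ^ (m + 1)) ^ 2) * gZ q m b := by
  have h1 := gZ_absorb h m b
  have h2 := gZ_pascal h m b
  have h3 : q ^ ((m : ℤ) + 1 - b) * q ^ b = q ^ (m + 1) := by
    rw [← zpow_add₀ h.1, ← zpow_natCast]; congr 1; push_cast; ring
  rw [← h3] at h1 ⊢
  generalize q ^ ((m : ℤ) + 1 - b) = x at *
  generalize q ^ b = y at *
  linear_combination h2 - x ^ 2 * h1 - (x ^ 2 * y ^ 2) * h2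

/-! ### The three-dimensional `R` and `L` on integer labels -/

/-- The matrix entry of `S^(e)`, extended by zero to integer labels. -/
def SZ (q : ℂ) (e : Bool) (a b c i j k : ℤ) : ℂ :=
  if 0 ≤ a ∧ 0 ≤ b ∧ 0 ≤ c ∧ 0 ≤ i ∧ 0 ≤ j ∧ 0 ≤ k then
    Sg q e a.toNat b.toNat c.toNat i.toNat j.toNat k.toNat else 0

/-- `[m]` for an integer `m`. -/
def qz (q : ℂ) (m : ℤ) : ℂ := (q ^ m - q ^ (-m)) / (q - q⁻¹)

lemma qnum_eq (q : ℂ) (m : ℕ) : qnum q m = qz q m := by simp [qnum, qz]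

lemma SZ_nat (q : ℂ) (e : Bool) (a b c i j k : ℕ) : SZ q e a b c i j k = Sg q e a b c i j k := by
  simp [SZ]

lemma SZ_out (q : ℂ) (e : Bool) (a b c i j k : ℤ)
    (h : a < 0 ∨ b < 0 ∨ c < 0 ∨ i < 0 ∨ j < 0 ∨ k < 0) : SZ q e a b c i j k = 0 := by
  rw [SZ, if_neg (by omega)]

lemma Sg_weight {q : ℂ} {e : Bool} {a b c i j k : ℕ} (h : Sg q e a b c i j k ≠ 0) :
    a + b = i + j ∧ b + c = j + k := by
  by_contra hn
  apply h
  cases e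
  · simp [Sg, R3, if_neg hn]
  · simp only [Sg, L3, if_true]
    split_ifs <;> first | rfl | (exfalso; omega)

lemma SZ_nonneg {q : ℂ} {e : Bool} {a b c i j k : ℤ} (h : SZ q e a b c i j k ≠ 0) :
    0 ≤ a ∧ 0 ≤ b ∧ 0 ≤ c ∧ 0 ≤ i ∧ 0 ≤ j ∧ 0 ≤ k := by
  by_contra hn
  exact h (by rw [SZ, if_neg hn])

lemma SZ_weight {q : ℂ} {e : Bool} {a b c i j k : ℤ} (h : SZ q e a b c i j k ≠ 0) :
    a + b = i + j ∧ b + c = j + k := by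
  obtain ⟨h1, h2, h3, h4, h5, h6⟩ := SZ_nonneg h
  lift a to ℕ using h1
  lift b to ℕ using h2
  lift c to ℕ using h3
  lift i to ℕ using h4
  lift j to ℕ using h5
  lift k to ℕ using h6
  rw [SZ_nat] at h
  exact_mod_cast Sg_weight h

/-- The alternating sum in the definition of the three-dimensional `R`. -/
def rs (q : ℂ) (b c i j k : ℕ) : ℂ :=
  ∑ lam ∈ Finset.range (b + 1),
      (-1 : ℂ) ^ lam *
        q ^ ((i : ℤ) * ((c : ℤ) - (j : ℤ)) + ((k : ℤ) + 1) * (lam : ℤ) +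
            ((b : ℤ) - (lam : ℤ)) * ((b : ℤ) - (lam : ℤ) - (k : ℤ))) *
        (poch (q ^ 2) (q ^ 2) (c + (b - lam)) / poch (q ^ 2) (q ^ 2) c) *
        qbinom (q ^ 2) i (b - lam) * qbinom (q ^ 2) j lam

lemma SZ_R (q : ℂ) (a b c i j k : ℕ) (h1 : a + b = i + j) (h2 : b + c = j + k) :
    SZ q false a b c i j k = rs q b c i j k := by
  rw [SZ_nat]
  simp [Sg, R3, h1, h2, rs]

lemma rs_gt (q : ℂ) (b c i j k : ℕ) (h : i + j < b) : rs q b c i j k = 0 := by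
  refine Finset.sum_eq_zero fun lam _ => ?_
  rcases lt_or_ge j lam with hl | hl
  · rw [qbinom_gt _ hl]; simp
  · rw [qbinom_gt _ (show i < b - lam by omega)]; simp

lemma rs_zero_succ {q : ℂ} (h : Gen q) (c i j k : ℕ) :
    q ^ j * rs q 0 c (i + 1) j k = q ^ c * rs q 0 c i j k := by
  have h1 := poch_ne h c
  simp [rs, qbinom_zero h, h1]
  rw [← zpow_natCast, ← zpow_natCast, ← zpow_add₀ h.1, ← zpow_add₀ h.1]
  congr 1
  ring

/-- Pascal's rule for the factor `binom(i, μ)`, applied under the sum. -/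
lemma rs_succ_succ {q : ℂ} (h : Gen q) (b c i j k : ℕ) (hw : b + 1 + c = j + k) :
    q ^ j * rs q (b + 1) c (i + 1) j k = q ^ c * rs q (b + 1) c i j k +
      q ^ ((i : ℤ) + j - b) * (1 - (q ^ (c + 1)) ^ 2) * rs q b (c + 1) i j k := by
  have hk : (k : ℤ) = b + 1 + c - j := by omega
  unfold rs
  rw [Finset.sum_range_succ _ (b + 1), Finset.sum_range_succ _ (b + 1), mul_add, mul_add]
  refine Eq.trans ?_ (add_right_comm _ _ _)
  rw [Finset.mul_sum, Finset.mul_sum, Finset.mul_sum, ← Finset.sum_add_distrib]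
  congr 1
  · refine Finset.sum_congr rfl fun lam hl => ?_
    obtain ⟨d, rfl⟩ : ∃ d, b = lam + d := ⟨b - lam, by simp at hl; omega⟩
    rw [show lam + d + 1 - lam = d + 1 by omega, show lam + d - lam = d by omega,
      qbinom_pascal h, show c + 1 + d = c + (d + 1) by omega, poch_succ _ c]
    have hc := poch_ne h c
    have h3 := h.sq_pow c
    have e1 : q ^ j * q ^ (((i + 1 : ℕ) : ℤ) * ((c : ℤ) - j) + (k + 1) * lam +
        (((lam + d + 1 : ℕ) : ℤ) - lam) * (((lam + d + 1 : ℕ) : ℤ) - lam - k)) =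
        q ^ c * q ^ (((i : ℕ) : ℤ) * ((c : ℤ) - j) + (k + 1) * lam +
        (((lam + d + 1 : ℕ) : ℤ) - lam) * (((lam + d + 1 : ℕ) : ℤ) - lam - k)) := by
      rw [← zpow_natCast, ← zpow_natCast, ← zpow_add₀ h.1, ← zpow_add₀ h.1]
      congr 1
      push_cast; ring
    have e2 : q ^ c * q ^ (((i : ℕ) : ℤ) * ((c : ℤ) - j) + (k + 1) * lam +
        (((lam + d + 1 : ℕ) : ℤ) - lam) * (((lam + d + 1 : ℕ) : ℤ) - lam - k)) *
        q ^ (2 * ((i : ℤ) - d)) = q ^ ((i : ℤ) + j - ((lam + d : ℕ) : ℤ)) *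
        q ^ (((i : ℕ) : ℤ) * (((c + 1 : ℕ) : ℤ) - j) + (k + 1) * lam +
        (((lam + d : ℕ) : ℤ) - lam) * (((lam + d : ℕ) : ℤ) - lam - k)) := by
      rw [← zpow_natCast, ← zpow_add₀ h.1, ← zpow_add₀ h.1, ← zpow_add₀ h.1]
      congr 1
      push_cast
      rw [hk]
      push_cast; ring
    have h4 : (1 - (q ^ (c + 1)) ^ 2) * (poch (q ^ 2) (q ^ 2) (c + (d + 1)) /
        (poch (q ^ 2) (q ^ 2) c * (1 - (q ^ 2) ^ (c + 1)))) =
        poch (q ^ 2) (q ^ 2) (c + (d + 1)) / poch (q ^ 2) (q ^ 2) c := by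
      rw [← pow_mul, mul_comm (c + 1) 2, pow_mul]
      field_simp
    generalize poch (q ^ 2) (q ^ 2) (c + (d + 1)) /
        (poch (q ^ 2) (q ^ 2) c * (1 - (q ^ 2) ^ (c + 1))) = u at *
    generalize poch (q ^ 2) (q ^ 2) (c + (d + 1)) / poch (q ^ 2) (q ^ 2) c = u' at *
    rw [← h4]
    generalize qbinom (q ^ 2) i (d + 1) = g1
    generalize qbinom (q ^ 2) i d = g2
    generalize qbinom (q ^ 2) j lam = g3
    generalize q ^ (2 * ((i : ℤ) - d)) = x at *
    linear_combination ((-1) ^ lam * ((1 - (q ^ (c + 1)) ^ 2) * u) * g3 * (g1 + x * g2)) * e1 +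
      ((-1) ^ lam * ((1 - (q ^ (c + 1)) ^ 2) * u) * g3 * g2) * e2
  · simp only [Nat.sub_self, sub_self, zero_mul, qbinom_zero h]
    have e : q ^ j * q ^ (((i + 1 : ℕ) : ℤ) * ((c : ℤ) - j) + (k + 1) * ((b + 1 : ℕ) : ℤ) + 0) =
        q ^ c * q ^ ((i : ℤ) * ((c : ℤ) - j) + (k + 1) * ((b + 1 : ℕ) : ℤ) + 0) := by
      rw [← zpow_natCast, ← zpow_natCast, ← zpow_add₀ h.1, ← zpow_add₀ h.1]
      congr 1
      push_cast; ring
    linear_combination ((-1) ^ (b + 1) * (poch (q ^ 2) (q ^ 2) (c + 0) / poch (q ^ 2) (q ^ 2) c) *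
      qbinom (q ^ 2) j (b + 1)) * e

/-- Abbreviation for the matrix entries of the three-dimensional `R`, viewed as the vector
`R|i,j,k⟩` with coordinates `(a,b,c)`. -/
def RV (q : ℂ) (i j k : ℕ) (a b c : ℤ) : ℂ := SZ q false a b c i j k

lemma RV_out (q : ℂ) (i j k : ℕ) (a b c : ℤ) (h : a < 0 ∨ b < 0 ∨ c < 0) :
    RV q i j k a b c = 0 := SZ_out _ _ _ _ _ _ _ _ (by omega)

lemma RV_weight {q : ℂ} {i j k : ℕ} {a b c : ℤ} (h : ¬ (a + b = i + j ∧ b + c = j + k)) :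
    RV q i j k a b c = 0 := by
  by_contra hn
  exact h (SZ_weight hn)

/-- The relation `R k₂a₁⁺ = (k₃a₁⁺ + k₁a₂⁺a₃⁻) R`. -/
lemma RV_succ {q : ℂ} (h : Gen q) (i j k : ℕ) (a b c : ℤ) :
    q ^ j * RV q (i + 1) j k a b c = q ^ c * RV q i j k (a - 1) b c +
      q ^ a * (1 - (q ^ (c + 1)) ^ 2) * RV q i j k a (b - 1) (c + 1) := by
  by_cases hw : a + b = i + 1 + j ∧ b + c = j + k
  swap
  · rw [RV_weight (by push_cast; exact hw), RV_weight (by omega), RV_weight (by omega)]; simp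
  rcases lt_or_ge a 0 with ha | ha
  · rw [RV_out _ _ _ _ _ _ _ (by omega), RV_out _ _ _ _ _ _ _ (by omega),
      RV_out _ _ _ _ _ _ _ (by omega)]; simp
  rcases lt_or_ge b 0 with hb | hb
  · rw [RV_out _ _ _ _ _ _ _ (by omega), RV_out _ _ _ _ _ _ _ (by omega),
      RV_out _ _ _ _ _ _ _ (by omega)]; simp
  rcases lt_or_ge c 0 with hc | hc
  · rw [RV_out _ _ _ _ _ _ _ (by omega), RV_out _ _ _ _ _ _ _ (by omega)]
    rcases eq_or_ne c (-1) with rfl | hc'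
    · simp
    · rw [RV_out _ _ _ _ _ _ _ (by omega)]; simp
  lift a to ℕ using ha
  lift b to ℕ using hb
  lift c to ℕ using hc
  have t1 : RV q (i + 1) j k a b c = rs q b c (i + 1) j k := SZ_R _ _ _ _ _ _ _ (by omega) (by omega)
  have t2 : RV q i j k (a - 1) b c = rs q b c i j k := by
    rcases Nat.eq_zero_or_pos a with rfl | ha
    · rw [RV_out _ _ _ _ _ _ _ (by simp), rs_gt _ _ _ _ _ _ (by omega)]
    · obtain ⟨a, rfl⟩ : ∃ a', a = a' + 1 := ⟨a - 1, by omega⟩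
      have : (((a + 1 : ℕ) : ℤ) - 1) = (a : ℕ) := by push_cast; ring
      rw [this]
      exact SZ_R _ _ _ _ _ _ _ (by omega) (by omega)
  rw [t1, t2]
  rcases Nat.eq_zero_or_pos b with rfl | hb
  · rw [RV_out _ _ _ _ _ _ _ (by simp), zpow_natCast, rs_zero_succ h]; simp
  · obtain ⟨b, rfl⟩ : ∃ b', b = b' + 1 := ⟨b - 1, by omega⟩
    have e1 : (((b + 1 : ℕ) : ℤ) - 1) = (b : ℕ) := by push_cast; ring
    have t3 : RV q i j k a b ((c + 1 : ℕ) : ℤ) = rs q b (c + 1) i j k :=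
      SZ_R _ _ _ _ _ _ _ (by omega) (by omega)
    push_cast at t3
    rw [e1, t3, rs_succ_succ h _ _ _ _ _ (by omega), show (a : ℤ) = i + j - b by omega]
    norm_cast

/-- `R|0,j,k⟩ = (a₁⁺a₃⁺ - q k₁k₃a₂⁺)^j |0,0,k⟩`, expanded by the `q`-binomial theorem. -/
lemma RV_zero {q : ℂ} (h : Gen q) (j k : ℕ) (a b c : ℤ) :
    RV q 0 j k a b c = if a + b = j ∧ b + c = j + k then
      (-1) ^ b * q ^ ((k + 1) * b) * gZ q j b else 0 := by
  split_ifs with hw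
  swap
  · exact RV_weight (by simpa using hw)
  rcases lt_or_ge b 0 with hb | hb
  · rw [RV_out _ _ _ _ _ _ _ (by omega), gZ_neg _ _ hb]; simp
  rcases lt_or_ge a 0 with ha | ha
  · rw [RV_out _ _ _ _ _ _ _ (by omega), gZ_gt _ _ (by omega)]; simp
  have hc : 0 ≤ c := by omega
  lift a to ℕ using ha
  lift b to ℕ using hb
  lift c to ℕ using hc
  have t1 : RV q 0 j k a b c = rs q b c 0 j k := SZ_R _ _ _ _ _ _ _ (by omega) (by omega)
  have hc := poch_ne h c
  rw [t1, rs, Finset.sum_range_succ, Finset.sum_eq_zero, gZ_nat]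
  · simp [qbinom_zero h, hc]
  · intro lam hl
    rw [qbinom_gt (q ^ 2) (show 0 < b - lam by simp at hl; omega)]; simp

/-! ### Intertwining relations of the three-dimensional `R` -/

lemma gZ_ratio {q : ℂ} (h : Gen q) (m : ℕ) (b : ℤ) :
    (1 - (q ^ b) ^ 2) * gZ q m b = (1 - (q ^ (m + 1 - b)) ^ 2) * gZ q m (b - 1) := by
  have h1 := gZ_absorb h m b
  have h2 := gZ_pascal h m b
  have h3 : q ^ ((m : ℤ) + 1 - b) * q ^ b = q ^ (m + 1) := by
    rw [← zpow_add₀ h.1, ← zpow_natCast]; congr 1; push_cast; ring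
  rw [← h3] at h1
  linear_combination h1 - (1 - (q ^ b) ^ 2) * h2

lemma qz_zero (q : ℂ) : qz q 0 = 0 := by simp [qz]

lemma qz_mul {q : ℂ} (h : Gen q) (m : ℤ) : qz q m * (q - q⁻¹) = q ^ m - (q ^ m)⁻¹ := by
  rw [qz, div_mul_cancel₀ _ h.sub_inv', zpow_neg]

lemma qz_succ {q : ℂ} (h : Gen q) (m : ℤ) : qz q (m + 1) = q * qz q m + (q ^ m)⁻¹ := by
  apply mul_right_cancel₀ h.sub_inv'
  rw [add_mul, mul_assoc, qz_mul h, qz_mul h, zpow_add₀ h.1, zpow_one]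
  have := zpow_ne_zero m h.1
  have := h.1
  field_simp
  ring

lemma qz_succ' {q : ℂ} (h : Gen q) (m : ℤ) : qz q (m + 1) = q⁻¹ * qz q m + q ^ m := by
  rw [qz_succ h]
  linear_combination qz_mul h m

/-- The vector `R|i,j,k⟩` with coordinates `(a,b,c)`, all labels being integers. -/
def RI (q : ℂ) (i j k a b c : ℤ) : ℂ := SZ q false a b c i j k

lemma RI_out (q : ℂ) (i j k a b c : ℤ) (h : i < 0 ∨ j < 0 ∨ k < 0) : RI q i j k a b c = 0 :=
  SZ_out _ _ _ _ _ _ _ _ (by omega)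

lemma RI_succ {q : ℂ} (h : Gen q) (i : ℕ) (j k a b c : ℤ) :
    q ^ j * RI q (i + 1) j k a b c = q ^ c * RI q i j k (a - 1) b c +
      q ^ a * (1 - (q ^ (c + 1)) ^ 2) * RI q i j k a (b - 1) (c + 1) := by
  by_cases hj : j < 0 ∨ k < 0
  · rw [RI_out _ _ _ _ _ _ _ (by omega), RI_out _ _ _ _ _ _ _ (by omega),
      RI_out _ _ _ _ _ _ _ (by omega)]; simp
  lift j to ℕ using by omega
  lift k to ℕ using by omega
  rw [zpow_natCast]
  exact RV_succ h i j k a b c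

lemma RI_succ' {q : ℂ} (h : Gen q) (i : ℕ) (j k a b c : ℤ) :
    qz q i * (q ^ j * RI q i j k a b c) = qz q i * (q ^ c * RI q (i - 1) j k (a - 1) b c +
      q ^ a * (1 - (q ^ (c + 1)) ^ 2) * RI q (i - 1) j k a (b - 1) (c + 1)) := by
  rcases i with _ | i
  · simp [qz_zero]
  · have := RI_succ h i j k a b c
    push_cast
    rw [add_sub_cancel_right, this]

lemma RI_weight {q : ℂ} {i j k a b c : ℤ} (x y : ℂ)
    (h : a + b = i + j → b + c = j + k → x = y) :
    x * RI q i j k a b c = y * RI q i j k a b c := by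
  by_cases hz : RI q i j k a b c = 0
  · rw [hz]; simp
  · rw [h (SZ_weight hz).1 (SZ_weight hz).2]

lemma RI_zero {q : ℂ} (h : Gen q) (j k : ℕ) (a b c : ℤ) :
    RI q 0 j k a b c = if a + b = j ∧ b + c = j + k then
      (-1) ^ b * (q ^ (k * b) * q ^ b) * gZ q j b else 0 := by
  have := RV_zero h j k a b c
  rw [← zpow_add₀ h.1, ← add_one_mul, ← this]
  rfl

/-- The relation `R a₂⁺ = (a₁⁺a₃⁺ - q k₁k₃a₂⁺) R`. -/
lemma RI_P1 {q : ℂ} (h : Gen q) (i : ℕ) (j k a b c : ℤ) (hj : 0 ≤ j) :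
    RI q i (j + 1) k a b c = RI q i j k (a - 1) b (c - 1)
      - q ^ a * q ^ c * q * RI q i j k a (b - 1) c := by
  have hq := h.1
  induction i generalizing a b c with
  | zero =>
    rcases lt_or_ge k 0 with hk | hk
    · rw [RI_out _ _ _ _ _ _ _ (by omega), RI_out _ _ _ _ _ _ _ (by omega),
        RI_out _ _ _ _ _ _ _ (by omega)]; simp
    lift j to ℕ using hj
    lift k to ℕ using hk
    have e0 := RI_zero h (j + 1) k a b c
    have e1 := RI_zero h j k (a - 1) b (c - 1)
    have e2 := RI_zero h j k a (b - 1) c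
    push_cast at e0 ⊢
    rw [e0, e1, e2]
    by_cases hw : a + b = j + 1 ∧ b + c = j + 1 + k
    swap
    · rw [if_neg (by omega), if_neg (by omega), if_neg (by omega)]; simp
    rw [if_pos (by omega), if_pos (by omega), if_pos (by omega)]
    have hp := gZ_pascal h j b
    obtain rfl : a = j + 1 - b := by omega
    obtain rfl : c = (j + 1 - b) + k := by omega
    rw [hp, mul_sub, mul_one]
    generalize (j : ℤ) + 1 - b = x
    simp only [zpow_add₀ hq, zpow_sub₀ hq, zpow_sub₀ (show (-1 : ℂ) ≠ 0 by norm_num), zpow_one]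
    field_simp
    ring
  | succ i ih =>
    apply mul_left_cancel₀ (zpow_ne_zero (j + 1) hq)
    have s1 := RI_succ h i (j + 1) k a b c
    have s2 := RI_succ h i j k (a - 1) b (c - 1)
    have s3 := RI_succ h i j k a (b - 1) c
    have i1 := ih (a - 1) b c
    have i2 := ih a (b - 1) (c + 1)
    push_cast
    simp only [add_sub_cancel_right, sub_add_cancel] at *
    linear_combination (norm := skip) s1 - q * s2 + q ^ a * q ^ c * q * q * s3 + q ^ c * i1 +
      q ^ a * (1 - (q ^ (c + 1)) ^ 2) * i2
    simp only [zpow_add₀ hq, zpow_sub₀ hq, zpow_one]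
    field_simp
    ring

/-- The relation `a₁⁻ R = R (a₂⁻a₃⁺ + k₃a₁⁻k₂⁻¹)`, with annihilators normalised by `[m]`. -/
lemma RI_P3 {q : ℂ} (h : Gen q) (i : ℕ) (j k a b c : ℤ) (hk : 0 ≤ k) :
    qz q (a + 1) * RI q i j k (a + 1) b c = qz q j * RI q i (j - 1) (k + 1) a b c
      + q ^ (k - j) * qz q i * RI q (i - 1) j k a b c := by
  have hq := h.1
  induction i generalizing a b c with
  | zero =>
    rcases lt_or_ge j 0 with hj | hj
    · rw [RI_out _ _ _ _ _ _ _ (by omega), RI_out _ _ _ _ _ _ _ (by omega),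
        RI_out _ _ _ _ _ _ _ (by omega)]; simp
    lift j to ℕ using hj
    lift k to ℕ using hk
    simp only [Nat.cast_zero, qz_zero]
    have e0 := RI_zero h j k (a + 1) b c
    rw [e0]
    rcases j with _ | j
    · simp only [Nat.cast_zero, qz_zero]
      rcases eq_or_ne b 0 with rfl | hb
      · split_ifs with hw
        · rw [show a + 1 = 0 by omega, qz_zero]; simp
        · simp
      · have : gZ q 0 b = 0 := by
          rcases lt_or_gt_of_ne hb with hb | hb
          · exact gZ_neg _ _ hb
          · exact gZ_gt _ _ (by simpa using hb)
        rw [this]; simp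
    have e1 := RI_zero h j (k + 1) a b c
    push_cast at e1 ⊢
    rw [add_sub_cancel_right, e1]
    by_cases hw : a + b = j ∧ b + c = j + 1 + k
    swap
    · rw [if_neg (by omega), if_neg (by omega)]; simp
    rw [if_pos (by omega), if_pos (by omega)]
    have hp := gZ_absorb' h j b
    apply mul_right_cancel₀ h.sub_inv'
    have m1 := qz_mul h (a + 1)
    have m2 := qz_mul h (j + 1)
    have hx : q ^ (j + 1) = q ^ ((j : ℤ) + 1) := by norm_cast
    obtain rfl : a = (j + 1 - b) - 1 := by omega
    have hy : q ^ ((j : ℤ) + 1) = q ^ ((j : ℤ) + 1 - b) * q ^ b := by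
      rw [← zpow_add₀ hq]; congr 1; ring
    rw [hx] at hp
    rw [hy] at hp m2
    rw [sub_add_cancel] at m1 ⊢
    rw [add_one_mul (k : ℤ) b]
    generalize (j : ℤ) + 1 - b = x at *
    simp only [zpow_add₀ hq]
    generalize qz q x = X at *
    generalize qz q (j + 1) = J at *
    have hp' : ((q ^ x) - (q ^ x)⁻¹) * gZ q (j + 1) b =
        q ^ b * (q ^ x * q ^ b - (q ^ x * q ^ b)⁻¹) * gZ q j b := by
      field_simp
      linear_combination -hp
    linear_combination (-1) ^ b * (q ^ (k * b) * q ^ b) * (gZ q (j + 1) b * m1 + hp'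
      - q ^ b * gZ q j b * m2)
  | succ i ih =>
    apply mul_left_cancel₀ (zpow_ne_zero j hq)
    have s1 := RI_succ h i j k (a + 1) b c
    have s2 := RI_succ h i (j - 1) (k + 1) a b c
    have s3 := RI_succ' h i j k a b c
    have i1 := ih (a - 1) b c
    have i2 := ih a (b - 1) (c + 1)
    have w : (q ^ c * (q ^ a)⁻¹) * RI q i j k a b c = (q ^ k * (q ^ (i : ℤ))⁻¹) * RI q i j k a b c := by
      apply RI_weight
      intro h1 h2
      rw [← zpow_neg, ← zpow_neg, ← zpow_add₀ hq, ← zpow_add₀ hq]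
      congr 1
      omega
    push_cast
    simp only [add_sub_cancel_right, sub_add_cancel] at *
    rw [qz_succ h i]
    have ea := qz_succ h a
    linear_combination (norm := skip) qz q (a + 1) * s1 - q * qz q j * s2 - q * q ^ (k - j) * s3
      + q * q ^ c * i1 + q * q ^ a * (1 - (q ^ (c + 1)) ^ 2) * i2
      + q ^ c * RI q i j k a b c * ea + w
    simp only [zpow_add₀ hq, zpow_sub₀ hq, zpow_one]
    field_simp
    ring

/-- The relation `k₂a₃⁻ R = R (k₁a₃⁻ + k₃a₁⁺a₂⁻)`, where `a₃⁻` and `a₂⁻` carry the factor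
`1 - q^(2m)` and `a₁⁺` is a plain shift. -/
lemma RI_M {q : ℂ} (h : Gen q) (i : ℕ) (j K a b c : ℤ) :
    q ^ b * (1 - (q ^ (c + 1)) ^ 2) * RI q i j K a b (c + 1) =
      q ^ (i : ℤ) * (1 - (q ^ K) ^ 2) * RI q i j (K - 1) a b c
      + q ^ K * (1 - (q ^ j) ^ 2) * RI q (i + 1) (j - 1) K a b c := by
  have hq := h.1
  induction i generalizing a b c with
  | zero =>
    rcases lt_or_ge j 0 with hj | hj
    · rw [RI_out _ _ _ _ _ _ _ (by omega), RI_out _ _ _ _ _ _ _ (by omega),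
        RI_out _ _ _ _ _ _ _ (by omega)]; simp
    rcases lt_or_ge K 0 with hk | hk
    · rw [RI_out _ _ _ _ _ _ _ (by omega), RI_out _ _ _ _ _ _ _ (by omega),
        RI_out _ _ _ _ _ _ _ (by omega)]; simp
    lift j to ℕ using hj
    lift K to ℕ using hk
    have e0 := RI_zero h j K a b (c + 1)
    have e1 : (1 - (q ^ (K : ℤ)) ^ 2) * RI q 0 j (K - 1) a b c = (1 - (q ^ (K : ℤ)) ^ 2) *
        if a + b = j ∧ b + (c + 1) = j + K then
        (-1) ^ b * q ^ (K * b) * gZ q j b else 0 := by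
      rcases K with _ | K
      · simp
      · have := RI_zero h j K a b c
        push_cast
        rw [add_sub_cancel_right, this, add_one_mul (K : ℤ) b, zpow_add₀ hq (K * b)]
        congr 1
        exact if_congr (by omega) rfl rfl
    simp only [Nat.cast_zero, zpow_zero, one_mul]
    rw [e0, e1]
    rcases j with _ | j
    · rw [RI_out _ _ _ _ _ _ _ (show (0 : ℤ) + 1 < 0 ∨ ((0 : ℕ) : ℤ) - 1 < 0 ∨ _ by simp)]
      rcases eq_or_ne b 0 with rfl | hb
      · split_ifs with hw
        · rw [show c + 1 = K by simpa using hw.2]; simp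
        · simp
      · have : gZ q 0 b = 0 := by
          rcases lt_or_gt_of_ne hb with hb | hb
          · exact gZ_neg _ _ hb
          · exact gZ_gt _ _ (by simpa using hb)
        rw [this]; simp
    have s1 := RI_succ h 0 j K a b c
    have e2 := RI_zero h j K (a - 1) b c
    have e3 := RI_zero h j K a (b - 1) (c + 1)
    push_cast at s1 ⊢
    rw [e2, e3] at s1
    apply mul_left_cancel₀ (zpow_ne_zero j hq)
    rw [add_sub_cancel_right]
    by_cases hw : a + b = j + 1 ∧ b + c = j + K
    swap
    · rw [if_neg (by omega), if_neg (by omega)] at s1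
      rw [if_neg (by omega), if_neg (by omega)]
      linear_combination -(q ^ (K : ℤ) * (1 - (q ^ ((j : ℤ) + 1)) ^ 2)) * s1
    rw [if_pos (by omega), if_pos (by omega)] at s1
    rw [if_pos (by omega), if_pos (by omega)]
    have a1 := gZ_absorb h j b
    have a2 := gZ_absorb' h j b
    have hx : q ^ (j + 1) = q ^ ((j : ℤ) + 1) := by norm_cast
    rw [hx] at a1 a2
    have hj : (j : ℤ) = (j + 1 - b) + b - 1 := by ring
    obtain rfl : a = j + 1 - b := by omega
    obtain rfl : c = (j + 1 - b) + K - 1 := by omega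
    have hy : q ^ ((j : ℤ) + 1) = q ^ ((j : ℤ) + 1 - b) * q ^ b := by
      rw [← zpow_add₀ hq]; congr 1; ring
    have hy' : q ^ (j : ℤ) = q ^ ((j : ℤ) + 1 - b) * q ^ b * q⁻¹ := by
      rw [← zpow_add₀ hq, ← zpow_sub_one₀ hq]; congr 1
    rw [hy] at a1 a2
    rw [hy'] at s1
    rw [hy, hy']
    rw [mul_sub (K : ℤ) b 1, mul_one] at s1
    generalize (j : ℤ) + 1 - b = x at *
    generalize gZ q (j + 1) b = g1 at *
    generalize gZ q j b = g0 at *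
    generalize gZ q j (b - 1) = g2 at *
    generalize RI q (0 + 1) j K x b (x + K - 1) = v at *
    simp only [zpow_add₀ hq, zpow_sub₀ hq, zpow_sub₀ (show (-1 : ℂ) ≠ 0 by norm_num), zpow_one]
      at *
    linear_combination (norm := skip)
      -(q ^ (K : ℤ) * (1 - (q ^ x * q ^ b) ^ 2)) * s1
      + ((-1) ^ b * q ^ ((K : ℤ) * b)) * (q ^ x * q ^ b * q⁻¹) *
        ((1 - (q ^ (K : ℤ) * q ^ x) ^ 2) * a1 * (-1)
          + (q ^ (K : ℤ)) ^ 2 * a2)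
    field_simp
    ring
  | succ i ih =>
    apply mul_left_cancel₀ (zpow_ne_zero j hq)
    have s1 := RI_succ h i j K a b (c + 1)
    have s2 := RI_succ h i j (K - 1) a b c
    have s3 := RI_succ h (i + 1) (j - 1) K a b c
    have i1 := ih (a - 1) b c
    have i2 := ih a (b - 1) (c + 1)
    push_cast at *
    linear_combination (norm := skip) q ^ b * (1 - (q ^ (c + 1)) ^ 2) * s1
      - q ^ ((i : ℤ) + 1) * (1 - (q ^ K) ^ 2) * s2 - q * q ^ K * (1 - (q ^ j) ^ 2) * s3
      + q * q ^ c * i1 + q * q ^ a * (1 - (q ^ (c + 1)) ^ 2) * i2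
    simp only [zpow_add₀ hq, zpow_sub₀ hq, zpow_one]
    field_simp
    ring

/-- The relation `k₁⁻¹a₂⁻ R = R (-q k₃a₂⁻ + a₁⁻a₃⁻k₂⁻¹)`, with annihilators of the first two
factors normalised by `[m]`. -/
lemma RI_P4 {q : ℂ} (h : Gen q) (i : ℕ) (j K a b c : ℤ) :
    (q ^ a)⁻¹ * qz q (b + 1) * RI q i j K a (b + 1) c =
      -(q ^ K * q) * qz q j * RI q i (j - 1) K a b c
      + (1 - (q ^ K) ^ 2) * (q ^ j)⁻¹ * qz q i * RI q (i - 1) j (K - 1) a b c := by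
  have hq := h.1
  induction i generalizing a b c with
  | zero =>
    rcases lt_or_ge j 0 with hj | hj
    · rw [RI_out _ _ _ _ _ _ _ (by omega), RI_out _ _ _ _ _ _ _ (by omega),
        RI_out _ _ _ _ _ _ _ (by omega)]; simp
    rcases lt_or_ge K 0 with hk | hk
    · rw [RI_out _ _ _ _ _ _ _ (by omega), RI_out _ _ _ _ _ _ _ (by omega),
        RI_out _ _ _ _ _ _ _ (by omega)]; simp
    lift j to ℕ using hj
    lift K to ℕ using hk
    simp only [Nat.cast_zero, qz_zero]
    have e0 := RI_zero h j K a (b + 1) c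
    rw [e0]
    rcases j with _ | j
    · simp only [Nat.cast_zero, qz_zero]
      rcases eq_or_ne (b + 1) 0 with hb | hb
      · rw [hb, qz_zero]; simp
      · have : gZ q 0 (b + 1) = 0 := by
          rcases lt_or_gt_of_ne hb with hb | hb
          · exact gZ_neg _ _ hb
          · exact gZ_gt _ _ (by simpa using hb)
        rw [this]; simp
    have e1 := RI_zero h j K a b c
    push_cast at e1 ⊢
    rw [add_sub_cancel_right, e1]
    by_cases hw : a + b = j ∧ b + c = j + K
    swap
    · rw [if_neg (by omega), if_neg (by omega)]; simp
    rw [if_pos (by omega), if_pos (by omega)]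
    have hp := gZ_absorb h j (b + 1)
    apply mul_right_cancel₀ h.sub_inv'
    have m1 := qz_mul h (b + 1)
    have m2 := qz_mul h (j + 1)
    have hx : q ^ (j + 1) = q ^ ((j : ℤ) + 1) := by norm_cast
    rw [hx, add_sub_cancel_right] at hp
    have hy : q ^ ((j : ℤ) + 1) = q ^ a * q ^ (b + 1) := by
      rw [← zpow_add₀ hq]; congr 1; omega
    rw [hy] at hp m2
    rw [mul_add, mul_one]
    generalize qz q (b + 1) = X at *
    generalize qz q (j + 1) = J at *
    have hp' : (q ^ a)⁻¹ * ((q ^ (b + 1)) - (q ^ (b + 1))⁻¹) * gZ q (j + 1) (b + 1) =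
        (q ^ a * q ^ (b + 1) - (q ^ a * q ^ (b + 1))⁻¹) * gZ q j b := by
      have := zpow_ne_zero (b + 1) hq
      field_simp
      linear_combination -hp
    rw [zpow_add₀ hq (K * b), zpow_add₀ (show (-1 : ℂ) ≠ 0 by norm_num), zpow_one]
    have hb1 : q ^ (b + 1) = q ^ b * q := by rw [zpow_add₀ hq, zpow_one]
    linear_combination -((-1) ^ b * (q ^ (K * b) * q ^ (K : ℤ) * q ^ (b + 1))) *
      ((q ^ a)⁻¹ * gZ q (j + 1) (b + 1) * m1 + hp' - gZ q j b * m2)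
      - (-1) ^ b * q ^ (K * b) * q ^ (K : ℤ) * J * gZ q j b * (q - q⁻¹) * hb1
  | succ i ih =>
    apply mul_left_cancel₀ (zpow_ne_zero j hq)
    have s1 := RI_succ h i j K a (b + 1) c
    have s2 := RI_succ h i (j - 1) K a b c
    have s3 := RI_succ' h i j (K - 1) a b c
    have i1 := ih (a - 1) b c
    have i2 := ih a (b - 1) (c + 1)
    have m := RI_M h i j K a b c
    have eb := qz_succ' h b
    have ei := qz_succ' h (i : ℤ)
    have mj := qz_mul h j
    push_cast
    simp only [add_sub_cancel_right, sub_add_cancel] at *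
    linear_combination (norm := skip) (q ^ a)⁻¹ * qz q (b + 1) * s1
      + q * q ^ K * q⁻¹ * qz q j * s2 - q⁻¹ * (1 - (q ^ K) ^ 2) * (q ^ j)⁻¹ * s3
      + q⁻¹ * q ^ c * i1 + q⁻¹ * q ^ a * (1 - (q ^ (c + 1)) ^ 2) * i2
      + (1 - (q ^ (c + 1)) ^ 2) * RI q i j K a b (c + 1) * eb + m
      - (1 - (q ^ K) ^ 2) * RI q i j (K - 1) a b c * ei
      + q ^ K * q ^ j * RI q (i + 1) (j - 1) K a b c * mj
    simp only [zpow_add₀ hq, zpow_sub₀ hq, zpow_one]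
    field_simp
    ring

/-! ### The inverse relations -/

/-- The relation `a₂⁺ R = R (a₁⁺a₃⁺ - q k₁k₃a₂⁺)`, inverse to `RI_P1`. -/
lemma RI_Q1 {q : ℂ} (h : Gen q) (i : ℕ) (j k a b c : ℤ) (hj : 0 ≤ j) (hk : 0 ≤ k) :
    RI q i j k a (b - 1) c = RI q (i + 1) j (k + 1) a b c
      - q ^ k * q * q ^ (i : ℤ) * RI q i (j + 1) k a b c := by
  have hq := h.1
  induction i generalizing a b c with
  | zero =>
    lift j to ℕ using hj
    lift k to ℕ using hk
    have s1 := RI_succ h 0 j (k + 1) a b c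
    have e0 := RI_zero h j k a (b - 1) c
    have e1 := RI_zero h (j + 1) k a b c
    have e2 := RI_zero h j (k + 1) (a - 1) b c
    have e3 := RI_zero h j (k + 1) a (b - 1) (c + 1)
    apply mul_left_cancel₀ (zpow_ne_zero j hq)
    push_cast at *
    rw [e2, e3] at s1
    rw [e0, e1]
    by_cases hw : a + b = j + 1 ∧ b + c = j + 1 + k
    swap
    · rw [if_neg (by omega), if_neg (by omega)] at s1
      rw [if_neg (by omega), if_neg (by omega)]
      linear_combination - s1
    rw [if_pos (by omega), if_pos (by omega)] at s1
    rw [if_pos (by omega), if_pos (by omega)]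
    have hp := gZ_pascal h j b
    obtain rfl : a = j + 1 - b := by omega
    obtain rfl : c = (j + 1 - b) + k := by omega
    have hy' : q ^ (j : ℤ) = q ^ ((j : ℤ) + 1 - b) * q ^ b * q⁻¹ := by
      rw [← zpow_add₀ hq, ← zpow_sub_one₀ hq]; congr 1; ring
    rw [hy'] at s1
    rw [hy', mul_sub (k : ℤ) b 1, mul_one]
    rw [mul_sub ((k : ℤ) + 1) b 1, mul_one, add_one_mul (k : ℤ) b] at s1
    generalize (j : ℤ) + 1 - b = x at *
    generalize gZ q (j + 1) b = g1 at *
    generalize gZ q j b = g0 at *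
    generalize gZ q j (b - 1) = g2 at *
    generalize RI q (0 + 1) j (k + 1) x b (x + k) = v at *
    simp only [zpow_add₀ hq, zpow_sub₀ hq, zpow_sub₀ (show (-1 : ℂ) ≠ 0 by norm_num), zpow_one,
      zpow_zero] at *
    linear_combination (norm := skip) - s1 + q ^ x * q ^ b * q ^ (k : ℤ) * (-1) ^ b *
      (q ^ ((k : ℤ) * b) * q ^ b) * hp
    field_simp
    ring
  | succ i ih =>
    apply mul_left_cancel₀ (zpow_ne_zero j hq)
    have s1 := RI_succ h i j k a (b - 1) c
    have s2 := RI_succ h (i + 1) j (k + 1) a b c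
    have s3 := RI_succ h i (j + 1) k a b c
    have i1 := ih (a - 1) b c
    have i2 := ih a (b - 1) (c + 1)
    push_cast at *
    linear_combination (norm := skip) s1 - s2 + q ^ k * q * q ^ (i : ℤ) * s3 + q ^ c * i1 +
      q ^ a * (1 - (q ^ (c + 1)) ^ 2) * i2
    simp only [zpow_add₀ hq, zpow_one]
    field_simp
    ring

/-- The relation `k₂a₁⁺ R = R (k₃a₁⁺ + k₁a₂⁺a₃⁻)`, inverse to `RI_succ`. -/
lemma RI_Q2 {q : ℂ} (h : Gen q) (i : ℕ) (j K a b c : ℤ) (hj : 0 ≤ j) :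
    q ^ b * RI q i j K (a - 1) b c = q ^ K * RI q (i + 1) j K a b c
      + (1 - (q ^ K) ^ 2) * q ^ (i : ℤ) * RI q i (j + 1) (K - 1) a b c := by
  have hq := h.1
  induction i generalizing a b c with
  | zero =>
    rcases lt_or_ge K 0 with hk | hk
    · rw [RI_out _ _ _ _ _ _ _ (by omega), RI_out _ _ _ _ _ _ _ (by omega),
        RI_out _ _ _ _ _ _ _ (by omega)]; simp
    lift j to ℕ using hj
    lift K to ℕ using hk
    have s1 := RI_succ h 0 j K a b c
    have e0 := RI_zero h j K (a - 1) b c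
    have e3 := RI_zero h j K a (b - 1) (c + 1)
    have e1 : (1 - (q ^ (K : ℤ)) ^ 2) * RI q 0 (j + 1) (K - 1) a b c = (1 - (q ^ (K : ℤ)) ^ 2) *
        if a + b = j + 1 ∧ b + c = j + K then
        (-1) ^ b * q ^ (K * b) * gZ q (j + 1) b else 0 := by
      rcases K with _ | K
      · simp
      · have := RI_zero h (j + 1) K a b c
        push_cast at this ⊢
        rw [add_sub_cancel_right, this, add_one_mul (K : ℤ) b, zpow_add₀ hq (K * b)]
        congr 1
        exact if_congr (by omega) rfl rfl
    apply mul_left_cancel₀ (zpow_ne_zero j hq)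
    push_cast at s1 e0 e3 ⊢
    rw [e0, e3] at s1
    rw [e0, zpow_zero, mul_one, e1]
    by_cases hw : a + b = j + 1 ∧ b + c = j + K
    swap
    · rw [if_neg (by omega), if_neg (by omega)] at s1
      rw [if_neg (by omega), if_neg (by omega)]
      linear_combination -q ^ (K : ℤ) * s1
    rw [if_pos (by omega), if_pos (by omega)] at s1
    rw [if_pos (by omega), if_pos (by omega)]
    have a1 := gZ_absorb h j b
    have a2 := gZ_absorb' h j b
    have a3 := gZ_pascal h j b
    have hx : q ^ (j + 1) = q ^ ((j : ℤ) + 1) := by norm_cast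
    obtain rfl : a = j + 1 - b := by omega
    obtain rfl : c = (j + 1 - b) + K - 1 := by omega
    have hy : q ^ ((j : ℤ) + 1) = q ^ ((j : ℤ) + 1 - b) * q ^ b := by
      rw [← zpow_add₀ hq]; congr 1; ring
    have hy' : q ^ (j : ℤ) = q ^ ((j : ℤ) + 1 - b) * q ^ b * q⁻¹ := by
      rw [← zpow_add₀ hq, ← zpow_sub_one₀ hq]; congr 1; ring
    rw [hx, hy] at a1 a2
    rw [hy'] at s1
    rw [hy']
    rw [mul_sub (K : ℤ) b 1, mul_one] at s1
    clear e0 e1 e3 hy hy' hx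
    generalize (j : ℤ) + 1 - b = x at *
    generalize gZ q (j + 1) b = g1 at *
    generalize gZ q j b = g0 at *
    generalize gZ q j (b - 1) = g2 at *
    generalize RI q (0 + 1) j K x b (x + K - 1) = v at *
    simp only [zpow_add₀ hq, zpow_sub₀ hq, zpow_sub₀ (show (-1 : ℂ) ≠ 0 by norm_num), zpow_one]
      at *
    have a4 : (1 - (q ^ b) ^ 2) * g0 = (1 - (q ^ x) ^ 2) * g2 := by
      linear_combination a1 - (1 - (q ^ b) ^ 2) * a3
    linear_combination (norm := skip) -q ^ (K : ℤ) * s1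
      - q ^ x * q ^ b * q⁻¹ * ((-1) ^ b * q ^ ((K : ℤ) * b)) *
        (a4 + (1 - (q ^ (K : ℤ)) ^ 2) * a3)
    field_simp
    ring
  | succ i ih =>
    apply mul_left_cancel₀ (zpow_ne_zero j hq)
    have s1 := RI_succ h i j K (a - 1) b c
    have s2 := RI_succ h (i + 1) j K a b c
    have s3 := RI_succ h i (j + 1) (K - 1) a b c
    have i1 := ih (a - 1) b c
    have i2 := ih a (b - 1) (c + 1)
    push_cast at *
    linear_combination (norm := skip) q ^ b * s1 - q ^ K * s2
      - (1 - (q ^ K) ^ 2) * q ^ (i : ℤ) * s3 + q ^ c * i1 +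
      q ^ a * (1 - (q ^ (c + 1)) ^ 2) * i2
    simp only [zpow_add₀ hq, zpow_sub₀ hq, zpow_one]
    field_simp
    ring

/-- The relation `R a₁⁻ = (a₂⁻a₃⁺ + k₃a₁⁻k₂⁻¹) R`, inverse to `RI_P3`. -/
lemma RI_Q3 {q : ℂ} (h : Gen q) (i : ℕ) (j k a b c : ℤ) :
    qz q i * RI q (i - 1) j k a b c = qz q (b + 1) * RI q i j k a (b + 1) (c - 1)
      + q ^ c * (q ^ b)⁻¹ * qz q (a + 1) * RI q i j k (a + 1) b c := by
  have hq := h.1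
  induction i generalizing a b c with
  | zero =>
    rcases lt_or_ge j 0 with hj | hj
    · rw [RI_out _ _ _ _ _ _ _ (by omega), RI_out _ _ _ _ _ _ _ (by omega),
        RI_out _ _ _ _ _ _ _ (by omega)]; simp
    rcases lt_or_ge k 0 with hk | hk
    · rw [RI_out _ _ _ _ _ _ _ (by omega), RI_out _ _ _ _ _ _ _ (by omega),
        RI_out _ _ _ _ _ _ _ (by omega)]; simp
    lift j to ℕ using hj
    lift k to ℕ using hk
    have e0 := RI_zero h j k a (b + 1) (c - 1)
    have e1 := RI_zero h j k (a + 1) b c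
    push_cast
    rw [e0, e1, qz_zero, zero_mul]
    by_cases hw : a + 1 + b = j ∧ b + c = j + k
    swap
    · rw [if_neg (by omega), if_neg (by omega)]; simp
    rw [if_pos (by omega), if_pos (by omega)]
    have hp := gZ_ratio h j (b + 1)
    rw [add_sub_cancel_right, show (j : ℤ) + 1 - (b + 1) = a + 1 by omega] at hp
    have m1 := qz_mul h (b + 1)
    have m2 := qz_mul h (a + 1)
    obtain rfl : c = a + 1 + k := by omega
    apply mul_right_cancel₀ h.sub_inv'
    rw [mul_add, mul_one, zpow_add₀ hq (k * b), zpow_add₀ (show (-1 : ℂ) ≠ 0 by norm_num),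
      zpow_one, zpow_add₀ hq (a + 1)]
    have hb1 : q ^ (b + 1) = q ^ b * q := by rw [zpow_add₀ hq, zpow_one]
    generalize qz q (b + 1) = X at *
    generalize qz q (a + 1) = Y at *
    have hp' : (q ^ (b + 1) - (q ^ (b + 1))⁻¹) * gZ q j (b + 1) * (q ^ b * q) =
        q ^ (a + 1) * (q ^ (a + 1) - (q ^ (a + 1))⁻¹) * gZ q j b := by
      have := zpow_ne_zero (a + 1) hq
      rw [hb1] at hp ⊢
      field_simp
      linear_combination -hp
    linear_combination (norm := skip) (-1) ^ b * (q ^ (k * b) * q ^ (k : ℤ)) *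
      (q ^ b * q * gZ q j (b + 1) * m1 - q ^ (a + 1) * gZ q j b * m2 + hp')
    rw [hb1]
    field_simp
    ring
  | succ i ih =>
    apply mul_left_cancel₀ (zpow_ne_zero j hq)
    have s1 := RI_succ h i j k a (b + 1) (c - 1)
    have s2 := RI_succ h i j k (a + 1) b c
    have s3 := RI_succ' h i j k a b c
    have i1 := ih (a - 1) b c
    have i2 := ih a (b - 1) (c + 1)
    have w : (q ^ a * q ^ b) * RI q i j k a b c = (q ^ (i : ℤ) * q ^ j) * RI q i j k a b c := by
      apply RI_weight
      intro h1 h2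
      rw [← zpow_add₀ hq, ← zpow_add₀ hq, h1]
    have ei := qz_succ' h (i : ℤ)
    have ea := qz_succ h a
    have eb := qz_succ h b
    have ma := qz_mul h a
    have mb := qz_mul h b
    push_cast
    simp only [add_sub_cancel_right, sub_add_cancel] at *
    linear_combination (norm := skip) q ^ j * RI q i j k a b c * ei
      - qz q (b + 1) * s1 - q ^ c * (q ^ b)⁻¹ * qz q (a + 1) * s2 + q⁻¹ * s3
      + q⁻¹ * q ^ c * i1 + q⁻¹ * q ^ a * (1 - (q ^ (c + 1)) ^ 2) * i2 - w
      - RI q i j k a b c * (q ^ a * (1 - (q ^ c) ^ 2) * eb + (q ^ c) ^ 2 * (q ^ b)⁻¹ * ea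
        + (q ^ c) ^ 2 * (q ^ b)⁻¹ * ma + q ^ a * mb)
    simp only [zpow_add₀ hq, zpow_sub₀ hq, zpow_one]
    field_simp
    ring

/-- The relation `R k₁⁻¹a₂⁻ = (-q k₃a₂⁻ + a₁⁻a₃⁻k₂⁻¹) R`, inverse to `RI_P4`. -/
lemma RI_Q4 {q : ℂ} (h : Gen q) (i : ℕ) (j k a b c : ℤ) :
    (q ^ (i : ℤ))⁻¹ * qz q j * RI q i (j - 1) k a b c =
      -(q ^ c * q) * qz q (b + 1) * RI q i j k a (b + 1) c
      + (1 - (q ^ (c + 1)) ^ 2) * (q ^ b)⁻¹ * qz q (a + 1) * RI q i j k (a + 1) b (c + 1) := by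
  have hq := h.1
  induction i generalizing a b c with
  | zero =>
    rcases lt_or_ge j 0 with hj | hj
    · rw [RI_out _ _ _ _ _ _ _ (by omega), RI_out _ _ _ _ _ _ _ (by omega),
        RI_out _ _ _ _ _ _ _ (by omega)]; simp
    rcases lt_or_ge k 0 with hk | hk
    · rw [RI_out _ _ _ _ _ _ _ (by omega), RI_out _ _ _ _ _ _ _ (by omega),
        RI_out _ _ _ _ _ _ _ (by omega)]; simp
    lift j to ℕ using hj
    lift k to ℕ using hk
    have e0 := RI_zero h j k a (b + 1) c
    have e1 := RI_zero h j k (a + 1) b (c + 1)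
    push_cast
    rw [e0, e1]
    rcases j with _ | j
    · by_cases hw : a + 1 + b = 0 ∧ b + 1 + c = k
      swap
      · rw [if_neg (by push_cast; omega), if_neg (by push_cast; omega)]; simp [qz_zero]
      rw [if_pos (by push_cast; omega), if_pos (by push_cast; omega)]
      have t1 : qz q (b + 1) * gZ q 0 (b + 1) = 0 := by
        rcases lt_trichotomy (b + 1) 0 with hb | hb | hb
        · rw [gZ_neg _ _ hb, mul_zero]
        · rw [hb, qz_zero, zero_mul]
        · rw [gZ_gt _ _ (by simpa using hb), mul_zero]
      have t2 : qz q (a + 1) * gZ q 0 b = 0 := by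
        rcases lt_trichotomy b 0 with hb | hb | hb
        · rw [gZ_neg _ _ hb, mul_zero]
        · rw [show a + 1 = 0 by omega, qz_zero, zero_mul]
        · rw [gZ_gt _ _ (by simpa using hb), mul_zero]
      simp only [Nat.cast_zero, qz_zero]
      linear_combination q ^ c * q * ((-1) ^ (b + 1) * (q ^ ((k : ℤ) * (b + 1)) * q ^ (b + 1))) * t1
        - (1 - (q ^ (c + 1)) ^ 2) * (q ^ b)⁻¹ * ((-1) ^ b * (q ^ ((k : ℤ) * b) * q ^ b)) * t2
    have e2 := RI_zero h j k a b c
    push_cast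
    rw [add_sub_cancel_right, e2]
    by_cases hw : a + b = j ∧ b + c = j + k
    swap
    · rw [if_neg (by omega), if_neg (by omega), if_neg (by omega)]; simp
    rw [if_pos (by omega), if_pos (by omega), if_pos (by omega)]
    have hp := gZ_absorb h j (b + 1)
    have hp2 := gZ_absorb' h j b
    have hx : q ^ (j + 1) = q ^ (a + 1) * q ^ b := by
      rw [← zpow_add₀ hq, ← zpow_natCast]
      congr 1; push_cast; omega
    rw [hx, add_sub_cancel_right] at hp
    rw [hx, show (j : ℤ) + 1 - b = a + 1 by omega] at hp2
    have m1 := qz_mul h (b + 1)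
    have m2 := qz_mul h (a + 1)
    have m3 := qz_mul h (j + 1)
    rw [show (j : ℤ) + 1 = (a + 1) + b by omega, zpow_add₀ hq (a + 1)] at m3
    rw [show (j : ℤ) + 1 = (a + 1) + b by omega]
    obtain rfl : c = a + 1 + k - 1 := by omega
    apply mul_right_cancel₀ h.sub_inv'
    rw [mul_add, mul_one, zpow_add₀ hq (k * b), zpow_add₀ (show (-1 : ℂ) ≠ 0 by norm_num),
      zpow_one, sub_add_cancel, zpow_sub_one₀ hq, zpow_add₀ hq (a + 1)]
    have hb1 : q ^ (b + 1) = q ^ b * q := by rw [zpow_add₀ hq, zpow_one]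
    generalize qz q (b + 1) = X at *
    generalize qz q (a + 1 + b) = J at *
    generalize qz q (a + 1) = Y at *
    generalize gZ q (j + 1) (b + 1) = g1 at *
    generalize gZ q (j + 1) b = g2 at *
    generalize gZ q j b = g0 at *
    have := zpow_ne_zero (a + 1) hq
    rw [hb1] at *
    generalize q ^ (a + 1) = x at *
    simp only [zpow_zero, inv_one, one_mul]
    linear_combination (norm := skip) (-1) ^ b * (q ^ (k * b)) *
      (q ^ b * g0 * m3 - (x * (q ^ (k : ℤ)) ^ 2) * (q ^ b * q) * g1 * m1
       - (1 - (x * q ^ (k : ℤ)) ^ 2) * g2 * m2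
       + (x * (q ^ (k : ℤ)) ^ 2) * hp + (1 - (x * q ^ (k : ℤ)) ^ 2) * x⁻¹ * hp2)
    field_simp
    ring
  | succ i ih =>
    apply mul_left_cancel₀ (zpow_ne_zero j hq)
    have s1 := RI_succ h i j k a (b + 1) c
    have s2 := RI_succ h i j k (a + 1) b (c + 1)
    have s3 := RI_succ h i (j - 1) k a b c
    have i1 := ih (a - 1) b c
    have i2 := ih a (b - 1) (c + 1)
    have ea := qz_succ' h a
    have eb := qz_succ h b
    push_cast
    simp only [add_sub_cancel_right, sub_add_cancel] at *
    linear_combination (norm := skip) q * (q ^ ((i : ℤ) + 1))⁻¹ * qz q j * s3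
      + (q ^ c * q) * qz q (b + 1) * s1
      - (1 - (q ^ (c + 1)) ^ 2) * (q ^ b)⁻¹ * qz q (a + 1) * s2
      + q ^ c * i1 + q ^ a * (1 - (q ^ (c + 1)) ^ 2) * i2
      + (1 - (q ^ (c + 1)) ^ 2) * RI q i j k a b (c + 1) * (q ^ c * q * q ^ a * eb
        - q ^ c * q * (q ^ b)⁻¹ * ea)
    simp only [zpow_add₀ hq, zpow_sub₀ hq, zpow_one]
    field_simp
    ring

/-! ### Relations uniform in the type of the position -/

/-- The three-dimensional `L` on integer labels; a nonzero entry conserves `a + b` and `b + c`. -/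
lemma SZ_L (q : ℂ) (a b c i j k : ℤ) (h1 : a + b = i + j) (h2 : b + c = j + k)
    (ha : 0 ≤ a ∧ a ≤ 1) (hb : 0 ≤ b ∧ b ≤ 1) (hi : 0 ≤ i ∧ i ≤ 1) (hj : 0 ≤ j ∧ j ≤ 1) :
    SZ q true a b c i j k = if 0 ≤ c ∧ 0 ≤ k then
      (if b = 0 then (if j = 1 then 1 else if a = 1 then q ^ k else 1)
        else if j = 0 then 1 - (q ^ k) ^ 2 else if a = 0 then -(q ^ k * q) else 1) else 0 := by
  unfold SZ
  by_cases hc : 0 ≤ c ∧ 0 ≤ k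
  swap
  · rw [if_neg (by omega), if_neg (by omega)]
  obtain ⟨hc, hk⟩ := hc
  rw [if_pos (by omega), if_pos (by omega)]
  lift c to ℕ using hc
  lift k to ℕ using hk
  obtain ⟨ha, ha'⟩ := ha
  obtain ⟨hb, hb'⟩ := hb
  obtain ⟨hi, hi'⟩ := hi
  obtain ⟨hj, hj'⟩ := hj
  interval_cases a <;> interval_cases b <;> interval_cases i <;> interval_cases j <;>
    first
    | (exfalso; omega)
    | (simp [Sg, L3]; done)
    | (have : c = k := by omega
       subst this
       simp [Sg, L3, pow_succ]; done)
    | (have : c + 1 = k := by omega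
       subst this
       simp [Sg, L3]; norm_cast; ring)
    | (have : c = k + 1 := by omega
       subst this
       simp [Sg, L3]; done)

lemma SZ_L_out (q : ℂ) (a b c i j k : ℤ) (h : a < 0 ∨ 1 < a ∨ b < 0 ∨ 1 < b ∨ i < 0 ∨ 1 < i ∨
    j < 0 ∨ 1 < j ∨ c < 0 ∨ k < 0 ∨ a + b ≠ i + j ∨ b + c ≠ j + k) :
    SZ q true a b c i j k = 0 := by
  by_contra hn
  have h1 := SZ_nonneg hn
  have h2 := SZ_weight hn
  obtain ⟨ha, hb, hc, hi, hj, hk⟩ := h1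
  lift a to ℕ using ha
  lift b to ℕ using hb
  lift c to ℕ using hc
  lift i to ℕ using hi
  lift j to ℕ using hj
  lift k to ℕ using hk
  rw [SZ_nat] at hn
  simp only [Sg, L3, if_true] at hn
  split_ifs at hn <;> first | omega | exact hn rfl

/-- The three-dimensional `L` on integer labels, in closed form. -/
lemma SZ_L' (q : ℂ) (a b c i j k : ℤ) : SZ q true a b c i j k =
    if 0 ≤ a ∧ a ≤ 1 ∧ 0 ≤ b ∧ b ≤ 1 ∧ 0 ≤ i ∧ i ≤ 1 ∧ 0 ≤ j ∧ j ≤ 1 ∧ a + b = i + j ∧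
      b + c = j + k ∧ 0 ≤ c ∧ 0 ≤ k then
      (if b = 0 then (if j = 1 then 1 else if a = 1 then q ^ k else 1)
        else if j = 0 then 1 - (q ^ k) ^ 2 else if a = 0 then -(q ^ k * q) else 1) else 0 := by
  split_ifs with h1 <;> first
    | rw [SZ_L _ _ _ _ _ _ _ (by omega) (by omega) (by omega) (by omega) (by omega) (by omega),
        if_pos (by omega)]; simp [*]
    | exact SZ_L_out _ _ _ _ _ _ _ (by omega)

/-- `q` at a bosonic position and `-q⁻¹` at a fermionic one. -/
def qs (q : ℂ) (e : Bool) : ℂ := if e then -q⁻¹ else q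

lemma qs_ne {q : ℂ} (h : Gen q) (e : Bool) : qs q e ≠ 0 := by
  have := h.1
  cases e <;> simp [qs, this]

lemma qz_one {q : ℂ} (h : Gen q) : qz q 1 = 1 := by
  have := qz_succ h 0
  simpa [qz_zero] using this

/-- Labels allowed at a position of type `e`. -/
def Okz (e : Bool) (a : ℤ) : Prop := 0 ≤ a ∧ (e = true → a ≤ 1)

/-! The eight relations below exchange `S^(e)` with the local oscillator generators, uniformly
in the type `e` of the position; the matrix entries are taken on admissible labels. -/

lemma SZ_P1 {q : ℂ} (h : Gen q) (e : Bool) (a b c i j k : ℤ)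
    (ha : Okz e a) (hb : Okz e b) (hi : Okz e i) (hj : Okz e j) :
    SZ q e a b (c + 1) i (j + 1) k = SZ q e (a - 1) b c i j k
      - q ^ (c + 1) * q * qs q e ^ a * SZ q e a (b - 1) (c + 1) i j k := by
  have hq := h.1
  cases e with
  | false =>
    lift i to ℕ using hi.1
    have := RI_P1 h i j k a b (c + 1) hj.1
    rw [add_sub_cancel_right] at this
    simp only [qs, Bool.false_eq_true, if_false]
    unfold RI at this
    linear_combination this
  | true =>
    obtain ⟨ha, ha'⟩ := ha
    obtain ⟨hb, hb'⟩ := hb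
    obtain ⟨hi, hi'⟩ := hi
    obtain ⟨hj, hj'⟩ := hj
    simp only [true_imp_iff] at ha' hb' hi' hj'
    by_cases hw : k = b + c - j ∧ a + b = i + j + 1
    swap
    · rw [SZ_L_out _ _ _ _ _ _ _ (by omega), SZ_L_out _ _ _ _ _ _ _ (by omega),
        SZ_L_out _ _ _ _ _ _ _ (by omega)]; simp
    obtain ⟨rfl, hw⟩ := hw
    interval_cases a <;> interval_cases b <;> interval_cases i <;> interval_cases j <;>
      first
      | (exfalso; omega)
      | (simp only [SZ_L', qs, if_true]
         split_ifs <;> first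
          | (exfalso; omega)
          | (simp [zpow_add₀ hq, zpow_sub₀ hq, qz_zero, qz_one h]; done)
          | (simp [zpow_add₀ hq, zpow_sub₀ hq, qz_zero, qz_one h]; ring; done)
          | (simp [zpow_add₀ hq, zpow_sub₀ hq, qz_zero, qz_one h]; field_simp; done)
          | (simp [zpow_add₀ hq, zpow_sub₀ hq, qz_zero, qz_one h]; field_simp; ring; done)
          | (simp [zpow_add₀ hq, zpow_sub₀ hq, qz_zero, qz_one h]; field_simp; simp; done)
          | (obtain rfl : c = -1 := by omega
             simp [zpow_add₀ hq, zpow_sub₀ hq, qz_zero, qz_one h]; done)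
          | (obtain rfl : c = -1 := by omega
             simp [zpow_add₀ hq, zpow_sub₀ hq, qz_zero, qz_one h]; field_simp; done)
          | (obtain rfl : c = 0 := by omega
             simp [zpow_add₀ hq, zpow_sub₀ hq, qz_zero, qz_one h]; done))

lemma SZ_P2 {q : ℂ} (h : Gen q) (e : Bool) (a b c i j k : ℤ)
    (ha : Okz e a) (hb : Okz e b) (hi : Okz e i) (hj : Okz e j) :
    qs q e ^ j * SZ q e a b c (i + 1) j k = q ^ c * SZ q e (a - 1) b c i j k
      + qs q e ^ a * (1 - (q ^ (c + 1)) ^ 2) * SZ q e a (b - 1) (c + 1) i j k := by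
  have hq := h.1
  cases e with
  | false =>
    lift i to ℕ using hi.1
    have := RI_succ h i j k a b c
    simp only [qs, Bool.false_eq_true, if_false]
    unfold RI at this
    linear_combination this
  | true =>
    obtain ⟨ha, ha'⟩ := ha
    obtain ⟨hb, hb'⟩ := hb
    obtain ⟨hi, hi'⟩ := hi
    obtain ⟨hj, hj'⟩ := hj
    simp only [true_imp_iff] at ha' hb' hi' hj'
    by_cases hw : k = b + c - j ∧ a + b = i + 1 + j
    swap
    · rw [SZ_L_out _ _ _ _ _ _ _ (by omega), SZ_L_out _ _ _ _ _ _ _ (by omega),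
        SZ_L_out _ _ _ _ _ _ _ (by omega)]; simp
    obtain ⟨rfl, hw⟩ := hw
    interval_cases a <;> interval_cases b <;> interval_cases i <;> interval_cases j <;>
      first
      | (exfalso; omega)
      | (simp only [SZ_L', qs, if_true]
         split_ifs <;> first
          | (exfalso; omega)
          | (simp [zpow_add₀ hq, zpow_sub₀ hq, qz_zero, qz_one h]; done)
          | (simp [zpow_add₀ hq, zpow_sub₀ hq, qz_zero, qz_one h]; ring; done)
          | (simp [zpow_add₀ hq, zpow_sub₀ hq, qz_zero, qz_one h]; field_simp; done)
          | (simp [zpow_add₀ hq, zpow_sub₀ hq, qz_zero, qz_one h]; field_simp; ring; done)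
          | (simp [zpow_add₀ hq, zpow_sub₀ hq, qz_zero, qz_one h]; field_simp; simp; done)
          | (obtain rfl : c = -1 := by omega
             simp [zpow_add₀ hq, zpow_sub₀ hq, qz_zero, qz_one h]; done)
          | (obtain rfl : c = -1 := by omega
             simp [zpow_add₀ hq, zpow_sub₀ hq, qz_zero, qz_one h]; field_simp; done)
          | (obtain rfl : c = 0 := by omega
             simp [zpow_add₀ hq, zpow_sub₀ hq, qz_zero, qz_one h]; done))

lemma SZ_P3 {q : ℂ} (h : Gen q) (e : Bool) (a b c i j k : ℤ) (hk : 0 ≤ k)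
    (ha : Okz e a) (hb : Okz e b) (hi : Okz e i) (hj : Okz e j) :
    qz q (a + 1) * SZ q e (a + 1) b c i j k = qz q j * SZ q e a b c i (j - 1) (k + 1)
      + q ^ k * (qs q e ^ j)⁻¹ * qz q i * SZ q e a b c (i - 1) j k := by
  have hq := h.1
  cases e with
  | false =>
    lift i to ℕ using hi.1
    have := RI_P3 h i j k a b c hk
    rw [zpow_sub₀ hq] at this
    simp only [qs, Bool.false_eq_true, if_false]
    unfold RI at this
    linear_combination this
  | true =>
    obtain ⟨ha, ha'⟩ := ha
    obtain ⟨hb, hb'⟩ := hb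
    obtain ⟨hi, hi'⟩ := hi
    obtain ⟨hj, hj'⟩ := hj
    simp only [true_imp_iff] at ha' hb' hi' hj'
    by_cases hw : c = j + k - b ∧ a + 1 + b = i + j
    swap
    · rw [SZ_L_out _ _ _ _ _ _ _ (by omega), SZ_L_out _ _ _ _ _ _ _ (by omega),
        SZ_L_out _ _ _ _ _ _ _ (by omega)]; simp
    obtain ⟨rfl, hw⟩ := hw
    interval_cases a <;> interval_cases b <;> interval_cases i <;> interval_cases j <;>
      first
      | (exfalso; omega)
      | (simp only [SZ_L', qs, if_true]
         split_ifs <;> first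
          | (exfalso; omega)
          | (simp [zpow_add₀ hq, zpow_sub₀ hq, qz_zero, qz_one h]; done)
          | (simp [zpow_add₀ hq, zpow_sub₀ hq, qz_zero, qz_one h]; ring; done)
          | (simp [zpow_add₀ hq, zpow_sub₀ hq, qz_zero, qz_one h]; field_simp; done)
          | (simp [zpow_add₀ hq, zpow_sub₀ hq, qz_zero, qz_one h]; field_simp; ring; done)
          | (simp [zpow_add₀ hq, zpow_sub₀ hq, qz_zero, qz_one h]; field_simp; simp; done)
          | (obtain rfl : k = -1 := by omega
             simp [zpow_add₀ hq, zpow_sub₀ hq, qz_zero, qz_one h]; done)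
          | (obtain rfl : k = -1 := by omega
             simp [zpow_add₀ hq, zpow_sub₀ hq, qz_zero, qz_one h]; field_simp; done)
          | (obtain rfl : k = 0 := by omega
             simp [zpow_add₀ hq, zpow_sub₀ hq, qz_zero, qz_one h]; done))

lemma SZ_P4 {q : ℂ} (h : Gen q) (e : Bool) (a b c i j k : ℤ)
    (ha : Okz e a) (hb : Okz e b) (hi : Okz e i) (hj : Okz e j) :
    (qs q e ^ a)⁻¹ * qz q (b + 1) * SZ q e a (b + 1) c i j (k + 1)
      = -(q ^ (k + 1) * q) * qz q j * SZ q e a b c i (j - 1) (k + 1)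
      + (1 - (q ^ (k + 1)) ^ 2) * (qs q e ^ j)⁻¹ * qz q i * SZ q e a b c (i - 1) j k := by
  have hq := h.1
  cases e with
  | false =>
    lift i to ℕ using hi.1
    have := RI_P4 h i j (k + 1) a b c
    rw [add_sub_cancel_right] at this
    simp only [qs, Bool.false_eq_true, if_false]
    unfold RI at this
    linear_combination this
  | true =>
    obtain ⟨ha, ha'⟩ := ha
    obtain ⟨hb, hb'⟩ := hb
    obtain ⟨hi, hi'⟩ := hi
    obtain ⟨hj, hj'⟩ := hj
    simp only [true_imp_iff] at ha' hb' hi' hj'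
    by_cases hw : c = j + k - b ∧ a + b + 1 = i + j
    swap
    · rw [SZ_L_out _ _ _ _ _ _ _ (by omega), SZ_L_out _ _ _ _ _ _ _ (by omega),
        SZ_L_out _ _ _ _ _ _ _ (by omega)]; simp
    obtain ⟨rfl, hw⟩ := hw
    interval_cases a <;> interval_cases b <;> interval_cases i <;> interval_cases j <;>
      first
      | (exfalso; omega)
      | (simp only [SZ_L', qs, if_true]
         split_ifs <;> first
          | (exfalso; omega)
          | (simp [zpow_add₀ hq, zpow_sub₀ hq, qz_zero, qz_one h]; done)
          | (simp [zpow_add₀ hq, zpow_sub₀ hq, qz_zero, qz_one h]; ring; done)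
          | (simp [zpow_add₀ hq, zpow_sub₀ hq, qz_zero, qz_one h]; field_simp; done)
          | (simp [zpow_add₀ hq, zpow_sub₀ hq, qz_zero, qz_one h]; field_simp; ring; done)
          | (simp [zpow_add₀ hq, zpow_sub₀ hq, qz_zero, qz_one h]; field_simp; simp; done)
          | (obtain rfl : k = -1 := by omega
             simp [zpow_add₀ hq, zpow_sub₀ hq, qz_zero, qz_one h]; done)
          | (obtain rfl : k = -1 := by omega
             simp [zpow_add₀ hq, zpow_sub₀ hq, qz_zero, qz_one h]; field_simp; done)
          | (obtain rfl : k = 0 := by omega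
             simp [zpow_add₀ hq, zpow_sub₀ hq, qz_zero, qz_one h]; done))

lemma SZ_Q1 {q : ℂ} (h : Gen q) (e : Bool) (a b c i j k : ℤ) (hk : 0 ≤ k)
    (ha : Okz e a) (hb : Okz e b) (hi : Okz e i) (hj : Okz e j) :
    SZ q e a (b - 1) c i j k = SZ q e a b c (i + 1) j (k + 1)
      - q ^ (k + 1) * qs q e ^ i * SZ q e a b c i (j + 1) k := by
  have hq := h.1
  cases e with
  | false =>
    lift i to ℕ using hi.1
    have := RI_Q1 h i j k a b c hj.1 hk
    rw [← zpow_add_one₀ hq] at this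
    simp only [qs, Bool.false_eq_true, if_false]
    unfold RI at this
    linear_combination this
  | true =>
    obtain ⟨ha, ha'⟩ := ha
    obtain ⟨hb, hb'⟩ := hb
    obtain ⟨hi, hi'⟩ := hi
    obtain ⟨hj, hj'⟩ := hj
    simp only [true_imp_iff] at ha' hb' hi' hj'
    by_cases hw : c = j + k - b + 1 ∧ a + b - 1 = i + j
    swap
    · rw [SZ_L_out _ _ _ _ _ _ _ (by omega), SZ_L_out _ _ _ _ _ _ _ (by omega),
        SZ_L_out _ _ _ _ _ _ _ (by omega)]; simp
    obtain ⟨rfl, hw⟩ := hw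
    interval_cases a <;> interval_cases b <;> interval_cases i <;> interval_cases j <;>
      first
      | (exfalso; omega)
      | (simp only [SZ_L', qs, if_true]
         split_ifs <;> first
          | (exfalso; omega)
          | (simp [zpow_add₀ hq, zpow_sub₀ hq, qz_zero, qz_one h]; done)
          | (simp [zpow_add₀ hq, zpow_sub₀ hq, qz_zero, qz_one h]; ring; done)
          | (simp [zpow_add₀ hq, zpow_sub₀ hq, qz_zero, qz_one h]; field_simp; done)
          | (simp [zpow_add₀ hq, zpow_sub₀ hq, qz_zero, qz_one h]; field_simp; ring; done)
          | (simp [zpow_add₀ hq, zpow_sub₀ hq, qz_zero, qz_one h]; field_simp; simp; done)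
          | (obtain rfl : k = -1 := by omega
             simp [zpow_add₀ hq, zpow_sub₀ hq, qz_zero, qz_one h]; done)
          | (obtain rfl : k = -1 := by omega
             simp [zpow_add₀ hq, zpow_sub₀ hq, qz_zero, qz_one h]; field_simp; done)
          | (obtain rfl : k = 0 := by omega
             simp [zpow_add₀ hq, zpow_sub₀ hq, qz_zero, qz_one h]; done))

lemma SZ_Q2 {q : ℂ} (h : Gen q) (e : Bool) (a b c i j k : ℤ)
    (ha : Okz e a) (hb : Okz e b) (hi : Okz e i) (hj : Okz e j) :
    qs q e ^ b * SZ q e (a - 1) b c i j (k + 1)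
      = q ^ (k + 1) * SZ q e a b c (i + 1) j (k + 1)
      + (1 - (q ^ (k + 1)) ^ 2) * qs q e ^ i * SZ q e a b c i (j + 1) k := by
  have hq := h.1
  cases e with
  | false =>
    lift i to ℕ using hi.1
    have := RI_Q2 h i j (k + 1) a b c hj.1
    rw [add_sub_cancel_right] at this
    simp only [qs, Bool.false_eq_true, if_false]
    unfold RI at this
    linear_combination this
  | true =>
    obtain ⟨ha, ha'⟩ := ha
    obtain ⟨hb, hb'⟩ := hb
    obtain ⟨hi, hi'⟩ := hi
    obtain ⟨hj, hj'⟩ := hj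
    simp only [true_imp_iff] at ha' hb' hi' hj'
    by_cases hw : c = j + k - b + 1 ∧ a + b - 1 = i + j
    swap
    · rw [SZ_L_out _ _ _ _ _ _ _ (by omega), SZ_L_out _ _ _ _ _ _ _ (by omega),
        SZ_L_out _ _ _ _ _ _ _ (by omega)]; simp
    obtain ⟨rfl, hw⟩ := hw
    interval_cases a <;> interval_cases b <;> interval_cases i <;> interval_cases j <;>
      first
      | (exfalso; omega)
      | (simp only [SZ_L', qs, if_true]
         split_ifs <;> first
          | (exfalso; omega)
          | (simp [zpow_add₀ hq, zpow_sub₀ hq, qz_zero, qz_one h]; done)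
          | (simp [zpow_add₀ hq, zpow_sub₀ hq, qz_zero, qz_one h]; ring; done)
          | (simp [zpow_add₀ hq, zpow_sub₀ hq, qz_zero, qz_one h]; field_simp; done)
          | (simp [zpow_add₀ hq, zpow_sub₀ hq, qz_zero, qz_one h]; field_simp; ring; done)
          | (simp [zpow_add₀ hq, zpow_sub₀ hq, qz_zero, qz_one h]; field_simp; simp; done)
          | (obtain rfl : k = -1 := by omega
             simp [zpow_add₀ hq, zpow_sub₀ hq, qz_zero, qz_one h]; done)
          | (obtain rfl : k = -1 := by omega
             simp [zpow_add₀ hq, zpow_sub₀ hq, qz_zero, qz_one h]; field_simp; done)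
          | (obtain rfl : k = 0 := by omega
             simp [zpow_add₀ hq, zpow_sub₀ hq, qz_zero, qz_one h]; done))

lemma SZ_Q3 {q : ℂ} (h : Gen q) (e : Bool) (a b c i j k : ℤ)
    (ha : Okz e a) (hb : Okz e b) (hi : Okz e i) (hj : Okz e j) :
    qz q i * SZ q e a b (c + 1) (i - 1) j k = qz q (b + 1) * SZ q e a (b + 1) c i j k
      + q ^ (c + 1) * (qs q e ^ b)⁻¹ * qz q (a + 1) * SZ q e (a + 1) b (c + 1) i j k := by
  have hq := h.1
  cases e with
  | false =>
    lift i to ℕ using hi.1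
    have := RI_Q3 h i j k a b (c + 1)
    rw [add_sub_cancel_right] at this
    simp only [qs, Bool.false_eq_true, if_false]
    unfold RI at this
    linear_combination this
  | true =>
    obtain ⟨ha, ha'⟩ := ha
    obtain ⟨hb, hb'⟩ := hb
    obtain ⟨hi, hi'⟩ := hi
    obtain ⟨hj, hj'⟩ := hj
    simp only [true_imp_iff] at ha' hb' hi' hj'
    by_cases hw : k = b + c + 1 - j ∧ a + b = i - 1 + j
    swap
    · rw [SZ_L_out _ _ _ _ _ _ _ (by omega), SZ_L_out _ _ _ _ _ _ _ (by omega),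
        SZ_L_out _ _ _ _ _ _ _ (by omega)]; simp
    obtain ⟨rfl, hw⟩ := hw
    interval_cases a <;> interval_cases b <;> interval_cases i <;> interval_cases j <;>
      first
      | (exfalso; omega)
      | (simp only [SZ_L', qs, if_true]
         split_ifs <;> first
          | (exfalso; omega)
          | (simp [zpow_add₀ hq, zpow_sub₀ hq, qz_zero, qz_one h]; done)
          | (simp [zpow_add₀ hq, zpow_sub₀ hq, qz_zero, qz_one h]; ring; done)
          | (simp [zpow_add₀ hq, zpow_sub₀ hq, qz_zero, qz_one h]; field_simp; done)
          | (simp [zpow_add₀ hq, zpow_sub₀ hq, qz_zero, qz_one h]; field_simp; ring; done)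
          | (simp [zpow_add₀ hq, zpow_sub₀ hq, qz_zero, qz_one h]; field_simp; simp; done)
          | (obtain rfl : c = -1 := by omega
             simp [zpow_add₀ hq, zpow_sub₀ hq, qz_zero, qz_one h]; done)
          | (obtain rfl : c = -1 := by omega
             simp [zpow_add₀ hq, zpow_sub₀ hq, qz_zero, qz_one h]; field_simp; done)
          | (obtain rfl : c = 0 := by omega
             simp [zpow_add₀ hq, zpow_sub₀ hq, qz_zero, qz_one h]; done))

lemma SZ_Q4 {q : ℂ} (h : Gen q) (e : Bool) (a b c i j k : ℤ)
    (ha : Okz e a) (hb : Okz e b) (hi : Okz e i) (hj : Okz e j) :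
    (qs q e ^ i)⁻¹ * qz q j * SZ q e a b c i (j - 1) k
      = -(q ^ (c + 1)) * qz q (b + 1) * SZ q e a (b + 1) c i j k
      + (1 - (q ^ (c + 1)) ^ 2) * (qs q e ^ b)⁻¹ * qz q (a + 1) * SZ q e (a + 1) b (c + 1) i j k := by
  have hq := h.1
  cases e with
  | false =>
    lift i to ℕ using hi.1
    have := RI_Q4 h i j k a b c
    rw [← zpow_add_one₀ hq] at this
    simp only [qs, Bool.false_eq_true, if_false]
    unfold RI at this
    linear_combination this
  | true =>
    obtain ⟨ha, ha'⟩ := ha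
    obtain ⟨hb, hb'⟩ := hb
    obtain ⟨hi, hi'⟩ := hi
    obtain ⟨hj, hj'⟩ := hj
    simp only [true_imp_iff] at ha' hb' hi' hj'
    by_cases hw : k = b + c + 1 - j ∧ a + b = i + j - 1
    swap
    · rw [SZ_L_out _ _ _ _ _ _ _ (by omega), SZ_L_out _ _ _ _ _ _ _ (by omega),
        SZ_L_out _ _ _ _ _ _ _ (by omega)]; simp
    obtain ⟨rfl, hw⟩ := hw
    interval_cases a <;> interval_cases b <;> interval_cases i <;> interval_cases j <;>
      first
      | (exfalso; omega)
      | (simp only [SZ_L', qs, if_true]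
         split_ifs <;> first
          | (exfalso; omega)
          | (simp [zpow_add₀ hq, zpow_sub₀ hq, qz_zero, qz_one h]; done)
          | (simp [zpow_add₀ hq, zpow_sub₀ hq, qz_zero, qz_one h]; ring; done)
          | (simp [zpow_add₀ hq, zpow_sub₀ hq, qz_zero, qz_one h]; field_simp; done)
          | (simp [zpow_add₀ hq, zpow_sub₀ hq, qz_zero, qz_one h]; field_simp; ring; done)
          | (simp [zpow_add₀ hq, zpow_sub₀ hq, qz_zero, qz_one h]; field_simp; simp; done)
          | (obtain rfl : c = -1 := by omega
             simp [zpow_add₀ hq, zpow_sub₀ hq, qz_zero, qz_one h]; done)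
          | (obtain rfl : c = -1 := by omega
             simp [zpow_add₀ hq, zpow_sub₀ hq, qz_zero, qz_one h]; field_simp; done)
          | (obtain rfl : c = 0 := by omega
             simp [zpow_add₀ hq, zpow_sub₀ hq, qz_zero, qz_one h]; done))

/-! ### Cyclic products along a path -/

/-- The contribution of the path `c` to a trace matrix element, with integer labels. -/
def PZ (q : ℂ) {n : ℕ} [NeZero n] (ε : Fin n → Bool) (a b i j c : Fin n → ℤ) : ℂ :=
  ∏ t, SZ q (ε t) (a t) (b t) (c t) (i t) (j t) (c (t + 1))

/-- Unit vector. -/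
def ev {n : ℕ} (p : Fin n) : Fin n → ℤ := fun t => if t = p then 1 else 0

lemma ev_self {n : ℕ} (p : Fin n) : ev p p = 1 := by simp [ev]

lemma ev_ne {n : ℕ} {p t : Fin n} (h : t ≠ p) : ev p t = 0 := by simp [ev, h]

/-- All factors of a path contribution other than those at two adjacent positions. -/
def PR (q : ℂ) {n : ℕ} [NeZero n] (ε : Fin n → Bool) (p r : Fin n) (a b i j c : Fin n → ℤ) : ℂ :=
  ∏ t ∈ (Finset.univ.erase p).erase r, SZ q (ε t) (a t) (b t) (c t) (i t) (j t) (c (t + 1))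

lemma PZ_split (q : ℂ) {n : ℕ} [NeZero n] (ε : Fin n → Bool) {p r : Fin n} (hpr : p ≠ r)
    (h1 : p + 1 = r) (a b i j c a' b' i' j' c' : Fin n → ℤ)
    (ha : ∀ t, t ≠ p → t ≠ r → a' t = a t) (hb : ∀ t, t ≠ p → t ≠ r → b' t = b t)
    (hi : ∀ t, t ≠ p → t ≠ r → i' t = i t) (hj : ∀ t, t ≠ p → t ≠ r → j' t = j t)
    (hc : ∀ t, t ≠ r → c' t = c t) :
    PZ q ε a' b' i' j' c' = SZ q (ε p) (a' p) (b' p) (c p) (i' p) (j' p) (c' r)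
      * SZ q (ε r) (a' r) (b' r) (c' r) (i' r) (j' r) (c (r + 1)) * PR q ε p r a b i j c := by
  have hr1 : r + 1 ≠ r := by
    intro h
    apply hpr
    rw [← h1] at h
    exact (add_right_cancel h).symm.trans h1
  unfold PZ PR
  rw [← Finset.mul_prod_erase _ _ (Finset.mem_univ p), ← Finset.mul_prod_erase (Finset.univ.erase p)
    _ (Finset.mem_erase.2 ⟨hpr.symm, Finset.mem_univ r⟩), ← mul_assoc, h1, hc p hpr, hc _ hr1]
  congr 1
  refine Finset.prod_congr rfl fun t ht => ?_
  simp only [Finset.mem_erase, Finset.mem_univ, and_true] at ht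
  obtain ⟨h2, h3⟩ := ht
  have h4 : t + 1 ≠ r := by
    intro h
    rw [← h1] at h
    exact h3 (add_right_cancel h)
  rw [ha t h3 h2, hb t h3 h2, hi t h3 h2, hj t h3 h2, hc t h2, hc _ h4]

/-- The intertwining relation for a raising generator at node `r`, for a single path. -/
lemma PZ_e {q : ℂ} (h : Gen q) {n : ℕ} [NeZero n] (ε : Fin n → Bool) {p r : Fin n} (hpr : p ≠ r)
    (h1 : p + 1 = r) (a b i j c : Fin n → ℤ)
    (ha : ∀ t, Okz (ε t) (a t)) (hb : ∀ t, Okz (ε t) (b t))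
    (hi : ∀ t, Okz (ε t) (i t)) (hj : ∀ t, Okz (ε t) (j t)) :
    qz q (a p + 1) * PZ q ε (a + ev p - ev r) b i j c
      + (qs q (ε p) ^ a p)⁻¹ * qs q (ε r) ^ a r * qz q (b p + 1)
        * PZ q ε a (b + ev p - ev r) i j (c + ev r)
    = qz q (j p) * PZ q ε a b i (j - ev p + ev r) (c + ev r)
      + qz q (i p) * (qs q (ε p) ^ j p)⁻¹ * qs q (ε r) ^ j r
        * PZ q ε a b (i - ev p + ev r) j c := by
  have e1 := ev_self p
  have e2 := ev_self r
  have e3 := ev_ne hpr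
  have e4 := ev_ne hpr.symm
  have ep : ∀ t, t ≠ p → t ≠ r → ev p t = 0 := fun t h _ => ev_ne h
  have er : ∀ t, t ≠ p → t ≠ r → ev r t = 0 := fun t _ h => ev_ne h
  have er' : ∀ t, t ≠ r → ev r t = 0 := fun t h => ev_ne h
  rw [PZ_split q ε hpr h1 a b i j c (a + ev p - ev r) b i j c
      (by intro t h h'; simp [ep t h h', er t h h']) (by simp) (by simp) (by simp) (by simp),
    PZ_split q ε hpr h1 a b i j c a (b + ev p - ev r) i j (c + ev r)
      (by simp) (by intro t h h'; simp [ep t h h', er t h h']) (by simp) (by simp)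
      (by intro t h; simp [er' t h]),
    PZ_split q ε hpr h1 a b i j c a b i (j - ev p + ev r) (c + ev r)
      (by simp) (by simp) (by simp) (by intro t h h'; simp [ep t h h', er t h h'])
      (by intro t h; simp [er' t h]),
    PZ_split q ε hpr h1 a b i j c a b (i - ev p + ev r) j c
      (by simp) (by simp) (by intro t h h'; simp [ep t h h', er t h h']) (by simp) (by simp)]
  simp only [Pi.add_apply, Pi.sub_apply, e1, e2, e3, e4, add_zero, sub_zero]
  have r1 := SZ_P1 h (ε r) (a r) (b r) (c r) (i r) (j r) (c (r + 1)) (ha r) (hb r) (hi r) (hj r)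
  have r2 := SZ_P2 h (ε r) (a r) (b r) (c r) (i r) (j r) (c (r + 1)) (ha r) (hb r) (hi r) (hj r)
  have p4 := SZ_P4 h (ε p) (a p) (b p) (c p) (i p) (j p) (c r) (ha p) (hb p) (hi p) (hj p)
  have p3 : qz q (a p + 1) * SZ q (ε p) (a p + 1) (b p) (c p) (i p) (j p) (c r)
        * SZ q (ε r) (a r - 1) (b r) (c r) (i r) (j r) (c (r + 1))
      = (qz q (j p) * SZ q (ε p) (a p) (b p) (c p) (i p) (j p - 1) (c r + 1)
          + q ^ c r * (qs q (ε p) ^ j p)⁻¹ * qz q (i p)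
            * SZ q (ε p) (a p) (b p) (c p) (i p - 1) (j p) (c r))
        * SZ q (ε r) (a r - 1) (b r) (c r) (i r) (j r) (c (r + 1)) := by
    by_cases hC : 0 ≤ c r
    · rw [SZ_P3 h (ε p) (a p) (b p) (c p) (i p) (j p) (c r) hC (ha p) (hb p) (hi p) (hj p)]
    · rw [SZ_out q (ε r) (a r - 1) (b r) (c r) _ _ _ (by omega)]
      simp
  have hq := h.1
  rw [zpow_add_one₀ hq] at r1 r2 p4
  generalize SZ q (ε p) (a p + 1) (b p) (c p) (i p) (j p) (c r) = A at *
  generalize SZ q (ε r) (a r - 1) (b r) (c r) (i r) (j r) (c (r + 1)) = A' at *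
  generalize SZ q (ε p) (a p) (b p + 1) (c p) (i p) (j p) (c r + 1) = B at *
  generalize SZ q (ε r) (a r) (b r - 1) (c r + 1) (i r) (j r) (c (r + 1)) = B' at *
  generalize SZ q (ε p) (a p) (b p) (c p) (i p) (j p - 1) (c r + 1) = G at *
  generalize SZ q (ε r) (a r) (b r) (c r + 1) (i r) (j r + 1) (c (r + 1)) = G' at *
  generalize SZ q (ε p) (a p) (b p) (c p) (i p - 1) (j p) (c r) = D at *
  generalize SZ q (ε r) (a r) (b r) (c r) (i r + 1) (j r) (c (r + 1)) = D' at *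
  generalize PR q ε p r a b i j c = X
  linear_combination X * p3 + X * qs q (ε r) ^ a r * B' * p4 - X * qz q (j p) * G * r1
    - X * (qs q (ε p) ^ j p)⁻¹ * qz q (i p) * D * r2

/-- The intertwining relation for a lowering generator at node `r`, for a single path. -/
lemma PZ_f {q : ℂ} (h : Gen q) {n : ℕ} [NeZero n] (ε : Fin n → Bool) {p r : Fin n} (hpr : p ≠ r)
    (h1 : p + 1 = r) (a b i j c : Fin n → ℤ)
    (ha : ∀ t, Okz (ε t) (a t)) (hb : ∀ t, Okz (ε t) (b t))
    (hi : ∀ t, Okz (ε t) (i t)) (hj : ∀ t, Okz (ε t) (j t)) :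
    qz q (b r + 1) * PZ q ε a (b - ev p + ev r) i j c
      + qz q (a r + 1) * qs q (ε p) ^ b p * (qs q (ε r) ^ b r)⁻¹
        * PZ q ε (a - ev p + ev r) b i j (c + ev r)
    = qz q (i r) * PZ q ε a b (i + ev p - ev r) j (c + ev r)
      + qs q (ε p) ^ i p * (qs q (ε r) ^ i r)⁻¹ * qz q (j r)
        * PZ q ε a b i (j + ev p - ev r) c := by
  have e1 := ev_self p
  have e2 := ev_self r
  have e3 := ev_ne hpr
  have e4 := ev_ne hpr.symm
  have ep : ∀ t, t ≠ p → t ≠ r → ev p t = 0 := fun t h _ => ev_ne h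
  have er : ∀ t, t ≠ p → t ≠ r → ev r t = 0 := fun t _ h => ev_ne h
  have er' : ∀ t, t ≠ r → ev r t = 0 := fun t h => ev_ne h
  rw [PZ_split q ε hpr h1 a b i j c (a - ev p + ev r) b i j (c + ev r)
      (by intro t h h'; simp [ep t h h', er t h h']) (by simp) (by simp) (by simp)
      (by intro t h; simp [er' t h]),
    PZ_split q ε hpr h1 a b i j c a (b - ev p + ev r) i j c
      (by simp) (by intro t h h'; simp [ep t h h', er t h h']) (by simp) (by simp) (by simp),
    PZ_split q ε hpr h1 a b i j c a b i (j + ev p - ev r) c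
      (by simp) (by simp) (by simp) (by intro t h h'; simp [ep t h h', er t h h'])
      (by simp),
    PZ_split q ε hpr h1 a b i j c a b (i + ev p - ev r) j (c + ev r)
      (by simp) (by simp) (by intro t h h'; simp [ep t h h', er t h h']) (by simp)
      (by intro t h; simp [er' t h])]
  simp only [Pi.add_apply, Pi.sub_apply, e1, e2, e3, e4, add_zero, sub_zero]
  have r1 := SZ_Q3 h (ε r) (a r) (b r) (c r) (i r) (j r) (c (r + 1)) (ha r) (hb r) (hi r) (hj r)
  have r2 := SZ_Q4 h (ε r) (a r) (b r) (c r) (i r) (j r) (c (r + 1)) (ha r) (hb r) (hi r) (hj r)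
  have p4 := SZ_Q2 h (ε p) (a p) (b p) (c p) (i p) (j p) (c r) (ha p) (hb p) (hi p) (hj p)
  have p3 : SZ q (ε p) (a p) (b p - 1) (c p) (i p) (j p) (c r)
        * SZ q (ε r) (a r) (b r + 1) (c r) (i r) (j r) (c (r + 1))
      = (SZ q (ε p) (a p) (b p) (c p) (i p + 1) (j p) (c r + 1)
          - q ^ (c r + 1) * qs q (ε p) ^ i p
            * SZ q (ε p) (a p) (b p) (c p) (i p) (j p + 1) (c r))
        * SZ q (ε r) (a r) (b r + 1) (c r) (i r) (j r) (c (r + 1)) := by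
    by_cases hC : 0 ≤ c r
    · rw [SZ_Q1 h (ε p) (a p) (b p) (c p) (i p) (j p) (c r) hC (ha p) (hb p) (hi p) (hj p)]
    · rw [SZ_out q (ε r) (a r) (b r + 1) (c r) _ _ _ (by omega)]
      simp
  generalize SZ q (ε p) (a p) (b p - 1) (c p) (i p) (j p) (c r) = A at *
  generalize SZ q (ε r) (a r) (b r + 1) (c r) (i r) (j r) (c (r + 1)) = A' at *
  generalize SZ q (ε p) (a p - 1) (b p) (c p) (i p) (j p) (c r + 1) = B at *
  generalize SZ q (ε r) (a r + 1) (b r) (c r + 1) (i r) (j r) (c (r + 1)) = B' at *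
  generalize SZ q (ε p) (a p) (b p) (c p) (i p + 1) (j p) (c r + 1) = G at *
  generalize SZ q (ε r) (a r) (b r) (c r + 1) (i r - 1) (j r) (c (r + 1)) = G' at *
  generalize SZ q (ε p) (a p) (b p) (c p) (i p) (j p + 1) (c r) = D at *
  generalize SZ q (ε r) (a r) (b r) (c r) (i r) (j r - 1) (c (r + 1)) = D' at *
  generalize PR q ε p r a b i j c = X
  linear_combination X * qz q (b r + 1) * p3 + X * qz q (a r + 1) * (qs q (ε r) ^ b r)⁻¹ * B' * p4
    - X * G * r1 - X * qs q (ε p) ^ i p * D * r2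

/-! ### Trace coefficients on integer labels -/

/-- The trace coefficient with integer labels and integer degree: the sum over all closed
integer paths starting at height `N`. -/
def TZ (q : ℂ) {n : ℕ} [NeZero n] (ε : Fin n → Bool) (a b i j : Fin n → ℤ) (N : ℤ) : ℂ :=
  ∑ᶠ c : Fin n → ℤ, if c 0 = N then PZ q ε a b i j c else 0

lemma PZ_ne {q : ℂ} {n : ℕ} [NeZero n] {ε : Fin n → Bool} {a b i j c : Fin n → ℤ}
    (h : PZ q ε a b i j c ≠ 0) (t : Fin n) :
    SZ q (ε t) (a t) (b t) (c t) (i t) (j t) (c (t + 1)) ≠ 0 :=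
  fun h0 => h (Finset.prod_eq_zero (Finset.mem_univ t) h0)

lemma fin_induct {n : ℕ} [NeZero n] {P : Fin n → Prop} (h0 : P 0) (hs : ∀ t, P t → P (t + 1))
    (t : Fin n) : P t := by
  obtain ⟨m, rfl⟩ : ∃ m, n = m + 1 := ⟨n - 1, by have := NeZero.ne n; omega⟩
  obtain ⟨k, hk⟩ := t
  induction k with
  | zero => exact h0
  | succ k ih =>
    have h1 := hs _ (ih (by omega))
    have h2 : (⟨k, by omega⟩ : Fin (m + 1)) + 1 = ⟨k + 1, hk⟩ := by
      apply Fin.ext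
      rw [Fin.val_add_one_of_lt (by simp [Fin.lt_def]; omega)]
    rwa [h2] at h1

/-- A contributing path is determined by its starting height. -/
lemma PZ_path {q : ℂ} {n : ℕ} [NeZero n] {ε : Fin n → Bool} {a b i j c c' : Fin n → ℤ}
    (h : PZ q ε a b i j c ≠ 0) (h' : PZ q ε a b i j c' ≠ 0) (h0 : c 0 = c' 0) : c = c' := by
  funext t
  refine fin_induct (P := fun t => c t = c' t) h0 (fun t ht => ?_) t
  have h1 := (SZ_weight (PZ_ne h t)).2
  have h2 := (SZ_weight (PZ_ne h' t)).2
  omega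

lemma TZ_support (q : ℂ) {n : ℕ} [NeZero n] (ε : Fin n → Bool) (a b i j : Fin n → ℤ) (N : ℤ) :
    (Function.support fun c : Fin n → ℤ => if c 0 = N then PZ q ε a b i j c else 0).Finite := by
  apply Set.Subsingleton.finite
  intro c hc c' hc'
  simp only [Function.mem_support, ne_eq, ite_eq_right_iff, Classical.not_imp] at hc hc'
  exact PZ_path hc.2 hc'.2 (hc.1.trans hc'.1.symm)

lemma TZ_ne {q : ℂ} {n : ℕ} [NeZero n] {ε : Fin n → Bool} {a b i j : Fin n → ℤ} {N : ℤ}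
    (h : TZ q ε a b i j N ≠ 0) : ∃ c : Fin n → ℤ, c 0 = N ∧ PZ q ε a b i j c ≠ 0 := by
  by_contra! hn
  apply h
  unfold TZ
  refine (finsum_congr fun c => ?_).trans finsum_zero
  split_ifs with hc
  · exact hn c hc
  · rfl

lemma TZ_neg (q : ℂ) {n : ℕ} [NeZero n] (ε : Fin n → Bool) (a b i j : Fin n → ℤ) {N : ℤ}
    (hN : N < 0) : TZ q ε a b i j N = 0 := by
  by_contra h
  obtain ⟨c, hc, hP⟩ := TZ_ne h
  have := (SZ_nonneg (PZ_ne hP 0)).2.2.1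
  omega

/-- The ice rule for the trace: weights are conserved position by position, and along the cycle
the total occupation of each tensor factor is conserved. -/
lemma TZ_weight {q : ℂ} {n : ℕ} [NeZero n] {ε : Fin n → Bool} {a b i j : Fin n → ℤ} {N : ℤ}
    (h : TZ q ε a b i j N ≠ 0) : (∀ t, a t + b t = i t + j t) ∧ ∑ t, b t = ∑ t, j t := by
  obtain ⟨c, -, hP⟩ := TZ_ne h
  refine ⟨fun t => (SZ_weight (PZ_ne hP t)).1, ?_⟩
  have h1 : ∑ t, (b t + c t) = ∑ t, (j t + c (t + 1)) :=
    Finset.sum_congr rfl fun t _ => (SZ_weight (PZ_ne hP t)).2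
  rw [Finset.sum_add_distrib, Finset.sum_add_distrib,
    Fintype.sum_equiv (Equiv.addRight (1 : Fin n)) (fun t => c (t + 1)) c (fun t => rfl)] at h1
  exact add_right_cancel h1

lemma TZ_nonneg {q : ℂ} {n : ℕ} [NeZero n] {ε : Fin n → Bool} {a b i j : Fin n → ℤ} {N : ℤ}
    (h : TZ q ε a b i j N ≠ 0) : ∀ t, Okz (ε t) (a t) ∧ Okz (ε t) (b t) := by
  obtain ⟨c, -, hP⟩ := TZ_ne h
  intro t
  have h1 := PZ_ne hP t
  have h2 := SZ_nonneg h1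
  refine ⟨⟨h2.1, fun he => ?_⟩, ⟨h2.2.1, fun he => ?_⟩⟩ <;>
  · by_contra hn
    rw [he] at h1
    exact h1 (SZ_L_out _ _ _ _ _ _ _ (by omega))

lemma TZ_ok {q : ℂ} {n : ℕ} [NeZero n] {ε : Fin n → Bool} {a b i j : Fin n → ℤ} {N : ℤ}
    (h : TZ q ε a b i j N ≠ 0) : ∀ t, Okz (ε t) (i t) ∧ Okz (ε t) (j t) := by
  obtain ⟨c, -, hP⟩ := TZ_ne h
  intro t
  have h1 := PZ_ne hP t
  have h2 := SZ_nonneg h1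
  refine ⟨⟨h2.2.2.2.1, fun he => ?_⟩, ⟨h2.2.2.2.2.1, fun he => ?_⟩⟩ <;>
  · by_contra hn
    rw [he] at h1
    exact h1 (SZ_L_out _ _ _ _ _ _ _ (by omega))

lemma trCoef_eq (q : ℂ) {n : ℕ} [NeZero n] (ε : Fin n → Bool) (a b i j : Fin n → ℕ) (k : ℕ) :
    trCoef q ε a b i j k = TZ q ε (fun t => a t) (fun t => b t) (fun t => i t) (fun t => j t) k := by
  unfold TZ trCoef
  have hinj : Function.Injective fun (c : Fin n → ℕ) (t : Fin n) => (c t : ℤ) := by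
    intro c c' h
    funext t
    exact Nat.cast_injective (R := ℤ) (congrFun h t)
  have h1 : ∀ c : Fin n → ℕ, (if c 0 = k then
      ∏ t : Fin n, Sg q (ε t) (a t) (b t) (c t) (i t) (j t) (c (t + 1)) else 0)
      = (fun c : Fin n → ℤ => if c 0 = k then PZ q ε (fun t => a t) (fun t => b t)
          (fun t => i t) (fun t => j t) c else 0) (fun t => (c t : ℤ)) := by
    intro c
    simp only [Nat.cast_inj, PZ, SZ_nat]
  rw [finsum_congr h1, ← finsum_mem_range (f := fun c : Fin n → ℤ => if c 0 = k then
    PZ q ε (fun t => a t) (fun t => b t) (fun t => i t) (fun t => j t) c else 0) hinj]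
  classical
  refine finsum_congr fun c => ?_
  by_cases hc : c ∈ Set.range fun (c : Fin n → ℕ) (t : Fin n) => (c t : ℤ)
  · rw [finsum_eq_if, if_pos hc]
  · rw [finsum_eq_if, if_neg hc]
    symm
    by_contra hn
    simp only [ite_eq_right_iff, Classical.not_imp] at hn
    refine hc ⟨fun t => (c t).toNat, funext fun t => ?_⟩
    exact Int.toNat_of_nonneg (SZ_nonneg (PZ_ne hn.2 t)).2.2.1

lemma TZ_shift (q : ℂ) {n : ℕ} [NeZero n] (ε : Fin n → Bool) (a b i j : Fin n → ℤ) (r : Fin n)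
    (N : ℤ) : ∑ᶠ c : Fin n → ℤ, (if c 0 = N then PZ q ε a b i j (c + ev r) else 0)
      = TZ q ε a b i j (N + ev r 0) := by
  unfold TZ
  rw [← finsum_comp_equiv (Equiv.addRight (ev r : Fin n → ℤ))
    (f := fun c => if c 0 = N + ev r 0 then PZ q ε a b i j c else 0)]
  refine finsum_congr fun c => ?_
  simp

lemma TZ_shift_support (q : ℂ) {n : ℕ} [NeZero n] (ε : Fin n → Bool) (a b i j : Fin n → ℤ)
    (r : Fin n) (N : ℤ) : (Function.support fun c : Fin n → ℤ =>
      if c 0 = N then PZ q ε a b i j (c + ev r) else 0).Finite := by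
  apply Set.Subsingleton.finite
  intro c hc c' hc'
  simp only [Function.mem_support, ne_eq, ite_eq_right_iff, Classical.not_imp] at hc hc'
  refine add_right_cancel (PZ_path hc.2 hc'.2 ?_)
  simp [hc.1, hc'.1]

lemma TZ_lin (q : ℂ) {n : ℕ} [NeZero n] (ε : Fin n → Bool) (r : Fin n) (N : ℤ)
    (a1 b1 i1 j1 a2 b2 i2 j2 a3 b3 i3 j3 a4 b4 i4 j4 : Fin n → ℤ) (x1 x2 x3 x4 : ℂ)
    (h : ∀ c, x1 * PZ q ε a1 b1 i1 j1 c + x2 * PZ q ε a2 b2 i2 j2 (c + ev r)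
      = x3 * PZ q ε a3 b3 i3 j3 (c + ev r) + x4 * PZ q ε a4 b4 i4 j4 c) :
    x1 * TZ q ε a1 b1 i1 j1 N + x2 * TZ q ε a2 b2 i2 j2 (N + ev r 0)
      = x3 * TZ q ε a3 b3 i3 j3 (N + ev r 0) + x4 * TZ q ε a4 b4 i4 j4 N := by
  rw [← TZ_shift, ← TZ_shift]
  unfold TZ
  have hs := fun (x : ℂ) (f : (Fin n → ℤ) → ℂ) (hf : f.support.Finite) =>
    (show (Function.support fun c => x * f c).Finite from
      hf.subset (fun c hc => right_ne_zero_of_mul hc))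
  rw [mul_finsum, mul_finsum, mul_finsum, mul_finsum,
    ← finsum_add_distrib (hs _ _ (TZ_support ..)) (hs _ _ (TZ_shift_support ..)),
    ← finsum_add_distrib (hs _ _ (TZ_shift_support ..)) (hs _ _ (TZ_support ..))]
  refine finsum_congr fun c => ?_
  split_ifs
  · exact h c
  · simp

/-! ### Generating series -/

/-- The series in `z` whose coefficients are the nonnegative-degree values of `f`. -/
def mZ (f : ℤ → ℂ) : K := mkS fun k => f k

/-- The power of `z` attached to the node `r`: `z` at the affine node, `1` elsewhere. -/
def zs {n : ℕ} (r : Fin n) : K := zK ^ (if (r : ℕ) = 0 then 1 else 0)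

lemma mZ_add (f g : ℤ → ℂ) : mZ (fun N => f N + g N) = mZ f + mZ g := by
  unfold mZ mkS
  rw [← map_add]
  congr 1

lemma mZ_mul (x : ℂ) (f : ℤ → ℂ) : mZ (fun N => x * f N) = cK x * mZ f := by
  unfold mZ mkS cK
  rw [← HahnSeries.ofPowerSeries_C, ← map_mul]
  congr 1
  ext k
  simp

lemma zK_eq : zK = HahnSeries.ofPowerSeries ℤ ℂ PowerSeries.X := by
  unfold zK mkS
  congr 1
  ext k
  simp [PowerSeries.coeff_X]

lemma zK_ne : zK ≠ 0 := by
  rw [zK_eq]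
  intro h
  rw [map_eq_zero_iff _ HahnSeries.ofPowerSeries_injective] at h
  exact PowerSeries.X_ne_zero h

lemma zs_ne {n : ℕ} (r : Fin n) : zs r ≠ 0 := pow_ne_zero _ zK_ne

lemma zs_inv {n : ℕ} (r : Fin n) : zK ^ (if (r : ℕ) = 0 then (-1 : ℤ) else 0) = (zs r)⁻¹ := by
  unfold zs
  split_ifs <;> simp

lemma zs_mZ {n : ℕ} [NeZero n] (r : Fin n) (f : ℤ → ℂ) (hf : ∀ N < 0, f N = 0) :
    zs r * mZ f = mZ (fun N => f (N - ev r 0)) := by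
  unfold zs
  by_cases hr : (r : ℕ) = 0
  · have h0 : (0 : Fin n) = r := by apply Fin.ext; simp [hr]
    rw [if_pos hr, pow_one, zK_eq]
    unfold mZ mkS
    rw [← map_mul]
    congr 1
    ext k
    cases k with
    | zero => simp [h0, ev_self, hf (-1)]
    | succ k => rw [PowerSeries.coeff_succ_X_mul]; simp [h0, ev_self]
  · have h0 : (0 : Fin n) ≠ r := by intro h; apply hr; rw [← h]; simp
    simp [hr, ev_ne h0]

/-- The trace matrix element as an element of the scalar field, with integer labels. -/
def TK (q : ℂ) {n : ℕ} [NeZero n] (ε : Fin n → Bool) (a b i j : Fin n → ℤ) : K :=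
  mZ (TZ q ε a b i j)

lemma TK_lin (q : ℂ) {n : ℕ} [NeZero n] (ε : Fin n → Bool) (r : Fin n)
    (a1 b1 i1 j1 a2 b2 i2 j2 a3 b3 i3 j3 a4 b4 i4 j4 : Fin n → ℤ) (x1 x2 x3 x4 : ℂ)
    (h : ∀ c, x1 * PZ q ε a1 b1 i1 j1 c + x2 * PZ q ε a2 b2 i2 j2 (c + ev r)
      = x3 * PZ q ε a3 b3 i3 j3 (c + ev r) + x4 * PZ q ε a4 b4 i4 j4 c) :
    zs r * cK x1 * TK q ε a1 b1 i1 j1 + cK x2 * TK q ε a2 b2 i2 j2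
      = cK x3 * TK q ε a3 b3 i3 j3 + zs r * cK x4 * TK q ε a4 b4 i4 j4 := by
  have e : ∀ (x : ℂ) (a b i j : Fin n → ℤ), zs r * cK x * TK q ε a b i j
      = mZ fun N => x * TZ q ε a b i j (N - ev r 0) := by
    intro x a b i j
    unfold TK
    rw [mul_assoc, mul_left_comm, zs_mZ _ _ (fun N hN => TZ_neg q ε a b i j hN), mZ_mul]
  have e' : ∀ (x : ℂ) (a b i j : Fin n → ℤ), cK x * TK q ε a b i j
      = mZ fun N => x * TZ q ε a b i j N := by
    intro x a b i j
    unfold TK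
    rw [mZ_mul]
  rw [e, e, e', e', ← mZ_add, ← mZ_add]
  congr 1
  funext N
  have := TZ_lin q ε r (N - ev r 0) a1 b1 i1 j1 a2 b2 i2 j2 a3 b3 i3 j3 a4 b4 i4 j4 x1 x2 x3 x4 h
  rwa [sub_add_cancel] at this

lemma TK_e {q : ℂ} (h : Gen q) {n : ℕ} [NeZero n] (ε : Fin n → Bool) {p r : Fin n} (hpr : p ≠ r)
    (h1 : p + 1 = r) (a b i j : Fin n → ℤ)
    (ha : ∀ t, Okz (ε t) (a t)) (hb : ∀ t, Okz (ε t) (b t))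
    (hi : ∀ t, Okz (ε t) (i t)) (hj : ∀ t, Okz (ε t) (j t)) :
    zs r * cK (qz q (a p + 1)) * TK q ε (a + ev p - ev r) b i j
      + cK ((qs q (ε p) ^ a p)⁻¹ * qs q (ε r) ^ a r * qz q (b p + 1))
        * TK q ε a (b + ev p - ev r) i j
    = cK (qz q (j p)) * TK q ε a b i (j - ev p + ev r)
      + zs r * cK (qz q (i p) * (qs q (ε p) ^ j p)⁻¹ * qs q (ε r) ^ j r)
        * TK q ε a b (i - ev p + ev r) j :=
  TK_lin q ε r _ _ _ _ _ _ _ _ _ _ _ _ _ _ _ _ _ _ _ _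
    fun c => PZ_e h ε hpr h1 a b i j c ha hb hi hj

lemma TK_f {q : ℂ} (h : Gen q) {n : ℕ} [NeZero n] (ε : Fin n → Bool) {p r : Fin n} (hpr : p ≠ r)
    (h1 : p + 1 = r) (a b i j : Fin n → ℤ)
    (ha : ∀ t, Okz (ε t) (a t)) (hb : ∀ t, Okz (ε t) (b t))
    (hi : ∀ t, Okz (ε t) (i t)) (hj : ∀ t, Okz (ε t) (j t)) :
    zs r * cK (qz q (b r + 1)) * TK q ε a (b - ev p + ev r) i j
      + cK (qz q (a r + 1) * qs q (ε p) ^ b p * (qs q (ε r) ^ b r)⁻¹)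
        * TK q ε (a - ev p + ev r) b i j
    = cK (qz q (i r)) * TK q ε a b (i + ev p - ev r) j
      + zs r * cK (qs q (ε p) ^ i p * (qs q (ε r) ^ i r)⁻¹ * qz q (j r))
        * TK q ε a b i (j + ev p - ev r) :=
  TK_lin q ε r _ _ _ _ _ _ _ _ _ _ _ _ _ _ _ _ _ _ _ _
    fun c => PZ_f h ε hpr h1 a b i j c ha hb hi hj

lemma TK_ne {q : ℂ} {n : ℕ} [NeZero n] {ε : Fin n → Bool} {a b i j : Fin n → ℤ}
    (h : TK q ε a b i j ≠ 0) : ∃ N, TZ q ε a b i j N ≠ 0 := by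
  by_contra! hn
  apply h
  unfold TK mZ mkS
  rw [show (PowerSeries.mk fun k : ℕ => TZ q ε a b i j k) = 0 by ext k; simp [hn], map_zero]

/-! ### Coordinates on the tensor square -/

/-- Integer vectors that label a basis ket. -/
def Adm {n : ℕ} (ε : Fin n → Bool) (a : Fin n → ℤ) : Prop := ∀ t, Okz (ε t) (a t)

/-- The integer vector of a basis label. -/
def zi {n : ℕ} {ε : Fin n → Bool} (m : Idx ε) : Fin n → ℤ := fun t => m.1 t

lemma zi_adm {n : ℕ} {ε : Fin n → Bool} (m : Idx ε) : Adm ε (zi m) :=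
  fun t => ⟨Int.natCast_nonneg _, fun h => by have := m.2 t h; simp only [zi]; omega⟩

/-- The basis label of an admissible integer vector. -/
def mkI {n : ℕ} {ε : Fin n → Bool} {a : Fin n → ℤ} (h : Adm ε a) : Idx ε :=
  ⟨fun t => (a t).toNat, fun t ht => by
    have := (h t).2 ht
    change (a t).toNat ≤ 1
    omega⟩

lemma zi_mkI {n : ℕ} {ε : Fin n → Bool} {a : Fin n → ℤ} (h : Adm ε a) : zi (mkI h) = a :=
  funext fun t => Int.toNat_of_nonneg (h t).1

lemma zi_inj {n : ℕ} {ε : Fin n → Bool} {m m' : Idx ε} (h : zi m = zi m') : m = m' :=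
  Subtype.ext (funext fun t => Nat.cast_injective (R := ℤ) (congrFun h t))

lemma mkI_eq {n : ℕ} {ε : Fin n → Bool} {a : Fin n → ℤ} (h : Adm ε a) (m : Idx ε) :
    mkI h = m ↔ zi m = a :=
  ⟨fun h' => by rw [← h', zi_mkI], fun h' => zi_inj (by rw [zi_mkI, h'])⟩

lemma adm_iff {n : ℕ} (ε : Fin n → Bool) (a : Fin n → ℤ) :
    ((∀ t, 0 ≤ a t) ∧ Ok ε (fun t => (a t).toNat)) ↔ Adm ε a := by
  constructor
  · rintro ⟨h1, h2⟩ t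
    exact ⟨h1 t, fun h => by have h3 : (a t).toNat ≤ 1 := h2 t h; have := h1 t; omega⟩
  · intro h
    refine ⟨fun t => (h t).1, fun t ht => ?_⟩
    have := (h t).2 ht
    change (a t).toNat ≤ 1
    omega

lemma kk_adm {n : ℕ} {ε : Fin n → Bool} {a b : Fin n → ℤ} (ha : Adm ε a) (hb : Adm ε b) :
    kk K ε a b = Finsupp.single (mkI ha, mkI hb) 1 := by
  unfold kk
  rw [dif_pos ⟨(adm_iff ε a).2 ha, (adm_iff ε b).2 hb⟩]
  rfl

lemma kk_not {n : ℕ} {ε : Fin n → Bool} {a b : Fin n → ℤ} (h : ¬(Adm ε a ∧ Adm ε b)) :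
    kk K ε a b = 0 := by
  unfold kk
  rw [dif_neg]
  rwa [adm_iff, adm_iff]

lemma ket_adm {n : ℕ} {ε : Fin n → Bool} {a : Fin n → ℤ} (ha : Adm ε a) :
    ket K ε a = Finsupp.single (mkI ha) 1 := by
  unfold ket
  rw [dif_pos ((adm_iff ε a).2 ha)]
  rfl

lemma ket_not {n : ℕ} {ε : Fin n → Bool} {a : Fin n → ℤ} (h : ¬Adm ε a) : ket K ε a = 0 := by
  unfold ket
  rw [dif_neg]
  rwa [adm_iff]

lemma single_kk {n : ℕ} {ε : Fin n → Bool} (p : Idx ε × Idx ε) :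
    (Finsupp.single p 1 : WW K ε) = kk K ε (zi p.1) (zi p.2) := by
  rw [kk_adm (zi_adm _) (zi_adm _), (mkI_eq _ _).2 rfl, (mkI_eq _ _).2 rfl]

lemma single_ket {n : ℕ} {ε : Fin n → Bool} (p : Idx ε) :
    (Finsupp.single p 1 : W K ε) = ket K ε (zi p) := by
  rw [ket_adm (zi_adm _), (mkI_eq _ _).2 rfl]

open Classical in
/-- The coordinate of a vector at a pair of integer vectors, zero off the basis. -/
def cx {n : ℕ} {ε : Fin n → Bool} (w : WW K ε) (a b : Fin n → ℤ) : K :=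
  if h : Adm ε a ∧ Adm ε b then w (mkI h.1, mkI h.2) else 0

lemma cx_add {n : ℕ} {ε : Fin n → Bool} (w w' : WW K ε) (a b : Fin n → ℤ) :
    cx (w + w') a b = cx w a b + cx w' a b := by
  unfold cx
  split_ifs <;> simp

lemma cx_smul {n : ℕ} {ε : Fin n → Bool} (x : K) (w : WW K ε) (a b : Fin n → ℤ) :
    cx (x • w) a b = x * cx w a b := by
  unfold cx
  split_ifs <;> simp

lemma cx_zero {n : ℕ} {ε : Fin n → Bool} (a b : Fin n → ℤ) : cx (0 : WW K ε) a b = 0 := by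
  unfold cx
  split_ifs <;> simp

lemma cx_sum {n : ℕ} {ε : Fin n → Bool} {α : Type} (s : Finset α) (f : α → WW K ε)
    (a b : Fin n → ℤ) : cx (∑ x ∈ s, f x) a b = ∑ x ∈ s, cx (f x) a b := by
  classical
  induction s using Finset.induction_on with
  | empty => simp [cx_zero]
  | insert x s hx ih => rw [Finset.sum_insert hx, Finset.sum_insert hx, cx_add, ih]

lemma cx_out {n : ℕ} {ε : Fin n → Bool} (w : WW K ε) {a b : Fin n → ℤ}
    (h : ¬(Adm ε a ∧ Adm ε b)) : cx w a b = 0 := by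
  unfold cx
  rw [dif_neg h]

lemma cx_zi {n : ℕ} {ε : Fin n → Bool} (w : WW K ε) (p : Idx ε × Idx ε) :
    cx w (zi p.1) (zi p.2) = w p := by
  unfold cx
  rw [dif_pos ⟨zi_adm _, zi_adm _⟩, (mkI_eq _ _).2 rfl, (mkI_eq _ _).2 rfl]

lemma cx_ext {n : ℕ} {ε : Fin n → Bool} {w w' : WW K ε}
    (h : ∀ a b, Adm ε a → Adm ε b → cx w a b = cx w' a b) : w = w' := by
  ext1 p
  rw [← cx_zi, ← cx_zi, h _ _ (zi_adm _) (zi_adm _)]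

open Classical in
lemma cx_kk {n : ℕ} {ε : Fin n → Bool} (a b a' b' : Fin n → ℤ) :
    cx (kk K ε a b) a' b' = if Adm ε a' ∧ Adm ε b' ∧ a = a' ∧ b = b' then 1 else 0 := by
  by_cases h' : Adm ε a' ∧ Adm ε b'
  · by_cases h : Adm ε a ∧ Adm ε b
    · rw [kk_adm h.1 h.2]
      unfold cx
      rw [dif_pos h', Finsupp.single_apply]
      simp only [Prod.mk.injEq, mkI_eq, zi_mkI, h'.1, h'.2, true_and]
      simp only [eq_comm]
    · rw [kk_not h, cx_zero, if_neg]
      rintro ⟨h1, h2, rfl, rfl⟩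
      exact h ⟨h1, h2⟩
  · rw [cx_out _ h', if_neg]
    rintro ⟨h1, h2, -⟩
    exact h' ⟨h1, h2⟩

lemma mkEnd_single {α : Type} (v : α → (α →₀ K)) (m : α) :
    mkEnd K v (Finsupp.single m 1) = v m := by
  simp [mkEnd]

lemma tens_ket {n : ℕ} {ε : Fin n → Bool} (x y : K) (a b : Fin n → ℤ) :
    tens K (x • ket K ε a) (y • ket K ε b) = (x * y) • kk K ε a b := by
  by_cases ha : Adm ε a
  swap
  · rw [ket_not ha, kk_not (fun h => ha h.1)]
    simp [tens]
  by_cases hb : Adm ε b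
  swap
  · rw [ket_not hb, kk_not (fun h => hb h.2)]
    simp [tens]
  rw [ket_adm ha, ket_adm hb, kk_adm ha hb]
  simp [tens, Finsupp.sum_single_index]

/-- The operator `A` is the weighted shift that sends the ket of `m` to `C m` times the ket of
`m + δ`. -/
def Shift {n : ℕ} {ε : Fin n → Bool} (A : W K ε →ₗ[K] W K ε) (C : (Fin n → ℤ) → K)
    (δ : Fin n → ℤ) : Prop :=
  ∀ m, A (Finsupp.single m 1) = C (zi m) • ket K ε (zi m + δ)

/-- The image of a ket under a product of two weighted shift operators. -/
lemma opT_kk {n : ℕ} {ε : Fin n → Bool} {A B : W K ε →ₗ[K] W K ε} {CA CB : (Fin n → ℤ) → K}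
    {δ η : Fin n → ℤ} (hA : Shift A CA δ)
    (hB : Shift B CB η) (p : Idx ε × Idx ε) :
    opT K A B (Finsupp.single p 1)
      = (CA (zi p.1) * CB (zi p.2)) • kk K ε (zi p.1 + δ) (zi p.2 + η) := by
  unfold opT
  rw [mkEnd_single, hA, hB, tens_ket]

/-- The coordinates of the image of a vector under a product of two weighted shift operators. -/
lemma opT_cx {n : ℕ} {ε : Fin n → Bool} {A B : W K ε →ₗ[K] W K ε} {CA CB : (Fin n → ℤ) → K}
    {δ η : Fin n → ℤ} (hA : Shift A CA δ)
    (hB : Shift B CB η) (w : WW K ε)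
    {a b : Fin n → ℤ} (ha : Adm ε a) (hb : Adm ε b) :
    cx (opT K A B w) a b = CA (a - δ) * CB (b - η) * cx w (a - δ) (b - η) := by
  induction w using Finsupp.induction_linear with
  | zero => simp [cx_zero]
  | add f g hf hg => rw [map_add, cx_add, hf, hg, cx_add]; ring
  | single p x =>
    rw [show (Finsupp.single p x : WW K ε) = x • Finsupp.single p 1 by simp, map_smul,
      opT_kk hA hB, single_kk, cx_smul, cx_smul, cx_smul, cx_kk, cx_kk]
    by_cases h : zi p.1 + δ = a ∧ zi p.2 + η = b
    · have h1 : zi p.1 = a - δ := by rw [← h.1]; simp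
      have h2 : zi p.2 = b - η := by rw [← h.2]; simp
      rw [if_pos ⟨ha, hb, h.1, h.2⟩, if_pos ⟨h1 ▸ zi_adm _, h2 ▸ zi_adm _, h1, h2⟩, h1, h2]
      ring
    · rw [if_neg (fun h' => h h'.2.2), if_neg]
      · simp
      · rintro ⟨-, -, h1, h2⟩
        exact h ⟨by rw [h1]; simp, by rw [h2]; simp⟩

/-! ### The generators as weighted shift operators -/

lemma pred_val {n : ℕ} [NeZero n] {p r : Fin n} (hpr : p ≠ r) (h1 : p + 1 = r) :
    ((r : ℕ) + n - 1) % n = p := by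
  have hp := p.2
  have hr := r.2
  have h2 : ((p : ℕ) + 1) % n = r := by rw [← h1, Fin.val_add, Fin.val_one']; simp
  by_cases h : (p : ℕ) + 1 = n
  · rw [h, Nat.mod_self] at h2
    rw [← h2, zero_add, Nat.mod_eq_of_lt (by omega)]
    omega
  · rw [Nat.mod_eq_of_lt (by omega)] at h2
    rw [← h2, show (p : ℕ) + 1 + n - 1 = p + n by omega, Nat.add_mod_right, Nat.mod_eq_of_lt hp]

lemma av_val {n : ℕ} (m : Fin n → ℕ) (p : Fin n) : av m p = m p := by simp [av]

lemma dlt_val {n : ℕ} (p : Fin n) : dlt (n := n) p = ev p := by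
  funext t
  simp [dlt, ev, Fin.ext_iff]

lemma qc_val (q : ℂ) {n : ℕ} (ε : Fin n → Bool) (p : Fin n) : qc q ε p = qs q (ε p) := by
  simp [qc, qs]

/-- The eigenvalue of the Cartan generator at the node joining the positions `p` and `r`. -/
def kv (q : ℂ) {n : ℕ} (ε : Fin n → Bool) (p r : Fin n) (a : Fin n → ℤ) : ℂ :=
  (qs q (ε p) ^ a p)⁻¹ * qs q (ε r) ^ a r

lemma eA_single (q : ℂ) {n : ℕ} [NeZero n] (ε : Fin n → Bool) {p r : Fin n} (hpr : p ≠ r)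
    (h1 : p + 1 = r) (x : K) : Shift (eA q cK ε x r)
      (fun a => x ^ (if (r : ℕ) = 0 then 1 else 0) * cK (qz q (a p))) (ev r - ev p) := by
  intro m
  unfold eA
  rw [mkEnd_single, pred_val hpr h1, av_val, qnum_eq, dlt_val, dlt_val]
  congr 2
  funext t
  simp only [Pi.add_apply, Pi.sub_apply, zi]
  ring

lemma fA_single (q : ℂ) {n : ℕ} [NeZero n] (ε : Fin n → Bool) {p r : Fin n} (hpr : p ≠ r)
    (h1 : p + 1 = r) (x : K) : Shift (fA q cK ε x r)
      (fun a => x ^ (if (r : ℕ) = 0 then (-1 : ℤ) else 0) * cK (qz q (a r))) (ev p - ev r) := by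
  intro m
  unfold fA
  rw [mkEnd_single, pred_val hpr h1, av_val, qnum_eq, dlt_val, dlt_val]
  congr 2
  funext t
  simp only [Pi.add_apply, Pi.sub_apply, zi]
  ring

lemma kA_single (q : ℂ) {n : ℕ} [NeZero n] (ε : Fin n → Bool) {p r : Fin n} (hpr : p ≠ r)
    (h1 : p + 1 = r) (s : ℤ) : Shift (kA q cK ε s r) (fun a => cK (kv q ε p r a ^ s)) 0 := by
  intro m
  unfold kA
  rw [mkEnd_single, pred_val hpr h1, av_val, av_val, qc_val, qc_val, single_ket, add_zero, zpow_neg]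
  rfl

lemma id_single {n : ℕ} {ε : Fin n → Bool} :
    Shift (LinearMap.id : W K ε →ₗ[K] W K ε) (fun _ => 1) 0 := by
  intro m
  rw [LinearMap.id_apply, single_ket, add_zero, one_smul]

/-! ### The trace operator intertwines the two coproducts -/

/-- The coordinates of the image of a ket under the trace operator; both sides vanish when a
label is not admissible. -/
lemma cx_S0 (q : ℂ) {n : ℕ} [NeZero n] (ε : Fin n → Bool) (i j a b : Fin n → ℤ) :
    cx (S0tr q ε (kk K ε i j)) a b = TK q ε a b i j := by
  classical
  by_cases hij : Adm ε i ∧ Adm ε j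
  swap
  · rw [kk_not hij, map_zero, cx_zero]
    by_contra h
    obtain ⟨N, hN⟩ := TK_ne (Ne.symm h)
    exact hij ⟨fun t => (TZ_ok hN t).1, fun t => (TZ_ok hN t).2⟩
  by_cases hab : Adm ε a ∧ Adm ε b
  swap
  · rw [cx_out _ hab]
    by_contra h
    obtain ⟨N, hN⟩ := TK_ne (Ne.symm h)
    exact hab ⟨fun t => (TZ_nonneg hN t).1, fun t => (TZ_nonneg hN t).2⟩
  rw [kk_adm hij.1 hij.2]
  unfold S0tr
  rw [mkEnd_single, cx_sum]
  by_cases hw : ∀ t, a t + b t = i t + j t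
  swap
  · rw [Finset.sum_eq_zero]
    · by_contra h
      obtain ⟨N, hN⟩ := TK_ne (Ne.symm h)
      exact hw (TZ_weight hN).1
    · intro a' _
      rw [cx_smul, cx_kk, if_neg, mul_zero]
      rintro ⟨-, -, h1, h2⟩
      apply hw
      intro t
      have h3 : (a' t : ℤ) = a t := congrFun h1 t
      have h4 : (((i t).toNat : ℕ) : ℤ) + (((j t).toNat : ℕ) : ℤ) - (a' t : ℤ) = b t :=
        congrFun h2 t
      have h5 := (hij.1 t).1
      have h6 := (hij.2 t).1
      omega
  have ha := fun t => (hab.1 t).1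
  have hb := fun t => (hab.2 t).1
  have hi := fun t => (hij.1 t).1
  have hj := fun t => (hij.2 t).1
  rw [Finset.sum_eq_single (fun t => (a t).toNat)]
  · rw [cx_smul, cx_kk, if_pos, mul_one]
    · unfold TK mZ
      congr 1
      funext k
      rw [trCoef_eq]
      congr 1
      all_goals
        funext t
        have h1 := hw t
        have h2 := ha t
        have h3 := hb t
        have h4 := hi t
        have h5 := hj t
        first | omega | (simp only [mkI]; omega)
    · refine ⟨hab.1, hab.2, funext fun t => Int.toNat_of_nonneg (ha t), funext fun t => ?_⟩
      have h1 := hw t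
      have h2 := ha t
      have h4 := hi t
      have h5 := hj t
      change (((i t).toNat : ℕ) : ℤ) + (((j t).toNat : ℕ) : ℤ) - (((a t).toNat : ℕ) : ℤ) = b t
      omega
  · intro a' _ hne
    rw [cx_smul, cx_kk, if_neg, mul_zero]
    rintro ⟨-, -, h1, -⟩
    apply hne
    funext t
    have h3 : (a' t : ℤ) = a t := congrFun h1 t
    omega
  · intro hn
    exfalso
    apply hn
    simp only [Fintype.mem_piFinset, Finset.mem_range, mkI]
    intro t
    have h1 := hw t
    have h2 := ha t
    have h3 := hb t
    have h4 := hi t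
    have h5 := hj t
    omega

/-! ### Intertwining of the coproducts -/

lemma lin_ext {n : ℕ} {ε : Fin n → Bool} {A B : WW K ε →ₗ[K] WW K ε}
    (h : ∀ p, A (Finsupp.single p 1) = B (Finsupp.single p 1)) (v : WW K ε) : A v = B v := by
  induction v using Finsupp.induction_linear with
  | zero => rw [map_zero, map_zero]
  | add f g hf hg => rw [map_add, map_add, hf, hg]
  | single p x =>
    rw [show (Finsupp.single p x : WW K ε) = x • Finsupp.single p 1 by simp, map_smul, map_smul, h]

lemma dE'_cx (q : ℂ) {n : ℕ} [NeZero n] (ε : Fin n → Bool) {p r : Fin n} (hpr : p ≠ r)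
    (h1 : p + 1 = r) (w : WW K ε) {a b : Fin n → ℤ} (ha : Adm ε a) (hb : Adm ε b) :
    cx (dE' q cK ε zK 1 r w) a b
      = zs r * cK (qz q (a p + 1)) * cx w (a + ev p - ev r) b
        + cK (kv q ε p r a) * cK (qz q (b p + 1)) * cx w a (b + ev p - ev r) := by
  unfold dE'
  rw [LinearMap.add_apply, cx_add, opT_cx (eA_single q ε hpr h1 zK) id_single _ ha hb,
    opT_cx (kA_single q ε hpr h1 1) (eA_single q ε hpr h1 1) _ ha hb]
  simp only [sub_zero, one_pow, one_mul, mul_one, zpow_one, Pi.sub_apply, ev_self, ev_ne hpr,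
    show a - (ev r - ev p) = a + ev p - ev r by abel,
    show b - (ev r - ev p) = b + ev p - ev r by abel]
  rfl

lemma dE_kk (q : ℂ) {n : ℕ} [NeZero n] (ε : Fin n → Bool) {p r : Fin n} (hpr : p ≠ r)
    (h1 : p + 1 = r) (m : Idx ε × Idx ε) :
    dE q cK ε zK 1 r (Finsupp.single m 1)
      = cK (qz q (zi m.2 p)) • kk K ε (zi m.1) (zi m.2 - ev p + ev r)
        + (zs r * cK (qz q (zi m.1 p)) * cK (kv q ε p r (zi m.2)))
          • kk K ε (zi m.1 - ev p + ev r) (zi m.2) := by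
  unfold dE
  rw [LinearMap.add_apply, opT_kk id_single (eA_single q ε hpr h1 1),
    opT_kk (eA_single q ε hpr h1 zK) (kA_single q ε hpr h1 1)]
  simp only [add_zero, one_pow, one_mul, zpow_one,
    show zi m.1 + (ev r - ev p) = zi m.1 - ev p + ev r by abel,
    show zi m.2 + (ev r - ev p) = zi m.2 - ev p + ev r by abel]
  rfl

lemma dF'_cx (q : ℂ) {n : ℕ} [NeZero n] (ε : Fin n → Bool) {p r : Fin n} (hpr : p ≠ r)
    (h1 : p + 1 = r) (w : WW K ε) {a b : Fin n → ℤ} (ha : Adm ε a) (hb : Adm ε b) :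
    cx (dF' q cK ε zK 1 r w) a b
      = cK (qz q (b r + 1)) * cx w a (b - ev p + ev r)
        + (zs r)⁻¹ * cK (qz q (a r + 1)) * cK (kv q ε p r b)⁻¹ * cx w (a - ev p + ev r) b := by
  unfold dF'
  rw [LinearMap.add_apply, cx_add, opT_cx (fA_single q ε hpr h1 zK) (kA_single q ε hpr h1 (-1)) _ ha hb,
    opT_cx id_single (fA_single q ε hpr h1 1) _ ha hb]
  simp only [sub_zero, one_zpow, one_mul, mul_one, zpow_neg_one, zs_inv, Pi.sub_apply, ev_self,
    ev_ne hpr.symm, show a - (ev p - ev r) = a - ev p + ev r by abel,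
    show b - (ev p - ev r) = b - ev p + ev r by abel, zero_sub, sub_neg_eq_add]

lemma dF_kk (q : ℂ) {n : ℕ} [NeZero n] (ε : Fin n → Bool) {p r : Fin n} (hpr : p ≠ r)
    (h1 : p + 1 = r) (m : Idx ε × Idx ε) :
    dF q cK ε zK 1 r (Finsupp.single m 1)
      = ((zs r)⁻¹ * cK (qz q (zi m.1 r))) • kk K ε (zi m.1 + ev p - ev r) (zi m.2)
        + (cK (kv q ε p r (zi m.1))⁻¹ * cK (qz q (zi m.2 r)))
          • kk K ε (zi m.1) (zi m.2 + ev p - ev r) := by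
  unfold dF
  rw [LinearMap.add_apply, opT_kk (fA_single q ε hpr h1 zK) id_single,
    opT_kk (kA_single q ε hpr h1 (-1)) (fA_single q ε hpr h1 1)]
  simp only [add_zero, one_zpow, one_mul, mul_one, zpow_neg_one, zs_inv,
    show zi m.1 + (ev p - ev r) = zi m.1 + ev p - ev r by abel,
    show zi m.2 + (ev p - ev r) = zi m.2 + ev p - ev r by abel]

lemma dK_cx (q : ℂ) {n : ℕ} [NeZero n] (ε : Fin n → Bool) {p r : Fin n} (hpr : p ≠ r)
    (h1 : p + 1 = r) (s : ℤ) (w : WW K ε) {a b : Fin n → ℤ} (ha : Adm ε a) (hb : Adm ε b) :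
    cx (dK q cK ε s r w) a b = cK (kv q ε p r a ^ s) * cK (kv q ε p r b ^ s) * cx w a b := by
  unfold dK
  rw [opT_cx (kA_single q ε hpr h1 s) (kA_single q ε hpr h1 s) _ ha hb]
  simp only [sub_zero]

lemma dK_kk (q : ℂ) {n : ℕ} [NeZero n] (ε : Fin n → Bool) {p r : Fin n} (hpr : p ≠ r)
    (h1 : p + 1 = r) (s : ℤ) (m : Idx ε × Idx ε) :
    dK q cK ε s r (Finsupp.single m 1)
      = (cK (kv q ε p r (zi m.1) ^ s) * cK (kv q ε p r (zi m.2) ^ s))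
        • kk K ε (zi m.1) (zi m.2) := by
  unfold dK
  rw [opT_kk (kA_single q ε hpr h1 s) (kA_single q ε hpr h1 s)]
  simp only [add_zero]

lemma S0_e {q : ℂ} (h : Gen q) {n : ℕ} [NeZero n] (ε : Fin n → Bool) {p r : Fin n} (hpr : p ≠ r)
    (h1 : p + 1 = r) (v : WW K ε) :
    dE' q cK ε zK 1 r (S0tr q ε v) = S0tr q ε (dE q cK ε zK 1 r v) := by
  refine lin_ext (A := dE' q cK ε zK 1 r ∘ₗ S0tr q ε) (B := S0tr q ε ∘ₗ dE q cK ε zK 1 r)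
    (fun m => ?_) v
  refine cx_ext fun a b ha hb => ?_
  rw [LinearMap.comp_apply, LinearMap.comp_apply, dE_kk q ε hpr h1, dE'_cx q ε hpr h1 _ ha hb,
    map_add, map_smul, map_smul, cx_add, cx_smul, cx_smul, single_kk, cx_S0, cx_S0, cx_S0, cx_S0]
  have key := TK_e h ε hpr h1 a b (zi m.1) (zi m.2) ha hb (zi_adm _) (zi_adm _)
  simp only [kv, map_mul] at key ⊢
  linear_combination key

lemma S0_f {q : ℂ} (h : Gen q) {n : ℕ} [NeZero n] (ε : Fin n → Bool) {p r : Fin n} (hpr : p ≠ r)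
    (h1 : p + 1 = r) (v : WW K ε) :
    dF' q cK ε zK 1 r (S0tr q ε v) = S0tr q ε (dF q cK ε zK 1 r v) := by
  refine lin_ext (A := dF' q cK ε zK 1 r ∘ₗ S0tr q ε) (B := S0tr q ε ∘ₗ dF q cK ε zK 1 r)
    (fun m => ?_) v
  refine cx_ext fun a b ha hb => ?_
  rw [LinearMap.comp_apply, LinearMap.comp_apply, dF_kk q ε hpr h1, dF'_cx q ε hpr h1 _ ha hb,
    map_add, map_smul, map_smul, cx_add, cx_smul, cx_smul, single_kk, cx_S0, cx_S0, cx_S0, cx_S0]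
  have key := TK_f h ε hpr h1 a b (zi m.1) (zi m.2) ha hb (zi_adm _) (zi_adm _)
  simp only [kv, map_mul, mul_inv, inv_inv] at key ⊢
  have hz := zs_ne r
  have hz1 : zs r * (zs r)⁻¹ = 1 := mul_inv_cancel₀ hz
  refine mul_left_cancel₀ hz ?_
  generalize (zs r)⁻¹ = y at hz1 ⊢
  generalize cK (qz q (a r + 1)) = x1 at key ⊢
  generalize cK (qz q (zi m.1 r)) = x2 at key ⊢
  generalize TK q ε (a - ev p + ev r) b (zi m.1) (zi m.2) = x3 at key ⊢
  generalize TK q ε a b (zi m.1 + ev p - ev r) (zi m.2) = x4 at key ⊢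
  generalize cK (qs q (ε p) ^ b p) = x5 at key ⊢
  generalize cK (qs q (ε r) ^ b r)⁻¹ = x6 at key ⊢
  linear_combination key + (x1 * x5 * x6 * x3 - x2 * x4) * hz1

lemma S0_k {q : ℂ} (h : Gen q) {n : ℕ} [NeZero n] (ε : Fin n → Bool) {p r : Fin n} (hpr : p ≠ r)
    (h1 : p + 1 = r) (s : ℤ) (v : WW K ε) :
    dK q cK ε s r (S0tr q ε v) = S0tr q ε (dK q cK ε s r v) := by
  refine lin_ext (A := dK q cK ε s r ∘ₗ S0tr q ε) (B := S0tr q ε ∘ₗ dK q cK ε s r)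
    (fun m => ?_) v
  refine cx_ext fun a b ha hb => ?_
  rw [LinearMap.comp_apply, LinearMap.comp_apply, dK_kk q ε hpr h1, dK_cx q ε hpr h1 _ _ ha hb,
    map_smul, cx_smul, single_kk, cx_S0]
  by_cases hT : TK q ε a b (zi m.1) (zi m.2) = 0
  · rw [hT, mul_zero, mul_zero]
  obtain ⟨N, hN⟩ := TK_ne hT
  have hw := (TZ_weight hN).1
  congr 1
  rw [← map_mul, ← map_mul, ← mul_zpow, ← mul_zpow]
  congr 2
  have e : ∀ x y : Fin n → ℤ, kv q ε p r x * kv q ε p r y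
      = (qs q (ε p) ^ (x p + y p))⁻¹ * qs q (ε r) ^ (x r + y r) := by
    intro x y
    unfold kv
    rw [zpow_add₀ (qs_ne h _), zpow_add₀ (qs_ne h _), mul_inv]
    ring
  rw [e, e, hw p, hw r]

/-! ### Existence of the intertwiner -/

lemma RI_diag {q : ℂ} (h : Gen q) (i j : ℕ) : RI q i j 0 i j 0 ≠ 0 := by
  induction j with
  | zero =>
    induction i with
    | zero =>
      have := RI_zero h 0 0 0 0 0
      simp only [Nat.cast_zero] at this ⊢
      rw [this]
      simp [gZ, qbinom, poch]
    | succ i ih =>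
      have h1 := RI_succ h i 0 0 (i + 1) 0 0
      rw [show RI q i 0 0 (i + 1) (0 - 1) (0 + 1) = 0 from SZ_out _ _ _ _ _ _ _ _ (by omega)] at h1
      simp only [zpow_zero, one_mul, mul_zero, add_zero, add_sub_cancel_right] at h1
      push_cast at ih ⊢
      rwa [h1]
  | succ j ih =>
    have h1 := RI_P1 h i j 0 i (j + 1) 0 (by omega)
    rw [show RI q i j 0 (i - 1) (j + 1) (0 - 1) = 0 from SZ_out _ _ _ _ _ _ _ _ (by omega)] at h1
    rw [add_sub_cancel_right] at h1
    push_cast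
    rw [h1, zero_sub]
    exact neg_ne_zero.2 (mul_ne_zero (mul_ne_zero (mul_ne_zero (zpow_ne_zero _ h.1)
      (zpow_ne_zero _ h.1)) h.1) ih)

lemma SZ_diag {q : ℂ} (h : Gen q) (e : Bool) (a b : ℤ) (ha : Okz e a) (hb : Okz e b) :
    SZ q e a b 0 a b 0 ≠ 0 := by
  cases e with
  | false =>
    have h1 := ha.1
    have h2 := hb.1
    lift a to ℕ using h1
    lift b to ℕ using h2
    exact RI_diag h a b
  | true =>
    have h1 := ha.2 rfl
    have h2 := hb.2 rfl
    have h3 := ha.1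
    have h4 := hb.1
    rw [SZ_L _ _ _ _ _ _ _ rfl rfl ⟨h3, h1⟩ ⟨h4, h2⟩ ⟨h3, h1⟩ ⟨h4, h2⟩]
    have hq := h.1
    have e1 : a = 0 ∨ a = 1 := by omega
    have e2 : b = 0 ∨ b = 1 := by omega
    rcases e1 with rfl | rfl <;> rcases e2 with rfl | rfl <;> simp [hq]

/-- The constant term of a diagonal matrix element comes from the zero path alone. -/
lemma TK_diag {q : ℂ} (h : Gen q) {n : ℕ} [NeZero n] (ε : Fin n → Bool) {i j : Fin n → ℤ}
    (hi : Adm ε i) (hj : Adm ε j) : TK q ε i j i j ≠ 0 := by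
  have key : TZ q ε i j i j 0 ≠ 0 := by
    unfold TZ
    rw [finsum_eq_single _ 0]
    · rw [if_pos (show (0 : Fin n → ℤ) 0 = 0 from rfl)]
      exact Finset.prod_ne_zero_iff.2 fun t _ => SZ_diag h _ _ _ (hi t) (hj t)
    · intro c hc
      rw [ite_eq_right_iff]
      intro h0
      by_contra hne
      apply hc
      have hs : ∀ t, c t = c (t + 1) := fun t => by
        have := (SZ_weight (PZ_ne hne t)).2
        omega
      exact funext fun t => fin_induct (P := fun t => c t = 0) h0 (fun t ht => (hs t).symm.trans ht) t
  intro h0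
  apply key
  unfold TK mZ mkS at h0
  rw [map_eq_zero_iff _ HahnSeries.ofPowerSeries_injective] at h0
  have := congrArg (PowerSeries.coeff 0) h0
  simpa using this

lemma mem_WW {n : ℕ} {ε : Fin n → Bool} {l m : ℕ} {w : WW K ε} :
    w ∈ WWlm K ε l m ↔ ∀ p, w p ≠ 0 → ∑ t, p.1.1 t = l ∧ ∑ t, p.2.1 t = m := by
  constructor
  · intro hw
    unfold WWlm at hw
    induction hw using Submodule.span_induction with
    | mem x hx =>
      obtain ⟨p', h1, h2, rfl⟩ := hx
      intro p hp
      have : p' = p := by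
        by_contra hne
        exact hp (Finsupp.single_eq_of_ne (Ne.symm hne))
      exact this ▸ ⟨h1, h2⟩
    | zero => exact fun p hp => absurd rfl hp
    | add x y _ _ hx hy =>
      intro p hp
      by_cases h : x p = 0
      · exact hy p (fun h' => hp (by rw [Finsupp.add_apply, h, h', add_zero]))
      · exact hx p h
    | smul c x _ hx =>
      intro p hp
      exact hx p (fun h' => hp (by rw [Finsupp.smul_apply, h', smul_zero]))
  · intro h
    rw [← Finsupp.sum_single w]
    refine Submodule.sum_mem _ fun p hp => ?_
    rw [show (Finsupp.single p (w p) : WW K ε) = w p • Finsupp.single p 1 by simp]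
    have := h p (Finsupp.mem_support_iff.1 hp)
    exact Submodule.smul_mem _ _ (Submodule.subset_span ⟨p, this.1, this.2, rfl⟩)

lemma S0_mem {q : ℂ} {n : ℕ} [NeZero n] {ε : Fin n → Bool} {l m : ℕ} {v : WW K ε}
    (hv : v ∈ WWlm K ε l m) : S0tr q ε v ∈ WWlm K ε l m := by
  suffices h : WWlm K ε l m ≤ (WWlm K ε l m).comap (S0tr q ε) from h hv
  refine Submodule.span_le.2 ?_
  rintro _ ⟨p, h1, h2, rfl⟩
  change S0tr q ε (Finsupp.single p 1) ∈ WWlm K ε l m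
  rw [mem_WW]
  intro p' hp'
  rw [← cx_zi, single_kk, cx_S0] at hp'
  obtain ⟨N, hN⟩ := TK_ne hp'
  obtain ⟨h3, h4⟩ := TZ_weight hN
  have h5 : ∑ t, (zi p'.1 t + zi p'.2 t) = ∑ t, (zi p.1 t + zi p.2 t) :=
    Finset.sum_congr rfl fun t _ => h3 t
  rw [Finset.sum_add_distrib, Finset.sum_add_distrib] at h5
  simp only [zi] at h4 h5
  norm_cast at h4 h5
  omega

/-- The reference vector in integer form. -/
def rz (n κ l : ℕ) : Fin n → ℤ := fun t => (refAN n κ l t : ℤ)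

lemma sum_ref {n κ l : ℕ} (hn : 2 ≤ n) (hl : κ = n → l ≤ n) : ∑ t, refAN n κ l t = l := by
  unfold refAN
  by_cases h : κ = n
  · simp only [if_pos h]
    rw [Fin.sum_univ_eq_sum_range (fun t => if n - l ≤ t then 1 else 0) n, ← Finset.sum_filter,
      show (Finset.range n).filter (fun t => n - l ≤ t) = Finset.Ico (n - l) n by ext; simp; omega]
    have := hl h
    simp
    omega
  · simp only [if_neg h]
    rw [Finset.sum_eq_single (⟨n - 1, by omega⟩ : Fin n)] <;> simp +contextual [Fin.ext_iff]

lemma ref_adm {n κ : ℕ} (hκ : κ ≤ n) {ε : Fin n → Bool}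
    (hε : ε = fun t : Fin n => decide ((t : ℕ) < κ)) (l : ℕ) : Adm ε (rz n κ l) := by
  intro t
  refine ⟨Int.natCast_nonneg _, fun h => ?_⟩
  have := t.2
  rw [hε] at h
  have h' : (t : ℕ) < κ := of_decide_eq_true h
  unfold rz refAN
  split_ifs <;> first | omega | simp

/-- The weight space of the reference vector inside `𝒲_l ⊗ 𝒲_m` is one-dimensional. -/
lemma ref_unique {n κ : ℕ} (hn : 2 ≤ n) (hκ : κ ≤ n) {ε : Fin n → Bool}
    (hε : ε = fun t : Fin n => decide ((t : ℕ) < κ)) {l m : ℕ} {a b : Fin n → ℤ}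
    (ha : Adm ε a) (hb : Adm ε b) (hw : ∀ t, a t + b t = rz n κ l t + rz n κ m t)
    (hs : ∑ t, b t = ∑ t, rz n κ m t) : a = rz n κ l ∧ b = rz n κ m := by
  suffices hh : b = rz n κ m by
    refine ⟨funext fun t => ?_, hh⟩
    have := hw t
    rw [hh] at this
    omega
  have hsa : ∑ t, a t = ∑ t, rz n κ l t := by
    have : ∑ t, (a t + b t) = ∑ t, (rz n κ l t + rz n κ m t) :=
      Finset.sum_congr rfl fun t _ => hw t
    rw [Finset.sum_add_distrib, Finset.sum_add_distrib] at this
    omega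
  by_cases h : κ = n
  · have he : ∀ t, ε t = true := fun t => by
      rw [hε]
      exact decide_eq_true (by have := t.2; omega)
    have ha0 := fun t => (ha t).1
    have ha1 := fun t => (ha t).2 (he t)
    have hb0 := fun t => (hb t).1
    have hb1 := fun t => (hb t).2 (he t)
    have hr : ∀ k t, rz n κ k t = if n - k ≤ (t : ℕ) then 1 else 0 := fun k t => by
      unfold rz refAN
      rw [if_pos h]
      split_ifs <;> rfl
    rcases le_total l m with hlm | hlm
    · have h1 : ∀ t ∈ Finset.univ, rz n κ l t ≤ a t := fun t _ => by
        have h2 := hw t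
        have h3 := ha0 t
        have h4 := hb1 t
        rw [hr, hr] at *
        split_ifs at * <;> omega
      have h5 := (Finset.sum_eq_sum_iff_of_le h1).1 hsa.symm
      funext t
      have := h5 t (Finset.mem_univ _)
      have := hw t
      omega
    · have h1 : ∀ t ∈ Finset.univ, rz n κ m t ≤ b t := fun t _ => by
        have h2 := hw t
        have h3 := hb0 t
        have h4 := ha1 t
        rw [hr, hr] at *
        split_ifs at * <;> omega
      have h5 := (Finset.sum_eq_sum_iff_of_le h1).1 hs.symm
      funext t
      exact (h5 t (Finset.mem_univ _)).symm
  · have hr : ∀ (k : ℕ) (t : Fin n), (t : ℕ) ≠ n - 1 → rz n κ k t = 0 := fun k t ht => by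
      unfold rz refAN
      rw [if_neg h, if_neg ht]
      rfl
    have hb' : ∀ t : Fin n, (t : ℕ) ≠ n - 1 → b t = 0 := fun t ht => by
      have h2 := hw t
      have h3 := (ha t).1
      have h4 := (hb t).1
      rw [hr _ _ ht, hr _ _ ht] at h2
      omega
    have hlt : n - 1 < n := by omega
    rw [Finset.sum_eq_single (⟨n - 1, hlt⟩ : Fin n), Finset.sum_eq_single (⟨n - 1, hlt⟩ : Fin n)] at hs
    · funext t
      by_cases ht : (t : ℕ) = n - 1
      · rw [show t = ⟨n - 1, hlt⟩ from Fin.ext ht, hs]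
      · rw [hr _ _ ht, hb' _ ht]
    · exact fun t _ ht => hr _ _ fun h' => ht (Fin.ext h')
    · exact fun h => absurd (Finset.mem_univ _) h
    · exact fun t _ ht => hb' _ fun h' => ht (Fin.ext h')
    · exact fun h => absurd (Finset.mem_univ _) h

/-- The reference vector is an eigenvector of the trace operator. -/
lemma S0_ref (q : ℂ) {n κ : ℕ} [NeZero n] (hn : 2 ≤ n) (hκ : κ ≤ n) {ε : Fin n → Bool}
    (hε : ε = fun t : Fin n => decide ((t : ℕ) < κ)) (l m : ℕ) :
    S0tr q ε (kk K ε (rz n κ l) (rz n κ m))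
      = TK q ε (rz n κ l) (rz n κ m) (rz n κ l) (rz n κ m) • kk K ε (rz n κ l) (rz n κ m) := by
  refine cx_ext fun a b ha hb => ?_
  rw [cx_S0, cx_smul, cx_kk]
  split_ifs with hc
  · rw [← hc.2.2.1, ← hc.2.2.2, mul_one]
  · rw [mul_zero]
    by_contra hne
    obtain ⟨N, hN⟩ := TK_ne hne
    obtain ⟨h1, h2⟩ := TZ_weight hN
    obtain ⟨h3, h4⟩ := ref_unique hn hκ hε ha hb h1 h2
    exact hc ⟨ha, hb, h3.symm, h4.symm⟩

lemma exists_pred {n : ℕ} [NeZero n] (hn : 2 ≤ n) (r : Fin n) : ∃ p, p ≠ r ∧ p + 1 = r := by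
  refine ⟨r - 1, fun h => ?_, sub_add_cancel r 1⟩
  have h1 : (1 : Fin n) = 0 := by rw [sub_eq_self] at h; exact h
  have := congrArg Fin.val h1
  rw [Fin.val_one', Fin.val_zero, Nat.mod_eq_of_lt (by omega)] at this
  omega

/-- The normalized trace operator has the properties required of `T`. -/
lemma exists_CondA {q : ℂ} (h : Gen q) {n κ : ℕ} [NeZero n] (hn : 2 ≤ n) (hκ : κ ≤ n)
    {ε : Fin n → Bool} (hε : ε = fun t : Fin n => decide ((t : ℕ) < κ)) (l m : ℕ) :
    ∃ T, CondA q ε κ l m T := by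
  have hφ := TK_diag h ε (ref_adm hκ hε l) (ref_adm hκ hε m)
  refine ⟨(TK q ε (rz n κ l) (rz n κ m) (rz n κ l) (rz n κ m))⁻¹ • S0tr q ε, ?_, ?_, ?_⟩
  · intro v hv
    rw [LinearMap.smul_apply]
    exact Submodule.smul_mem _ _ (S0_mem hv)
  · intro r v _
    obtain ⟨p, hpr, h1⟩ := exists_pred hn r
    simp only [LinearMap.smul_apply, map_smul]
    exact ⟨by rw [S0_e h ε hpr h1], by rw [S0_f h ε hpr h1], fun s _ => by rw [S0_k h ε hpr h1]⟩
  · change (TK q ε (rz n κ l) (rz n κ m) (rz n κ l) (rz n κ m))⁻¹ •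
      S0tr q ε (kk K ε (rz n κ l) (rz n κ m)) = kk K ε (rz n κ l) (rz n κ m)
    rw [S0_ref q hn hκ hε]
    refine cx_ext fun a b _ _ => ?_
    rw [cx_smul, cx_smul, inv_mul_cancel_left₀ hφ]

/-! ### Connectedness of the weight configurations under cyclic moves -/

/-- One particle moves from a position to the cyclically next one. -/
def Step {n : ℕ} [NeZero n] (ε : Fin n → Bool) (u w : Fin n → ℤ) : Prop :=
  Adm ε u ∧ Adm ε w ∧ ∃ p, w = u - ev p + ev (p + 1)

/-- If the next position `p + 1` is blocked for a particle that has to travel from `p` to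
`p + d + 1`, the particle sitting at `p + 1` makes the remaining journey first. -/
lemma hop {n : ℕ} [NeZero n] (hn : 2 ≤ n) (ε : Fin n → Bool) (d : Fin n) :
    ∀ (u : Fin n → ℤ) (p : Fin n), Adm ε u → Adm ε (u - ev p + ev (p + d)) →
      Relation.ReflTransGen (Step ε) u (u - ev p + ev (p + d)) := by
  refine fin_induct (P := fun d => ∀ (u : Fin n → ℤ) (p : Fin n), Adm ε u →
      Adm ε (u - ev p + ev (p + d)) →
      Relation.ReflTransGen (Step ε) u (u - ev p + ev (p + d))) ?_ ?_ d
  · intro u p _ _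
    rw [add_zero, sub_add_cancel]
  · intro d ih u p hu hw
    have hpx : p ≠ p + 1 := by
      obtain ⟨p', h1, h2⟩ := exists_pred hn (p + 1)
      rwa [add_right_cancel h2] at h1
    rw [show p + (d + 1) = p + 1 + d by abel] at hw ⊢
    generalize hx : p + 1 = x at *
    by_cases h : Adm ε (u - ev p + ev x)
    · have e : u - ev p + ev (x + d) = u - ev p + ev x - ev x + ev (x + d) := by abel
      rw [e] at hw ⊢
      exact Relation.ReflTransGen.head ⟨hu, h, p, by rw [hx]⟩ (ih _ _ h hw)
    · by_cases hpt : p = x + d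
      · rw [← hpt, sub_add_cancel]
      have hxt : x ≠ x + d := fun h' => h (h' ▸ hw)
      have e : u - ev p + ev (x + d) = u - ev x + ev (x + d) - ev p + ev x := by abel
      have hup : 1 ≤ u p := by
        have := (hw p).1
        simp only [Pi.add_apply, Pi.sub_apply, ev_self, ev_ne hpt] at this
        omega
      have hux : ε x = true ∧ u x = 1 := by
        by_contra hc
        apply h
        intro t
        have h2 := hu t
        simp only [Pi.add_apply, Pi.sub_apply]
        by_cases ht : t = p
        · subst ht
          rw [ev_self, ev_ne hpx]
          exact ⟨by omega, fun h' => by have := h2.2 h'; omega⟩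
        by_cases ht' : t = x
        · subst ht'
          rw [ev_self, ev_ne hpx.symm]
          exact ⟨by have := h2.1; omega, fun h' => by
            have := h2.2 h'
            have := h2.1
            have : u t ≠ 1 := fun h3 => hc ⟨h', h3⟩
            omega⟩
        · rw [ev_ne ht, ev_ne ht', sub_zero, add_zero]
          exact h2
      have hu2 : Adm ε (u - ev x + ev (x + d)) := by
        intro t
        have h2 := hu t
        have h3 := hw t
        simp only [Pi.add_apply, Pi.sub_apply] at h3 ⊢
        by_cases ht : t = x
        · subst ht
          rw [ev_self, ev_ne hxt, hux.2]
          exact ⟨by omega, fun _ => by omega⟩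
        by_cases ht' : t = p
        · subst ht'
          rw [ev_ne hpx, ev_ne hpt, sub_zero, add_zero]
          exact h2
        · rw [ev_ne ht'] at h3
          rwa [ev_ne ht]
      rw [e] at hw ⊢
      exact Relation.ReflTransGen.tail (ih _ _ hu hu2) ⟨hu2, hw, p, by rw [hx]⟩

/-- Configurations of equal weight are connected by cyclic moves; the induction is on the distance
`∑ |u t - w t|`. -/
lemma reach {n : ℕ} [NeZero n] (hn : 2 ≤ n) {ε : Fin n → Bool} {u w : Fin n → ℤ} (hu : Adm ε u)
    (hw : Adm ε w) (hs : ∑ t, u t = ∑ t, w t) : Relation.ReflTransGen (Step ε) u w := by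
  induction hN : ∑ t, (u t - w t).natAbs using Nat.strong_induction_on generalizing u with
  | _ N ih =>
    subst hN
    by_cases hne : u = w
    · rw [hne]
    obtain ⟨i, hi⟩ : ∃ i, w i < u i := by
      by_contra! hc
      exact hne (funext fun t => (Finset.sum_eq_sum_iff_of_le fun t _ => hc t).1 hs t
        (Finset.mem_univ t))
    obtain ⟨j, hj⟩ : ∃ j, u j < w j := by
      by_contra! hc
      exact hne (funext fun t => ((Finset.sum_eq_sum_iff_of_le fun t _ => hc t).1 hs.symm t
        (Finset.mem_univ t)).symm)
    have hij : i ≠ j := fun h' => by subst h'; omega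
    have hval : ∀ t, (u - ev i + ev j) t
        = u t - (if t = i then 1 else 0) + (if t = j then 1 else 0) := fun t => by
      simp only [Pi.add_apply, Pi.sub_apply, ev]
    have hu1 : Adm ε (u - ev i + ev j) := by
      intro t
      rw [hval]
      have h2 := hu t
      have h3 := hw t
      unfold Okz at *
      split_ifs with h4 h5 h5
      · exact absurd (h4.symm.trans h5) hij
      · subst h4; exact ⟨by omega, fun h' => by have := h2.2 h'; omega⟩
      · subst h5; exact ⟨by omega, fun h' => by have := h3.2 h'; omega⟩
      · simpa using h2
    have h1 := hop hn ε (j - i) u i hu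
    rw [add_sub_cancel] at h1
    refine (h1 hu1).trans (ih _ ?_ hu1 ?_ rfl)
    · refine Finset.sum_lt_sum (fun t _ => ?_) ⟨i, Finset.mem_univ i, ?_⟩
      · rw [hval]
        split_ifs with h4 h5 h5
        · exact absurd (h4.symm.trans h5) hij
        · subst h4; omega
        · subst h5; omega
        · simp
      · rw [hval, if_pos rfl, if_neg hij]
        omega
    · rw [← hs]
      simp only [hval, Finset.sum_add_distrib, Finset.sum_sub_distrib]
      simp

/-! ### Uniqueness of the intertwiner -/

/-- The Laurent series `x` has no terms of degree below `k`. -/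
def Lw (k : ℤ) (x : K) : Prop := ∀ d < k, HahnSeries.coeff x d = 0

lemma Lw_add {k : ℤ} {x y : K} (hx : Lw k x) (hy : Lw k y) : Lw k (x + y) := fun d hd => by
  rw [HahnSeries.coeff_add, hx d hd, hy d hd, add_zero]

lemma Lw_C {k : ℤ} (c : ℂ) {x : K} (hx : Lw k x) : Lw k (cK c * x) := fun d hd => by
  unfold cK
  rw [HahnSeries.C_mul_eq_smul, HahnSeries.coeff_smul, hx d hd, smul_zero]

lemma Lw_of_C {k : ℤ} {c : ℂ} (hc : c ≠ 0) {x : K} (hx : Lw k (cK c * x)) : Lw k x := by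
  have := Lw_C c⁻¹ hx
  rwa [← mul_assoc, ← map_mul, inv_mul_cancel₀ hc, map_one, one_mul] at this

lemma Lw_z {k : ℤ} {x : K} (hx : Lw k x) : Lw (k + 1) (zK * x) := fun d hd => by
  rw [zK_eq, HahnSeries.ofPowerSeries_X, show d = (d - 1) + 1 by ring,
    HahnSeries.coeff_single_mul_add, hx _ (by omega), mul_zero]

lemma Lw_mono {k k' : ℤ} (h : k' ≤ k) {x : K} (hx : Lw k x) : Lw k' x :=
  fun d hd => hx d (by omega)

lemma Lw_zs {k : ℤ} {n : ℕ} (r : Fin n) {x : K} (hx : Lw k x) : Lw k (zs r * x) := by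
  unfold zs
  split_ifs
  · rw [pow_one]
    exact Lw_mono (by omega) (Lw_z hx)
  · rwa [pow_zero, one_mul]

lemma Lw_neg {k : ℤ} {x : K} (hx : Lw k x) : Lw k (-x) := fun d hd => by
  rw [HahnSeries.coeff_neg, hx d hd, neg_zero]

/-- All coordinates of `w` lie in `z ^ k` times the power series ring. -/
def LV {n : ℕ} {ε : Fin n → Bool} (k : ℤ) (w : WW K ε) : Prop :=
  ∀ a b, Adm ε a → Adm ε b → Lw k (cx w a b)

lemma Lw_zero (k : ℤ) : Lw k (0 : K) := fun _ _ => rfl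

lemma LV_cx {n : ℕ} {ε : Fin n → Bool} {k : ℤ} {w : WW K ε} (h : LV k w) (a b : Fin n → ℤ) :
    Lw k (cx w a b) := by
  by_cases hab : Adm ε a ∧ Adm ε b
  · exact h a b hab.1 hab.2
  · rw [cx_out _ hab]
    exact Lw_zero k

lemma LV_exists {n : ℕ} {ε : Fin n → Bool} (w : WW K ε) : ∃ k, LV k w := by
  obtain ⟨k, hk⟩ := (w.support.finite_toSet.image fun p => (w p).order).bddBelow
  refine ⟨k, fun a b ha hb => ?_⟩
  have e : cx w a b = w (mkI ha, mkI hb) := by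
    unfold cx
    rw [dif_pos ⟨ha, hb⟩]
  rw [e]
  by_cases h0 : w (mkI ha, mkI hb) = 0
  · rw [h0]
    exact Lw_zero k
  · intro d hd
    have := hk ⟨_, Finsupp.mem_support_iff.2 h0, rfl⟩
    exact HahnSeries.coeff_eq_zero_of_lt_order (lt_of_lt_of_le hd this)

/-! ### Gaining one order of `z` -/

lemma LV_add {n : ℕ} {ε : Fin n → Bool} {k : ℤ} {v w : WW K ε} (hv : LV k v) (hw : LV k w) :
    LV k (v + w) := fun a b ha hb => by
  rw [cx_add]
  exact Lw_add (hv a b ha hb) (hw a b ha hb)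

lemma LV_sub {n : ℕ} {ε : Fin n → Bool} {k : ℤ} {v w : WW K ε} (hv : LV k (v + w))
    (hw : LV k w) : LV k v := fun a b ha hb => by
  have h1 := hv a b ha hb
  rw [cx_add] at h1
  have h2 := Lw_add h1 (Lw_neg (hw a b ha hb))
  rwa [add_neg_cancel_right] at h2

lemma LV_C {n : ℕ} {ε : Fin n → Bool} {k : ℤ} (c : ℂ) {v : WW K ε} (hv : LV k v) :
    LV k (cK c • v) := fun a b ha hb => by
  rw [cx_smul]
  exact Lw_C c (hv a b ha hb)

lemma LV_of_C {n : ℕ} {ε : Fin n → Bool} {k : ℤ} {c : ℂ} (hc : c ≠ 0) {v : WW K ε}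
    (hv : LV k (cK c • v)) : LV k v := fun a b ha hb => by
  have := hv a b ha hb
  rw [cx_smul] at this
  exact Lw_of_C hc this

lemma LV_zs {n : ℕ} {ε : Fin n → Bool} {k : ℤ} (r : Fin n) {v : WW K ε} (hv : LV k v) :
    LV k (zs r • v) := fun a b ha hb => by
  rw [cx_smul]
  exact Lw_zs r (hv a b ha hb)

lemma LV_e (q : ℂ) {n : ℕ} [NeZero n] {ε : Fin n → Bool} {p r : Fin n} (hpr : p ≠ r)
    (h1 : p + 1 = r) {k : ℤ} {w : WW K ε} (hw : LV k w) : LV k (dE' q cK ε zK 1 r w) := by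
  intro a b ha hb
  rw [dE'_cx q ε hpr h1 _ ha hb, mul_assoc, mul_assoc]
  exact Lw_add (Lw_zs r (Lw_C _ (LV_cx hw _ _))) (Lw_C _ (Lw_C _ (LV_cx hw _ _)))

lemma LV_f (q : ℂ) {n : ℕ} [NeZero n] {ε : Fin n → Bool} {p r : Fin n} (hpr : p ≠ r)
    (h1 : p + 1 = r) {k : ℤ} {w : WW K ε} (hw : LV k w) :
    LV k (zs r • dF' q cK ε zK 1 r w) := by
  intro a b ha hb
  rw [cx_smul, dF'_cx q ε hpr h1 _ ha hb, mul_add, mul_assoc _ _ (cx _ _ _),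
    mul_assoc _ _ (_ * cx _ _ _), mul_inv_cancel_left₀ (zs_ne r)]
  exact Lw_add (Lw_zs r (Lw_C _ (LV_cx hw _ _))) (Lw_C _ (Lw_C _ (LV_cx hw _ _)))

lemma qz_ne {q : ℂ} (h : Gen q) {m : ℤ} (hm : 1 ≤ m) : qz q m ≠ 0 := by
  lift m to ℕ using (by omega)
  rw [← qnum_eq]
  unfold qnum
  have hq := h.1
  have key : ∀ k : ℕ, k ≠ 0 → q ^ k - q⁻¹ ^ k ≠ 0 := fun k hk h0 => by
    apply h.2 (2 * k) (by omega)
    have h1 : q ^ k = (q ^ k)⁻¹ := by rw [← inv_pow]; exact sub_eq_zero.1 h0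
    rw [two_mul, pow_add]
    nth_rewrite 2 [h1]
    exact mul_inv_cancel₀ (pow_ne_zero k hq)
  refine div_ne_zero (key m (by omega)) ?_
  simpa using key 1 one_ne_zero

/-- A pair of occupation vectors labelling a basis ket of `𝒲_l ⊗ 𝒲_m`. -/
def Val {n : ℕ} (ε : Fin n → Bool) (l m : ℕ) (i j : Fin n → ℤ) : Prop :=
  Adm ε i ∧ Adm ε j ∧ ∑ t, i t = l ∧ ∑ t, j t = m

lemma kk_mem {n : ℕ} {ε : Fin n → Bool} {l m : ℕ} {i j : Fin n → ℤ} (h : Val ε l m i j) :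
    kk K ε i j ∈ WWlm K ε l m := by
  rw [kk_adm h.1 h.2.1]
  refine Submodule.subset_span ⟨_, ?_, ?_, rfl⟩
  · have := h.2.2.1
    rw [← zi_mkI h.1] at this
    simp only [zi] at this
    exact_mod_cast this
  · have := h.2.2.2
    rw [← zi_mkI h.2.1] at this
    simp only [zi] at this
    exact_mod_cast this

lemma mem_kk {n : ℕ} {ε : Fin n → Bool} {l m : ℕ} {i j : Fin n → ℤ}
    (h1 : ∑ t, i t = l) (h2 : ∑ t, j t = m) : kk K ε i j ∈ WWlm K ε l m := by
  by_cases h : Adm ε i ∧ Adm ε j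
  · exact kk_mem ⟨h.1, h.2, h1, h2⟩
  · rw [kk_not h]
    exact Submodule.zero_mem _

lemma dE_kk' (q : ℂ) {n : ℕ} [NeZero n] {ε : Fin n → Bool} {p r : Fin n} (hpr : p ≠ r)
    (h1 : p + 1 = r) {i j : Fin n → ℤ} (hi : Adm ε i) (hj : Adm ε j) :
    dE q cK ε zK 1 r (kk K ε i j)
      = cK (qz q (j p)) • kk K ε i (j - ev p + ev r)
        + (zs r * cK (qz q (i p)) * cK (kv q ε p r j)) • kk K ε (i - ev p + ev r) j := by
  have := dE_kk q ε hpr h1 (mkI hi, mkI hj)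
  rwa [single_kk, zi_mkI, zi_mkI] at this

lemma dF_kk' (q : ℂ) {n : ℕ} [NeZero n] {ε : Fin n → Bool} {p r : Fin n} (hpr : p ≠ r)
    (h1 : p + 1 = r) {i j : Fin n → ℤ} (hi : Adm ε i) (hj : Adm ε j) :
    dF q cK ε zK 1 r (kk K ε i j)
      = ((zs r)⁻¹ * cK (qz q (i r))) • kk K ε (i + ev p - ev r) j
        + (cK (kv q ε p r i)⁻¹ * cK (qz q (j r))) • kk K ε i (j + ev p - ev r) := by
  have := dF_kk q ε hpr h1 (mkI hi, mkI hj)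
  rwa [single_kk, zi_mkI, zi_mkI] at this

lemma sum_move {n : ℕ} (i : Fin n → ℤ) (p r : Fin n) : ∑ t, (i - ev p + ev r) t = ∑ t, i t := by
  simp [ev, Finset.sum_add_distrib, Finset.sum_sub_distrib]

/-- An inner move `p → r`, `r ≠ 0`, annihilates the reference vector: the highest weight
property. -/
lemma ref_kill {q : ℂ} {n κ : ℕ} [NeZero n] (hn : 2 ≤ n) {ε : Fin n → Bool}
    (hε : ε = fun t : Fin n => decide ((t : ℕ) < κ)) (l : ℕ) {p r : Fin n} (hpr : p ≠ r)
    (h1 : p + 1 = r) (hr : (r : ℕ) ≠ 0) (j : Fin n → ℤ) :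
    qz q (rz n κ l p) = 0 ∨ kk K ε (rz n κ l - ev p + ev r) j = 0 := by
  have hp := pred_val hpr h1
  have hrn := r.2
  have hpn : (p : ℕ) = r - 1 := by
    rw [← hp, show (r : ℕ) + n - 1 = (r - 1) + n by omega, Nat.add_mod_right,
      Nat.mod_eq_of_lt (by omega)]
  by_cases h : κ = n
  · by_cases h2 : n - l ≤ (p : ℕ)
    · right
      refine kk_not fun hc => ?_
      have h3 := (hc.1 r).2 (by rw [hε]; exact decide_eq_true (by omega))
      simp only [Pi.add_apply, Pi.sub_apply, ev_self, ev_ne hpr.symm, rz, refAN, if_pos h,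
        if_pos (show n - l ≤ (r : ℕ) by omega)] at h3
      norm_num at h3
    · left
      simp only [rz, refAN, if_pos h, if_neg h2]
      exact qz_zero q
  · left
    simp only [rz, refAN, if_neg h, if_neg (show (p : ℕ) ≠ n - 1 by omega)]
    exact qz_zero q

/-- One order of `z` is gained: an intertwiner that kills the reference vector and maps the basis
into `z ^ k` times the integral lattice maps it into `z ^ (k + 1)` times that lattice. -/
lemma gain {q : ℂ} (h : Gen q) {n κ : ℕ} [NeZero n] (hn : 2 ≤ n) (hκ : κ ≤ n) {ε : Fin n → Bool}
    (hε : ε = fun t : Fin n => decide ((t : ℕ) < κ)) {l m : ℕ} (hl : κ = n → l ≤ n)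
    (hm : κ = n → m ≤ n) (D : WW K ε →ₗ[K] WW K ε)
    (hDe : ∀ r, ∀ v ∈ WWlm K ε l m, dE' q cK ε zK 1 r (D v) = D (dE q cK ε zK 1 r v))
    (hDf : ∀ r, ∀ v ∈ WWlm K ε l m, dF' q cK ε zK 1 r (D v) = D (dF q cK ε zK 1 r v))
    (hD0 : D (kk K ε (rz n κ l) (rz n κ m)) = 0) (k : ℤ)
    (hk : ∀ i j, Val ε l m i j → LV k (D (kk K ε i j))) :
    ∀ i j, Val ε l m i j → LV (k + 1) (D (kk K ε i j)) := by
  have hsl : ∑ t, rz n κ l t = l := by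
    unfold rz
    exact_mod_cast sum_ref hn hl
  have hsm : ∑ t, rz n κ m t = m := by
    unfold rz
    exact_mod_cast sum_ref hn hm
  have hal := ref_adm hκ hε l
  have ham := ref_adm hκ hε m
  have hk' : ∀ i j : Fin n → ℤ, ∑ t, i t = l → ∑ t, j t = m → LV k (D (kk K ε i j)) := by
    intro i j h1 h2
    by_cases hc : Adm ε i ∧ Adm ε j
    · exact hk i j ⟨hc.1, hc.2, h1, h2⟩
    · rw [kk_not hc, map_zero]
      intro a b _ _
      rw [cx_zero]
      exact Lw_zero k
  -- The second tensor factor is moved by the raising generators.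
  have step1 : ∀ j, Adm ε j → ∑ t, j t = m → LV (k + 1) (D (kk K ε (rz n κ l) j)) := by
    intro j hj hsj
    have hpath := reach hn ham hj (hsm.trans hsj.symm)
    have hgoal : ∑ t, j t = m ∧ LV (k + 1) (D (kk K ε (rz n κ l) j)) := by
      clear hsj
      induction hpath with
      | refl =>
        refine ⟨hsm, ?_⟩
        rw [hD0]
        intro a b _ _
        rw [cx_zero]
        exact Lw_zero _
      | @tail u w hu huw ih =>
        obtain ⟨hau, haw, p, rfl⟩ := huw
        obtain ⟨hsu, ihu⟩ := ih hau
        refine ⟨(sum_move _ _ _).trans hsu, ?_⟩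
        obtain ⟨p', hpr, hp1⟩ := exists_pred hn (p + 1)
        obtain rfl := add_right_cancel hp1
        have hup : 1 ≤ u p' := by
          have := (haw p').1
          simp only [Pi.add_apply, Pi.sub_apply, ev_self, ev_ne hpr] at this
          omega
        have e1 := LV_e q hpr rfl ihu
        rw [hDe _ _ (mem_kk hsl hsu), dE_kk' q hpr rfl hal hau, map_add, map_smul, map_smul] at e1
        refine LV_of_C (qz_ne h hup) (LV_sub e1 ?_)
        by_cases hr : ((p' + 1 : Fin n) : ℕ) = 0
        · intro a b ha hb
          rw [cx_smul, mul_assoc, mul_assoc]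
          unfold zs
          rw [if_pos hr, pow_one]
          exact Lw_z (Lw_C _ (Lw_C _ (LV_cx (hk' _ _ ((sum_move _ _ _).trans hsl) hsu) _ _)))
        · intro a b ha hb
          rw [cx_smul]
          rcases ref_kill (q := q) hn hε l hpr rfl hr u with h0 | h0
          · rw [h0, map_zero, mul_zero, zero_mul, zero_mul]
            exact Lw_zero _
          · rw [h0, map_zero, cx_zero, mul_zero]
            exact Lw_zero _
    exact hgoal.2
  -- The first tensor factor is moved by the lowering generators, against the direction of a path.
  intro i j hv
  have hpath := reach hn hv.1 hal (hv.2.2.1.trans hsl.symm)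
  have hgoal : ∑ t, i t = l ∧
      ∀ j, Adm ε j → ∑ t, j t = m → LV (k + 1) (D (kk K ε i j)) := by
    obtain ⟨hi, -, -, -⟩ := hv
    induction hpath using Relation.ReflTransGen.head_induction_on with
    | refl => exact ⟨hsl, step1⟩
    | @head u w huw hw ih =>
      obtain ⟨hau, haw, p, rfl⟩ := huw
      obtain ⟨hsw, ihw⟩ := ih haw
      have hsu : ∑ t, u t = l := (sum_move _ _ _).symm.trans hsw
      refine ⟨hsu, fun j hj hsj => ?_⟩
      obtain ⟨p', hpr, hp1⟩ := exists_pred hn (p + 1)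
      obtain rfl := add_right_cancel hp1
      have hwp : 1 ≤ (u - ev p' + ev (p' + 1) : Fin n → ℤ) (p' + 1) := by
        have := (hau (p' + 1)).1
        simp only [Pi.add_apply, Pi.sub_apply, ev_self, ev_ne hpr.symm]
        omega
      have e1 := LV_f q hpr rfl (ihw j hj hsj)
      rw [hDf _ _ (mem_kk hsw hsj), dF_kk' q hpr rfl haw hj, map_add, map_smul, map_smul] at e1
      rw [show u - ev p' + ev (p' + 1) + ev p' - ev (p' + 1) = u by abel] at e1
      have hsj' : ∑ t, (j + ev p' - ev (p' + 1) : Fin n → ℤ) t = m := by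
        rw [show j + ev p' - ev (p' + 1) = j - ev (p' + 1) + ev p' by abel, sum_move, hsj]
      have e2 : LV (k + 1) (D (kk K ε (u - ev p' + ev (p' + 1)) (j + ev p' - ev (p' + 1)))) := by
        by_cases hc : Adm ε (j + ev p' - ev (p' + 1))
        · exact ihw _ hc hsj'
        · rw [kk_not fun hc' => hc hc'.2, map_zero]
          intro a b _ _
          rw [cx_zero]
          exact Lw_zero _
      refine LV_of_C (qz_ne h hwp) fun a b ha hb => ?_
      have e3 := e1 a b ha hb
      rw [cx_smul, cx_add, cx_smul, cx_smul, mul_add, mul_assoc (zs _)⁻¹,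
        mul_inv_cancel_left₀ (zs_ne _), mul_assoc (cK _) (cK _)] at e3
      have e4 := Lw_add e3 (Lw_neg (Lw_zs (p' + 1)
        (Lw_C (kv q ε p' (p' + 1) (u - ev p' + ev (p' + 1)))⁻¹
          (Lw_C (qz q (j (p' + 1))) (e2 a b ha hb)))))
      rw [add_neg_cancel_right] at e4
      rw [cx_smul]
      exact e4
  exact hgoal.2 j hv.2.1 hv.2.2.2

/-! ### Vanishing of intertwiners killing the reference vector -/

/-- There are finitely many pairs of occupation vectors of given weights, so an endomorphism has a
uniform pole order on the basis of `𝒲_l ⊗ 𝒲_m`. -/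
lemma LV_start {n : ℕ} {ε : Fin n → Bool} (l m : ℕ) (D : WW K ε →ₗ[K] WW K ε) :
    ∃ k, ∀ i j, Val ε l m i j → LV k (D (kk K ε i j)) := by
  have hfin : {p : (Fin n → ℤ) × (Fin n → ℤ) | Val ε l m p.1 p.2}.Finite := by
    refine ((Set.finite_Icc (0 : Fin n → ℤ) fun _ => (l : ℤ)).prod
      (Set.finite_Icc (0 : Fin n → ℤ) fun _ => (m : ℤ))).subset ?_
    rintro ⟨i, j⟩ ⟨hi, hj, h1, h2⟩
    refine ⟨⟨fun t => (hi t).1, fun t => ?_⟩, ⟨fun t => (hj t).1, fun t => ?_⟩⟩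
    · exact (Finset.single_le_sum (fun s _ => (hi s).1) (Finset.mem_univ t)).trans h1.le
    · exact (Finset.single_le_sum (fun s _ => (hj s).1) (Finset.mem_univ t)).trans h2.le
  choose f hf using fun p : (Fin n → ℤ) × (Fin n → ℤ) => LV_exists (D (kk K ε p.1 p.2))
  obtain ⟨k, hk⟩ := (hfin.image f).bddBelow
  refine ⟨k, fun i j hv a b ha hb => ?_⟩
  exact Lw_mono (hk (Set.mem_image_of_mem f (show (i, j) ∈ _ from hv))) (hf (i, j) a b ha hb)

/-- An intertwiner that kills the reference vector vanishes: by `gain` its matrix elements are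
divisible by every power of `z`. -/
lemma intertwiner_zero {q : ℂ} (h : Gen q) {n κ : ℕ} [NeZero n] (hn : 2 ≤ n) (hκ : κ ≤ n)
    {ε : Fin n → Bool} (hε : ε = fun t : Fin n => decide ((t : ℕ) < κ)) {l m : ℕ}
    (hl : κ = n → l ≤ n) (hm : κ = n → m ≤ n) (D : WW K ε →ₗ[K] WW K ε)
    (hDe : ∀ r, ∀ v ∈ WWlm K ε l m, dE' q cK ε zK 1 r (D v) = D (dE q cK ε zK 1 r v))
    (hDf : ∀ r, ∀ v ∈ WWlm K ε l m, dF' q cK ε zK 1 r (D v) = D (dF q cK ε zK 1 r v))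
    (hD0 : D (kk K ε (rz n κ l) (rz n κ m)) = 0) :
    ∀ v ∈ WWlm K ε l m, D v = 0 := by
  obtain ⟨k0, hk0⟩ := LV_start l m D
  have hall : ∀ d : ℕ, ∀ i j, Val ε l m i j → LV (k0 + d) (D (kk K ε i j)) := by
    intro d
    induction d with
    | zero => simpa using hk0
    | succ d ih =>
      have := gain h hn hκ hε hl hm D hDe hDf hD0 _ ih
      rwa [add_assoc] at this
  have hker : WWlm K ε l m ≤ LinearMap.ker D := by
    refine Submodule.span_le.2 ?_
    rintro _ ⟨p, h1, h2, rfl⟩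
    change D (Finsupp.single p 1) = 0
    have hv : Val ε l m (zi p.1) (zi p.2) :=
      ⟨zi_adm _, zi_adm _, by unfold zi; exact_mod_cast h1, by unfold zi; exact_mod_cast h2⟩
    rw [single_kk]
    refine cx_ext fun a b ha hb => ?_
    rw [cx_zero]
    refine HahnSeries.ext (funext fun d => ?_)
    exact hall (d - k0 + 1).toNat _ _ hv a b ha hb d (by omega)
  exact fun v hv => hker hv

lemma neg_one_mul' (x : K) : (-1 : K) * x = -x := neg_one_mul x

/-- The normalizing series of the statement is the corresponding matrix element of `S0tr`. -/
lemma mkS_ref (q : ℂ) {n : ℕ} [NeZero n] (ε : Fin n → Bool) (κ l m : ℕ) :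
    mkS (trCoef q ε (refAN n κ l) (refAN n κ m) (refAN n κ l) (refAN n κ m))
      = TK q ε (rz n κ l) (rz n κ m) (rz n κ l) (rz n κ m) := by
  unfold TK mZ
  congr 1
  funext k
  rw [trCoef_eq]
  rfl

/-- the trace solution as quantum R matrix of type A. -/
theorem statement_2 (q : ℂ) (hq0 : q ≠ 0) (hq : ∀ k : ℕ, k ≠ 0 → q ^ k ≠ 1)
    (n κ : ℕ) [NeZero n] (hn : 2 ≤ n) (hκ : κ ≤ n)
    (ε : Fin n → Bool) (hε : ε = fun t : Fin n => decide ((t : ℕ) < κ))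
    (l m : ℕ) (hl : κ = n → l ≤ n) (hm : κ = n → m ≤ n) :
    (∀ T : WW K ε →ₗ[K] WW K ε, CondA q ε κ l m T →
      ∀ v ∈ WWlm K ε l m,
        mkS (trCoef q ε (refAN n κ l) (refAN n κ m) (refAN n κ l) (refAN n κ m)) • T v
          = S0tr q ε v) ∧
    ∃ T : WW K ε →ₗ[K] WW K ε, CondA q ε κ l m T := by
  have h : Gen q := ⟨hq0, hq⟩
  refine ⟨fun T hT v hv => ?_, exists_CondA h hn hκ hε l m⟩
  obtain ⟨-, hT1, hT2⟩ := hT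
  rw [mkS_ref]
  set φ := TK q ε (rz n κ l) (rz n κ m) (rz n κ l) (rz n κ m) with hφ
  have hD := intertwiner_zero h hn hκ hε hl hm (φ • T + (-1 : K) • S0tr q ε) ?_ ?_ ?_ v hv
  · refine cx_ext fun a b _ _ => ?_
    have h1 : cx (φ • T v + (-1 : K) • S0tr q ε v) a b = 0 := by
      rw [← cx_zero (ε := ε) a b, ← hD]
      rfl
    rw [cx_add, cx_smul _ (S0tr q ε v), neg_one_mul' (cx (S0tr q ε v) a b)] at h1
    exact add_neg_eq_zero.1 h1
  · intro r w hw
    obtain ⟨p, hpr, h1⟩ := exists_pred hn r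
    change dE' q cK ε zK 1 r (φ • T w + (-1 : K) • S0tr q ε w)
      = φ • T _ + (-1 : K) • S0tr q ε _
    rw [map_add, map_smul, map_smul, (hT1 r w hw).1, S0_e h ε hpr h1]
  · intro r w hw
    obtain ⟨p, hpr, h1⟩ := exists_pred hn r
    change dF' q cK ε zK 1 r (φ • T w + (-1 : K) • S0tr q ε w)
      = φ • T _ + (-1 : K) • S0tr q ε _
    rw [map_add, map_smul, map_smul, (hT1 r w hw).2.1, S0_f h ε hpr h1]
  · have hT2' : T (kk K ε (rz n κ l) (rz n κ m)) = kk K ε (rz n κ l) (rz n κ m) := hT2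
    change φ • T (kk K ε (rz n κ l) (rz n κ m))
      + (-1 : K) • S0tr q ε (kk K ε (rz n κ l) (rz n κ m)) = 0
    rw [S0_ref q hn hκ hε, hT2']
    refine cx_ext fun a b _ _ => ?_
    rw [cx_add, cx_smul (-1), neg_one_mul', cx_zero, add_neg_cancel]

end TetraGQ
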